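/- (Lemma A.1: energy of the singular vortex-ring field outside the cores.) Let n ≥ 1. There exist constants C > 0 and δ₀ > 0, depending only on n, such that for all distinct points a₁,…,aₙ ∈ H and all 0 < ρ ≤ δ₀ ρ_a, | ∫_{H ∖ ∪ᵢ B(aᵢ,ρ)} (1/(2r)) |∇(r Ψ*_a)|² dr dz − π Σᵢ r(aᵢ)[ log(r(aᵢ)/ρ) + Σ_{j≠i} A_{a_j}(aᵢ) + 3 log 2 − 2 ] | ≤ C (Σᵢ r(aᵢ)) (ρ/ρ_a) log²(ρ/ρ_a). -/

import Mathlib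

open MeasureTheory Filter Metric
open scoped Topology Real

noncomputable section

/-- Euclidean norm on `ℝ × ℝ`. -/
def nE (v : ℝ × ℝ) : ℝ := Real.sqrt (v.1 ^ 2 + v.2 ^ 2)

/-- Euclidean squared norm on `ℝ × ℝ`. -/
def sqE (v : ℝ × ℝ) : ℝ := v.1 ^ 2 + v.2 ^ 2

/-- Euclidean distance on `ℝ × ℝ`. -/
def dE (p q : ℝ × ℝ) : ℝ := nE (p - q)

/-- Euclidean open ball in `ℝ × ℝ`. -/
def ballE (a : ℝ × ℝ) (r : ℝ) : Set (ℝ × ℝ) := {p | dE p a < r}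

/-- The open half plane `H = {(r,z) : r > 0}`. -/
def Hp : Set (ℝ × ℝ) := {p | 0 < p.1}

/-- Partial derivative in the `r` direction, complex valued. -/
def pdR (u : ℝ × ℝ → ℂ) (p : ℝ × ℝ) : ℂ := fderiv ℝ u p (1, 0)
/-- Partial derivative in the `z` direction, complex valued. -/
def pdZ (u : ℝ × ℝ → ℂ) (p : ℝ × ℝ) : ℂ := fderiv ℝ u p (0, 1)
/-- Partial derivative in the `r` direction, real valued. -/
def pdRr (f : ℝ × ℝ → ℝ) (p : ℝ × ℝ) : ℝ := fderiv ℝ f p (1, 0)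
/-- Partial derivative in the `z` direction, real valued. -/
def pdZr (f : ℝ × ℝ → ℝ) (p : ℝ × ℝ) : ℝ := fderiv ℝ f p (0, 1)

/-- Gradient of a real function on `ℝ × ℝ`. -/
def gradR (f : ℝ × ℝ → ℝ) (p : ℝ × ℝ) : ℝ × ℝ := (pdRr f p, pdZr f p)

/-- `y × w = Re (i y conj w)`. -/
def crossC (y w : ℂ) : ℝ := (Complex.I * y * (starRingEnd ℂ) w).re

/-- Jacobian `Ju = ∂_r u × ∂_z u`. -/
def Jac (u : ℝ × ℝ → ℂ) (p : ℝ × ℝ) : ℝ := crossC (pdR u p) (pdZ u p)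

/-- Ginzburg–Landau energy density. -/
def eGL (ε : ℝ) (u : ℝ × ℝ → ℂ) (p : ℝ × ℝ) : ℝ :=
  (‖pdR u p‖ ^ 2 + ‖pdZ u p‖ ^ 2) / 2 + (1 - ‖u p‖ ^ 2) ^ 2 / (4 * ε ^ 2)

/-- Weighted Ginzburg–Landau energy on the half plane. -/
def Ew (ε : ℝ) (u : ℝ × ℝ → ℂ) : ℝ := ∫ p in Hp, eGL ε u p * p.1

/-- `r` component of the current `j(u) = Im (conj u ∇u)`. -/
def jr (u : ℝ × ℝ → ℂ) (p : ℝ × ℝ) : ℝ := ((starRingEnd ℂ) (u p) * pdR u p).im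
/-- `z` component of the current `j(u)`. -/
def jz (u : ℝ × ℝ → ℂ) (p : ℝ × ℝ) : ℝ := ((starRingEnd ℂ) (u p) * pdZ u p).im

/-- The loop-current vector potential `A_a`. -/
def Avec (a : ℝ × ℝ) (p : ℝ × ℝ) : ℝ :=
  (a.1 / 2) * ∫ t in (0:ℝ)..(2 * π),
    Real.cos t / Real.sqrt (a.1 ^ 2 + p.1 ^ 2 + (p.2 - a.2) ^ 2 - 2 * a.1 * p.1 * Real.cos t)

/-- Ginzburg–Landau energy on the unit disc. -/
def eDisc (ε : ℝ) (v : ℝ × ℝ → ℂ) : ℝ :=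
  ∫ p in ballE ((0:ℝ), (0:ℝ)) 1,
    ((‖pdR v p‖ ^ 2 + ‖pdZ v p‖ ^ 2) / 2 + (1 - ‖v p‖ ^ 2) ^ 2 / (4 * ε ^ 2))

/-- The constant `γ` of Bethuel–Brezis–Hélein. -/
def glGamma : ℝ :=
  Filter.liminf (fun ε : ℝ =>
      sInf {E : ℝ | ∃ v : ℝ × ℝ → ℂ,
        DifferentiableOn ℝ v (ballE ((0:ℝ), (0:ℝ)) 1) ∧
        IntegrableOn (fun p => (‖pdR v p‖ ^ 2 + ‖pdZ v p‖ ^ 2) / 2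
            + (1 - ‖v p‖ ^ 2) ^ 2 / (4 * ε ^ 2)) (ballE ((0:ℝ), (0:ℝ)) 1) ∧
        (∀ p : ℝ × ℝ, nE p = 1 → v p = (p.1 : ℂ) + (p.2 : ℂ) * Complex.I) ∧
        E = eDisc ε v}
      - π * |Real.log ε|) (𝓝[>] (0:ℝ))

/-- The Hamiltonian `H_ε`. -/
def Hfun (ε : ℝ) {n : ℕ} (a : Fin n → ℝ × ℝ) : ℝ :=
  ∑ i, (a i).1 * (π * Real.log ((a i).1 / ε) + glGamma + π * (3 * Real.log 2 - 2)
      + π * ∑ j ∈ Finset.univ.erase i, Avec (a j) (a i))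

/-- `ρ_a = (1/4) min (min_{i≠j} |aᵢ-aⱼ|, minᵢ r(aᵢ))`. -/
def rhoConf {n : ℕ} (a : Fin n → ℝ × ℝ) : ℝ :=
  (1 / 4) * sInf ({d | ∃ i j : Fin n, i ≠ j ∧ d = dE (a i) (a j)} ∪ {d | ∃ i, d = (a i).1})

/-- Positive part. -/
def posPart' (x : ℝ) : ℝ := max x 0

/-- Admissible test functions for the `Ẇ^{-1,1}(Ω)` norm. -/
def W11Adm (Ω : Set (ℝ × ℝ)) (φ : ℝ × ℝ → ℝ) : Prop :=
  (∀ p q : ℝ × ℝ, |φ p - φ q| ≤ dE p q) ∧ HasCompactSupport φ ∧ ∀ p ∉ Ω, φ p = 0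

/-- `‖Ju − π Σᵢ δ_{aᵢ}‖_{Ẇ^{-1,1}(Ω)}`. -/
def w11JacDiff (Ω : Set (ℝ × ℝ)) (u : ℝ × ℝ → ℂ) {n : ℕ} (a : Fin n → ℝ × ℝ) : ℝ :=
  sSup {x | ∃ φ, W11Adm Ω φ ∧ x = (∫ p in Ω, Jac u p * φ p) - π * ∑ i, φ (a i)}

/-- `Ẇ^{-1,1}(Ω)` norm of a locally integrable function. -/
def w11Fn (Ω : Set (ℝ × ℝ)) (f : ℝ × ℝ → ℝ) : ℝ :=
  sSup {x | ∃ φ, W11Adm Ω φ ∧ x = ∫ p in Ω, f p * φ p}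

/-- `div (r ∇ v)`. -/
def divRGrad (v : ℝ × ℝ → ℂ) (p : ℝ × ℝ) : ℂ :=
  fderiv ℝ (fun q => (q.1 : ℂ) * pdR v q) p (1, 0)
    + fderiv ℝ (fun q => (q.1 : ℂ) * pdZ v q) p (0, 1)

/-- A finite-energy solution of the cylindrical Gross–Pitaevskii equation `(GP)^c_ε`. -/
structure IsGPSolution (ε : ℝ) (u : ℝ → ℝ × ℝ → ℂ) : Prop where
  smooth : ContDiffOn ℝ (⊤ : ℕ∞) (fun q : (ℝ × ℝ) × ℝ => u q.2 q.1) (closure Hp ×ˢ (Set.univ : Set ℝ))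
  eqn : ∀ t : ℝ, ∀ p ∈ Hp,
    Complex.I * (p.1 : ℂ) * deriv (fun τ => u τ p) t - divRGrad (u t) p
      = ((p.1 : ℂ) / (ε : ℂ) ^ 2) * u t p * (1 - (‖u t p‖ : ℂ) ^ 2)
  bdry : ∀ t : ℝ, ∀ p : ℝ × ℝ, p.1 = 0 → pdR (u t) p = 0
  energyFin : ∀ t : ℝ, IntegrableOn (fun p => eGL ε (u t) p * p.1) Hp volume
  energyConst : ∀ t : ℝ, Ew ε (u t) = Ew ε (u 0)

/-- `∇_{aᵢ} H_ε`. -/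
def gradHi (ε : ℝ) {n : ℕ} (a : Fin n → ℝ × ℝ) (i : Fin n) : ℝ × ℝ :=
  gradR (fun x => Hfun ε (Function.update a i x)) (a i)

/-- The matrix `𝕁` with rows `(0, -1/r)` and `(1/r, 0)`. -/
def Jmat (r : ℝ) (v : ℝ × ℝ) : ℝ × ℝ := (-v.2 / r, v.1 / r)

/-- The system `(LF)_ε`. -/
def IsLFepsSol (ε : ℝ) {n : ℕ} (a : ℝ → Fin n → ℝ × ℝ) (I : Set ℝ) : Prop :=
  ∀ i : Fin n, ∀ s ∈ I,
    HasDerivWithinAt (fun τ => a τ i)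
      ((1 / (π * |Real.log ε|)) • Jmat ((a s i).1) (gradHi ε (a s) i)) I s

/-- `(x, y)^⊥ = (-y, x)`. -/
def perp2 (v : ℝ × ℝ) : ℝ × ℝ := (-v.2, v.1)

/-- The limiting leapfrogging system `(LF)`. -/
def IsLFSol (r₀ : ℝ) {n : ℕ} (b : ℝ → Fin n → ℝ × ℝ) (I : Set ℝ) : Prop :=
  ∀ i : Fin n, ∀ s ∈ I,
    HasDerivWithinAt (fun τ => b τ i)
      ((∑ j ∈ Finset.univ.erase i, (sqE (b s i - b s j))⁻¹ • perp2 (b s i - b s j))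
        - ((b s i).1 / r₀ ^ 2) • ((0:ℝ), (1:ℝ))) I s

/-- The `ε`-scaled configuration of points around `(r₀, z₀)`. -/
def aScaled (r₀ z₀ : ℝ) {n : ℕ} (b : Fin n → ℝ × ℝ) (ε : ℝ) (i : Fin n) : ℝ × ℝ :=
  (r₀ + (b i).1 / Real.sqrt |Real.log ε|, z₀ + (b i).2 / Real.sqrt |Real.log ε|)

/-- `Ψ*_ξ = Σᵢ A_{ξᵢ}`. -/
def PsiStar {n : ℕ} (ξ : Fin n → ℝ × ℝ) (p : ℝ × ℝ) : ℝ := ∑ i, Avec (ξ i) p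

/-- `r Ψ*_ξ`. -/
def rPsiStar {n : ℕ} (ξ : Fin n → ℝ × ℝ) (p : ℝ × ℝ) : ℝ := p.1 * PsiStar ξ p

/-- `r` component of `j*_ξ = -(1/r) ∇^⊥ (r Ψ*_ξ)`. -/
def jrStar {n : ℕ} (ξ : Fin n → ℝ × ℝ) (p : ℝ × ℝ) : ℝ := (1 / p.1) * pdZr (rPsiStar ξ) p
/-- `z` component of `j*_ξ`. -/
def jzStar {n : ℕ} (ξ : Fin n → ℝ × ℝ) (p : ℝ × ℝ) : ℝ := -(1 / p.1) * pdRr (rPsiStar ξ) p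

/-- Energy density of the modulus `e_ε(|u|)`. -/
def eGLmod (ε : ℝ) (u : ℝ × ℝ → ℂ) (p : ℝ × ℝ) : ℝ :=
  ((pdRr (fun q => ‖u q‖) p) ^ 2 + (pdZr (fun q => ‖u q‖) p) ^ 2) / 2
    + (1 - ‖u p‖ ^ 2) ^ 2 / (4 * ε ^ 2)

/-- The core component `𝒞ᵢ`. -/
def coreComp {n : ℕ} (ξ : Fin n → ℝ × ℝ) (rξ : ℝ) (i : Fin n) : Set (ℝ × ℝ) :=
  insert (ξ i)
    (connectedComponentIn {p : ℝ × ℝ | rPsiStar ξ (ξ i + (rξ, 0)) ≤ rPsiStar ξ p}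
      (ξ i + (rξ, 0)))

-- `r Ψ^♮_ξ`, the truncated stream function.
open Classical in
def rPsiNat {n : ℕ} (ξ : Fin n → ℝ × ℝ) (rξ : ℝ) (p : ℝ × ℝ) : ℝ :=
  if h : ∃ i, p ∈ coreComp ξ rξ i then rPsiStar ξ (ξ h.choose + (rξ, 0))
  else rPsiStar ξ p

/-- `r` component of the truncated current `j^♮(u*_ξ)`. -/
def jrNat {n : ℕ} (ξ : Fin n → ℝ × ℝ) (rξ : ℝ) (p : ℝ × ℝ) : ℝ :=
  (1 / p.1) * pdZr (rPsiNat ξ rξ) p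
/-- `z` component of the truncated current `j^♮(u*_ξ)`. -/
def jzNat {n : ℕ} (ξ : Fin n → ℝ × ℝ) (rξ : ℝ) (p : ℝ × ℝ) : ℝ :=
  -(1 / p.1) * pdRr (rPsiNat ξ rξ) p
/-- The truncated current `j^♮(u*_ξ)`. -/
def jNat {n : ℕ} (ξ : Fin n → ℝ × ℝ) (rξ : ℝ) (p : ℝ × ℝ) : ℝ × ℝ :=
  (jrNat ξ rξ p, jzNat ξ rξ p)

/-- Second partial derivatives. -/
def pd2RRr (f : ℝ × ℝ → ℝ) (p : ℝ × ℝ) : ℝ := fderiv ℝ (pdRr f) p (1, 0)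
def pd2RZr (f : ℝ × ℝ → ℝ) (p : ℝ × ℝ) : ℝ := fderiv ℝ (pdZr f) p (1, 0)
def pd2ZZr (f : ℝ × ℝ → ℝ) (p : ℝ × ℝ) : ℝ := fderiv ℝ (pdZr f) p (0, 1)

/-- The functional `F(X, φ)` for a vector field `X`. -/
def Ffun (X : ℝ × ℝ → ℝ × ℝ) (φ : ℝ × ℝ → ℝ) : ℝ :=
  ∫ p in Hp,
    (-(1 / p.1) * (X p).1 * (X p).2 * pdRr φ p + (1 / p.1) * (X p).1 ^ 2 * pdZr φ p
      + (X p).1 * (X p).2 * pd2RRr φ p + (X p).2 ^ 2 * pd2RZr φ p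
      - (X p).1 ^ 2 * pd2RZr φ p - (X p).1 * (X p).2 * pd2ZZr φ p)

/-- `Ω₀ = {r ≥ r₀/4}`. -/
def Omega0 (r₀ : ℝ) : Set (ℝ × ℝ) := {p | r₀ / 4 ≤ p.1}

/-- Excess energy `Σ_a = [E^w_ε(u) − H_ε(a)]⁺`. -/
def SigA (ε : ℝ) {n : ℕ} (u : ℝ × ℝ → ℂ) (a : Fin n → ℝ × ℝ) : ℝ :=
  posPart' (Ew ε u - Hfun ε a)

/-- Localization scale `r_a`. -/
def rA (r₀ : ℝ) {n : ℕ} (u : ℝ × ℝ → ℂ) (a : Fin n → ℝ × ℝ) : ℝ :=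
  w11JacDiff (Omega0 r₀) u a

/-- `Σ^r_a = Σ_a + r_a |log ε|`. -/
def SigRA (ε r₀ : ℝ) {n : ℕ} (u : ℝ × ℝ → ℂ) (a : Fin n → ℝ × ℝ) : ℝ :=
  SigA ε u a + rA r₀ u a * |Real.log ε|

/-- Hypothesis `(H₁)`. -/
def HypH1 (ε K₁ r₀ : ℝ) {n : ℕ} (a : Fin n → ℝ × ℝ) : Prop :=
  (∀ i j : Fin n, i ≠ j → 8 / |Real.log ε| ≤ dE (a i) (a j) ∧ dE (a i) (a j) ≤ K₁) ∧
  ∀ i, r₀ / 2 ≤ (a i).1 ∧ (a i).1 ≤ 2 * r₀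

/-- Hypothesis `(H₀)`. -/
def HypH0 (ε K₀ r₀ : ℝ) {n : ℕ} (a : Fin n → ℝ × ℝ) : Prop :=
  (∀ i j : Fin n, i ≠ j →
    K₀⁻¹ / Real.sqrt |Real.log ε| ≤ dE (a i) (a j) ∧
    dE (a i) (a j) ≤ K₀ / Real.sqrt |Real.log ε|) ∧
  (∀ i, r₀ / 2 ≤ (a i).1 ∧ (a i).1 ≤ 2 * r₀) ∧
  (∀ i, |(a i).2| ≤ K₀)

/-- The conclusions of Proposition 2.1 for the points `ξ`. -/
def Concl21 (ε C₁ r₀ : ℝ) {n : ℕ} (u : ℝ × ℝ → ℂ) (a ξ : Fin n → ℝ × ℝ) : Prop :=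
  (∀ i, ξ i ∈ Hp) ∧
  w11JacDiff {p : ℝ × ℝ | C₁ * (SigA ε u ξ + 1) / |Real.log ε| ≤ p.1} u ξ
      ≤ C₁ * ε * |Real.log ε| ^ C₁ * Real.exp (C₁ * SigRA ε r₀ u a) ∧
  (∫ p in Hp \ ⋃ i, ballE (ξ i) (ε ^ ((2:ℝ)/3)),
      (eGLmod ε u p
        + ((jr u p / ‖u p‖ - jrStar ξ p) ^ 2 + (jz u p / ‖u p‖ - jzStar ξ p) ^ 2)) * p.1)
      ≤ C₁ * (SigA ε u ξ
        + ε ^ ((1:ℝ)/3) * |Real.log ε| ^ C₁ * Real.exp (C₁ * SigRA ε r₀ u a)) ∧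
  SigA ε u ξ ≤ SigA ε u a + C₁ * rA r₀ u a * |Real.log ε|
      + C₁ * ε * |Real.log ε| ^ C₁ * Real.exp (C₁ * SigRA ε r₀ u a)

/-- A smooth cut-off at scale `Rε`. -/
def IsCutoff (Cχ Rε : ℝ) (χ : ℝ × ℝ → ℝ) : Prop :=
  ContDiff ℝ (⊤ : ℕ∞) χ ∧ (∀ p, χ p ∈ Set.Icc (0:ℝ) 1) ∧
  (∀ p : ℝ × ℝ, p ∉ (Set.Icc (0:ℝ) (2 * Rε)) ×ˢ (Set.Icc (-(2 * Rε)) (2 * Rε)) → χ p = 0) ∧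
  HasCompactSupport χ ∧
  (∀ p ∈ (Set.Icc (0:ℝ) Rε) ×ˢ (Set.Icc (-Rε) Rε), χ p = 1) ∧
  (∀ p, nE (gradR χ p) ≤ Cχ / Rε)

/-- Localized momentum `P_ε(u)`. -/
def Peps (χ : ℝ × ℝ → ℝ) (u : ℝ × ℝ → ℂ) : ℝ := ∫ p in Hp, Jac u p * p.1 ^ 2 * χ p

/-- The setting of Theorem 1.2 : a solution of `(LF)_ε` on `[0,S₀]` with the
separation and radius bounds. -/
def LFSetting (ε K₀ r₀ S₀ : ℝ) {n : ℕ} (a : ℝ → Fin n → ℝ × ℝ) : Prop :=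
  IsLFepsSol ε a (Set.Icc 0 S₀) ∧
  ∀ s ∈ Set.Icc (0:ℝ) S₀,
    (∀ i j : Fin n, i ≠ j →
      K₀⁻¹ / Real.sqrt |Real.log ε| ≤ dE (a s i) (a s j) ∧
      dE (a s i) (a s j) ≤ K₀ / Real.sqrt |Real.log ε|) ∧
    ∀ i, r₀ / 2 ≤ (a s i).1 ∧ (a s i).1 ≤ 2 * r₀

/-- `r_a^s`. -/
def rasF (ε r₀ : ℝ) {n : ℕ} (u : ℝ → ℝ × ℝ → ℂ) (a : ℝ → Fin n → ℝ × ℝ) (s : ℝ) : ℝ :=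
  rA r₀ (u (s / |Real.log ε|)) (a s)

/-- `ρ_min = K₀⁻¹/√|log ε|`. -/
def rhoMinF (ε K₀ : ℝ) : ℝ := K₀⁻¹ / Real.sqrt |Real.log ε|

/-- The stopping time `S_stop`. -/
def SstopF (ε K₀ r₀ S₀ : ℝ) {n : ℕ} (u : ℝ → ℝ × ℝ → ℂ) (a : ℝ → Fin n → ℝ × ℝ) : ℝ :=
  sSup {S | S ∈ Set.Icc (0:ℝ) S₀ ∧ ∀ s ∈ Set.Icc (0:ℝ) S, rasF ε r₀ u a s ≤ rhoMinF ε K₀ / 8}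

/-- `r_ξ^s`. -/
def rxiF (ε C₁ r₀ : ℝ) {n : ℕ} (u : ℝ → ℝ × ℝ → ℂ) (a : ℝ → Fin n → ℝ × ℝ) (s : ℝ) : ℝ :=
  C₁ * ε * |Real.log ε| ^ C₁ *
    Real.exp (C₁ * (SigA ε (u 0) (a 0) + rasF ε r₀ u a s * |Real.log ε|))

/-- The radial Ginzburg–Landau vortex profile. -/
def IsProfile (f : ℝ → ℝ) : Prop :=
  f 0 = 0 ∧ Filter.Tendsto f Filter.atTop (𝓝 1) ∧ (∀ ρ : ℝ, f ρ ∈ Set.Icc (0:ℝ) 1) ∧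
  ∃ f' f'' : ℝ → ℝ, ∀ ρ : ℝ, 0 < ρ →
    HasDerivAt f (f' ρ) ρ ∧ HasDerivAt f' (f'' ρ) ρ ∧
    f'' ρ + f' ρ / ρ - f ρ / ρ ^ 2 + f ρ * (1 - f ρ ^ 2) = 0

/-- The singular unimodular vortex-ring map associated to a point `a ∈ H`. -/
def IsSingularRing (a : ℝ × ℝ) (u : ℝ × ℝ → ℂ) : Prop :=
  ContDiffOn ℝ (⊤ : ℕ∞) u (Hp \ {a}) ∧ (∀ p ∈ Hp, ‖u p‖ = 1) ∧
  ∀ p ∈ Hp \ {a},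
    p.1 * jr u p = pdZr (fun q => q.1 * Avec a q) p ∧
    p.1 * jz u p = -pdRr (fun q => q.1 * Avec a q) p

/-- Standard basis of `ℝ × ℝ`. -/
def e2 (k : Fin 2) : ℝ × ℝ := if k = 0 then (1, 0) else (0, 1)
/-- Antisymmetric symbol. -/
def epsSym (i j : Fin 2) : ℝ := if i = 0 ∧ j = 1 then 1 else if i = 1 ∧ j = 0 then -1 else 0
/-- `(y, w) = Re (y conj w)`. -/
def rinnerC (y w : ℂ) : ℝ := (y * (starRingEnd ℂ) w).re
/-- `∂_k u`. -/
def pdC (k : Fin 2) (u : ℝ × ℝ → ℂ) (p : ℝ × ℝ) : ℂ := fderiv ℝ u p (e2 k)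
/-- `∂_{ik} φ`. -/
def pdr2 (i k : Fin 2) (φ : ℝ × ℝ → ℝ) (p : ℝ × ℝ) : ℝ :=
  fderiv ℝ (fun q => fderiv ℝ φ q (e2 k)) p (e2 i)

/-- The functional `F(∇v, φ)` of equation (2.8). -/
def FGPc (v : ℝ × ℝ → ℂ) (φ : ℝ × ℝ → ℝ) : ℝ :=
  -(∫ p in Hp, ∑ i : Fin 2, ∑ j : Fin 2, ∑ k : Fin 2,
      epsSym i j * ((if k = (0 : Fin 2) then 1 / p.1 else 0) * rinnerC (pdC j v p) (pdC k v p))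
        * fderiv ℝ φ p (e2 i))
  + ∫ p in Hp, ∑ i : Fin 2, ∑ j : Fin 2, ∑ k : Fin 2,
      epsSym i j * rinnerC (pdC j v p) (pdC k v p) * pdr2 i k φ p

/-- The parametric integral `∫₀^{π/2} g(u) (h + sin² u)^α du`. -/
def KI (g : ℝ → ℝ) (α h : ℝ) : ℝ := ∫ u in (0:ℝ)..(π / 2), g u * (h + Real.sin u ^ 2) ^ α

lemma KI_pos_base {h : ℝ} (hh : 0 < h) (u : ℝ) : 0 < h + Real.sin u ^ 2 := by positivity

lemma KI_cont_integrand {g : ℝ → ℝ} (hg : Continuous g) (α : ℝ) {h : ℝ} (hh : 0 < h) :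
    Continuous fun u => g u * (h + Real.sin u ^ 2) ^ α := by
  refine hg.mul ?_
  refine Continuous.rpow_const (by fun_prop) ?_
  intro u
  left
  exact (KI_pos_base hh u).ne'

lemma KI_hasDerivAt {g : ℝ → ℝ} (hg : Continuous g) (α : ℝ) {h : ℝ} (hh : 0 < h) :
    HasDerivAt (KI g α) (α * KI g (α - 1) h) h := by
  have key := intervalIntegral.hasDerivAt_integral_of_dominated_loc_of_deriv_le
    (μ := volume) (a := (0:ℝ)) (b := π / 2) (x₀ := h) (s := Set.Ioo (h / 2) (h + 1))
    (F := fun h u => g u * (h + Real.sin u ^ 2) ^ α)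
    (F' := fun h u => g u * (α * (h + Real.sin u ^ 2) ^ (α - 1)))
    (bound := fun u => |g u| * (|α| * ((h / 2) ^ (α - 1) + (h + 2) ^ (α - 1))))
    (Ioo_mem_nhds (by linarith) (by linarith))
    ?_ ?_ ?_ ?_ ?_ ?_
  · have := key.2
    have e : (∫ u in (0:ℝ)..(π / 2), g u * (α * (h + Real.sin u ^ 2) ^ (α - 1)))
        = α * KI g (α - 1) h := by
      unfold KI
      rw [← intervalIntegral.integral_const_mul]
      congr 1; ext u; ring
    rw [e] at this
    exact this
  · filter_upwards [Ioi_mem_nhds hh] with x hx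
    exact (KI_cont_integrand hg α hx).aestronglyMeasurable
  · exact (KI_cont_integrand hg α hh).intervalIntegrable _ _
  · have := (KI_cont_integrand hg (α - 1) hh).const_mul α |>.aestronglyMeasurable (μ := volume.restrict (Set.uIoc (0:ℝ) (π / 2)))
    refine this.congr (Eventually.of_forall fun u => ?_)
    ring
  · refine Eventually.of_forall fun u _ x hx => ?_
    have hx0 : 0 < x := by linarith [hx.1]
    rw [norm_mul, norm_mul, Real.norm_eq_abs, Real.norm_eq_abs, Real.norm_eq_abs]
    have hp := KI_pos_base hx0 u
    rw [abs_of_pos (Real.rpow_pos_of_pos hp _)]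
    have hs : Real.sin u ^ 2 ≤ 1 := Real.sin_sq_le_one u
    have hs0 : 0 ≤ Real.sin u ^ 2 := sq_nonneg _
    have h1 : 0 ≤ (h / 2) ^ (α - 1) := by positivity
    have h2 : 0 ≤ (h + 2) ^ (α - 1) := by positivity
    gcongr
    rcases le_total 0 (α - 1) with ha | ha
    · have : (x + Real.sin u ^ 2) ^ (α - 1) ≤ (h + 2) ^ (α - 1) :=
        Real.rpow_le_rpow hp.le (by linarith [hx.2]) ha
      linarith
    · have : (x + Real.sin u ^ 2) ^ (α - 1) ≤ (h / 2) ^ (α - 1) :=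
        Real.rpow_le_rpow_of_nonpos (by linarith) (by linarith [hx.1]) ha
      linarith
  · exact (Continuous.mul (by fun_prop) (by fun_prop)).intervalIntegrable _ _
  · refine Eventually.of_forall fun u _ x hx => ?_
    have hx0 : 0 < x := by linarith [hx.1]
    have hp := KI_pos_base hx0 u
    have h1 : HasDerivAt (fun y : ℝ => y + Real.sin u ^ 2) 1 x := (hasDerivAt_id x).add_const _
    have h2 := h1.rpow_const (p := α) (Or.inl hp.ne')
    have h3 := h2.const_mul (g u)
    refine HasDerivAt.congr_deriv h3 ?_
    ring

/-- The ring kernel. -/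
def KK (h : ℝ) : ℝ := KI (fun u => Real.sin u ^ 2 * Real.cos u ^ 2) (-3/2) h
/-- First derivative of the ring kernel. -/
def KK1 (h : ℝ) : ℝ := (-3/2) * KI (fun u => Real.sin u ^ 2 * Real.cos u ^ 2) (-5/2) h
/-- Second derivative of the ring kernel. -/
def KK2 (h : ℝ) : ℝ := (15/4) * KI (fun u => Real.sin u ^ 2 * Real.cos u ^ 2) (-7/2) h

lemma scc : Continuous fun u : ℝ => Real.sin u ^ 2 * Real.cos u ^ 2 := by fun_prop

lemma KK_hasDerivAt {h : ℝ} (hh : 0 < h) : HasDerivAt KK (KK1 h) h := by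
  have := KI_hasDerivAt scc (-3/2) hh
  unfold KK1
  refine HasDerivAt.congr_deriv this ?_
  norm_num

lemma KK1_hasDerivAt {h : ℝ} (hh : 0 < h) : HasDerivAt KK1 (KK2 h) h := by
  have := (KI_hasDerivAt scc (-5/2) hh).const_mul (-3/2)
  unfold KK2
  refine HasDerivAt.congr_deriv this ?_
  norm_num; ring

lemma KK2_continuousOn : ContinuousOn KK2 (Set.Ioi 0) := by
  intro h hh
  exact ((KI_hasDerivAt scc (-7/2) hh).continuousAt.const_mul _).continuousWithinAt

lemma hasDerivAt_Dpow {h : ℝ} (hh : 0 < h) (α u : ℝ) :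
    HasDerivAt (fun u => (h + Real.sin u ^ 2) ^ α)
      (2 * α * (Real.sin u * Real.cos u) * (h + Real.sin u ^ 2) ^ (α - 1)) u := by
  have hp := KI_pos_base hh u
  have h1 : HasDerivAt (fun y : ℝ => h + Real.sin y ^ 2) (2 * Real.sin u * Real.cos u) u := by
    have := ((Real.hasDerivAt_sin u).pow 2).const_add h
    refine HasDerivAt.congr_deriv this ?_
    norm_num
  have h2 := h1.rpow_const (p := α) (Or.inl hp.ne')
  refine HasDerivAt.congr_deriv h2 ?_
  ring

lemma Dpow_succ {h : ℝ} (hh : 0 < h) (α β u : ℝ) (hab : α = β + 1) :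
    (h + Real.sin u ^ 2) ^ α = (h + Real.sin u ^ 2) * (h + Real.sin u ^ 2) ^ β := by
  have hp := KI_pos_base hh u
  rw [hab, Real.rpow_add hp, Real.rpow_one, mul_comm]

/-- FTC helper. -/
lemma int_of_deriv {f f' : ℝ → ℝ} (hf : ∀ u, HasDerivAt f (f' u) u) (hc : Continuous f') :
    ∫ u in (0:ℝ)..(π / 2), f' u = f (π / 2) - f 0 :=
  intervalIntegral.integral_eq_sub_of_hasDerivAt (fun u _ => hf u) (hc.intervalIntegrable _ _)

lemma KK_eq_cos {h : ℝ} (hh : 0 < h) : KK h = KI (fun u => Real.cos u ^ 2 - Real.sin u ^ 2) (-1/2) h := by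
  have hc1 : Continuous fun u => (Real.sin u ^ 2 * Real.cos u ^ 2) * (h + Real.sin u ^ 2) ^ (-3/2 : ℝ) :=
    KI_cont_integrand scc _ hh
  have hc2 : Continuous fun u => (Real.cos u ^ 2 - Real.sin u ^ 2) * (h + Real.sin u ^ 2) ^ (-1/2 : ℝ) :=
    KI_cont_integrand (by fun_prop) _ hh
  have hd : ∀ u, HasDerivAt (fun u => (Real.sin u * Real.cos u) * (h + Real.sin u ^ 2) ^ (-1/2 : ℝ))
      ((Real.cos u ^ 2 - Real.sin u ^ 2) * (h + Real.sin u ^ 2) ^ (-1/2 : ℝ) -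
      (Real.sin u ^ 2 * Real.cos u ^ 2) * (h + Real.sin u ^ 2) ^ (-3/2 : ℝ)) u := by
    intro u
    have h1 := (Real.hasDerivAt_sin u).mul (Real.hasDerivAt_cos u)
    have h2 := h1.mul (hasDerivAt_Dpow hh (-1/2) u)
    refine HasDerivAt.congr_deriv h2 ?_
    have e : (-1/2 : ℝ) - 1 = -3/2 := by norm_num
    rw [e]
    simp only [Pi.mul_apply]
    ring
  have := int_of_deriv hd (hc2.sub hc1)
  rw [intervalIntegral.integral_sub (hc2.intervalIntegrable _ _) (hc1.intervalIntegrable _ _)] at this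
  simp only [Real.cos_pi_div_two, Real.sin_zero, mul_zero, zero_mul, sub_zero] at this
  unfold KK KI
  linarith

lemma csc : Continuous fun u : ℝ => Real.cos u ^ 2 - Real.sin u ^ 2 := by fun_prop

lemma KK1_eq_cos {h : ℝ} (hh : 0 < h) :
    KK1 h = (-1/2) * KI (fun u => Real.cos u ^ 2 - Real.sin u ^ 2) (-3/2) h := by
  have h1 := KI_hasDerivAt csc (-1/2) hh
  have h2 : HasDerivAt KK _ h := h1.congr_of_eventuallyEq
    (by filter_upwards [Ioi_mem_nhds hh] with x hx using KK_eq_cos hx)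
  rw [(KK_hasDerivAt hh).unique h2]
  norm_num

lemma KK2_eq_cos {h : ℝ} (hh : 0 < h) :
    KK2 h = (3/4) * KI (fun u => Real.cos u ^ 2 - Real.sin u ^ 2) (-5/2) h := by
  have h1 := (KI_hasDerivAt csc (-3/2) hh).const_mul (-1/2)
  have h2 : HasDerivAt KK1 _ h := h1.congr_of_eventuallyEq
    (by filter_upwards [Ioi_mem_nhds hh] with x hx using KK1_eq_cos hx)
  rw [(KK1_hasDerivAt hh).unique h2]
  norm_num; ring

/-- The Legendre equation satisfied by the kernel. -/
lemma KK_ode {h : ℝ} (hh : 0 < h) :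
    h * (1 + h) * KK2 h + (1 + 2 * h) * KK1 h = 3 / 4 * KK h := by
  rw [KK_eq_cos hh, KK1_eq_cos hh, KK2_eq_cos hh]
  have hd : ∀ u, HasDerivAt (fun u => (Real.cos u ^ 2 - Real.sin u ^ 2) * (Real.sin u * Real.cos u)
        * (1/4 * (h + Real.sin u ^ 2) ^ (-3/2 : ℝ))
        - (Real.sin u * Real.cos u) * (h + Real.sin u ^ 2) ^ (-1/2 : ℝ))
      (h * (1 + h) * (3/4) * ((Real.cos u ^ 2 - Real.sin u ^ 2) * (h + Real.sin u ^ 2) ^ (-5/2 : ℝ))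
       + (1 + 2 * h) * (-1/2) * ((Real.cos u ^ 2 - Real.sin u ^ 2) * (h + Real.sin u ^ 2) ^ (-3/2 : ℝ))
       - 3 / 4 * ((Real.cos u ^ 2 - Real.sin u ^ 2) * (h + Real.sin u ^ 2) ^ (-1/2 : ℝ))) u := by
    intro u
    have hs := Real.hasDerivAt_sin u
    have hc := Real.hasDerivAt_cos u
    have h1 := hs.mul hc
    have h0 := (hc.pow 2).sub (hs.pow 2)
    have h2 := ((h0.mul h1).mul ((hasDerivAt_Dpow hh (-3/2) u).const_mul (1/4))).sub
      (h1.mul (hasDerivAt_Dpow hh (-1/2) u))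
    refine HasDerivAt.congr_deriv h2 ?_
    have e : (-1/2 : ℝ) - 1 = -3/2 := by norm_num
    have e' : (-3/2 : ℝ) - 1 = -5/2 := by norm_num
    rw [e, e']
    simp only [Pi.mul_apply, Pi.sub_apply, Pi.pow_apply]
    rw [Dpow_succ hh (-1/2) (-3/2) u (by norm_num), Dpow_succ hh (-3/2) (-5/2) u (by norm_num)]
    have hcs : Real.cos u ^ 2 = 1 - Real.sin u ^ 2 := by rw [Real.cos_sq']
    generalize (h + Real.sin u ^ 2) ^ (-5/2 : ℝ) = q
    norm_num
    generalize Real.cos u = c at *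
    generalize Real.sin u = s at *
    have : c ^ 4 = (1 - s^2)^2 := by rw [← hcs]; ring
    ring_nf
    simp only [this, hcs]
    ring
  have c1 := fun α : ℝ => KI_cont_integrand csc α hh
  have := int_of_deriv hd (by
    exact (((c1 _).const_mul _).add ((c1 _).const_mul _)).sub ((c1 _).const_mul _))
  rw [intervalIntegral.integral_sub, intervalIntegral.integral_add] at this
  · simp only [intervalIntegral.integral_const_mul, Real.cos_pi_div_two, Real.sin_zero, mul_zero, zero_mul, sub_zero] at this
    unfold KI
    linarith
  · exact ((c1 _).const_mul _).intervalIntegrable _ _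
  · exact ((c1 _).const_mul _).intervalIntegrable _ _
  · exact (((c1 _).const_mul _).add ((c1 _).const_mul _)).intervalIntegrable _ _
  · exact ((c1 _).const_mul _).intervalIntegrable _ _

/-- `y = D^{-1/2}` packaging. -/
lemma rpow_y {D : ℝ} (hD : 0 < D) : ∃ y : ℝ, 0 < y ∧ y ^ 2 * D = 1 ∧ D ^ (-1/2 : ℝ) = y ∧
    D ^ (-3/2 : ℝ) = y ^ 3 ∧ D ^ (-5/2 : ℝ) = y ^ 5 ∧ y * Real.sqrt D = 1 := by
  have e : ∀ n : ℕ, (D ^ (-1/2 : ℝ)) ^ n = D ^ (-(n:ℝ)/2) := by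
    intro n
    rw [← Real.rpow_natCast, ← Real.rpow_mul hD.le]
    congr 1; ring
  have hy : 0 < D ^ (-1/2 : ℝ) := Real.rpow_pos_of_pos hD _
  refine ⟨D ^ (-1/2 : ℝ), hy, ?_, rfl, ?_, ?_, ?_⟩
  · rw [e 2]; norm_num
    rw [Real.rpow_neg_one]; exact inv_mul_cancel₀ hD.ne'
  · rw [e 3]; norm_num
  · rw [e 5]; norm_num
  · rw [Real.sqrt_eq_rpow, ← Real.rpow_add hD]; norm_num

lemma pi_half_nonneg : (0:ℝ) ≤ π / 2 := by positivity

lemma int_le_const {f : ℝ → ℝ} (hf : Continuous f) {B : ℝ} (hB : ∀ u ∈ Set.Icc (0:ℝ) (π/2), f u ≤ B) :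
    ∫ u in (0:ℝ)..(π / 2), f u ≤ π / 2 * B := by
  have h1 : ∫ u in (0:ℝ)..(π / 2), f u ≤ ∫ u in (0:ℝ)..(π / 2), B :=
    intervalIntegral.integral_mono_on pi_half_nonneg (hf.intervalIntegrable _ _)
      (continuous_const.intervalIntegrable _ _) hB
  simpa using h1

lemma int_nonneg' {f : ℝ → ℝ} (hB : ∀ u ∈ Set.Icc (0:ℝ) (π/2), 0 ≤ f u) :
    0 ≤ ∫ u in (0:ℝ)..(π / 2), f u :=
  intervalIntegral.integral_nonneg pi_half_nonneg hB

lemma trig_range {u : ℝ} (hu : u ∈ Set.Icc (0:ℝ) (π/2)) :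
    0 ≤ Real.sin u ∧ Real.sin u ≤ 1 ∧ 0 ≤ Real.cos u ∧ Real.cos u ≤ 1 ∧
      Real.sin u ^ 2 + Real.cos u ^ 2 = 1 :=
  ⟨Real.sin_nonneg_of_nonneg_of_le_pi hu.1 (by linarith [hu.2, Real.pi_pos]), Real.sin_le_one u,
    Real.cos_nonneg_of_neg_pi_div_two_le_of_le (by linarith [hu.1, Real.pi_pos]) hu.2,
    Real.cos_le_one u, Real.sin_sq_add_cos_sq u⟩

lemma KK_nonneg {h : ℝ} (hh : 0 < h) : 0 ≤ KK h := by
  refine int_nonneg' fun u _ => ?_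
  have := Real.rpow_pos_of_pos (KI_pos_base hh u) (-3/2)
  positivity

lemma KK_le_sqrt {h : ℝ} (hh : 0 < h) : KK h ≤ 2 / Real.sqrt h := by
  have hs : 0 < Real.sqrt h := Real.sqrt_pos.2 hh
  have : KK h ≤ π / 2 * (1 / Real.sqrt h) := by
    refine int_le_const (KI_cont_integrand scc _ hh) fun u hu => ?_
    obtain ⟨y, hy, hyD, -, e3, -, hys⟩ := rpow_y (KI_pos_base hh u)
    obtain ⟨h0, h1, h2, h3, h4⟩ := trig_range hu
    rw [e3]
    have hyl : y ≤ 1 / Real.sqrt h := by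
      rw [le_div_iff₀ hs, ← hys]
      gcongr
      nlinarith [sq_nonneg (Real.sin u)]
    have : Real.sin u ^ 2 * y ^ 2 ≤ 1 := by nlinarith [sq_nonneg y]
    have hc : Real.cos u ^ 2 ≤ 1 := by nlinarith
    calc Real.sin u ^ 2 * Real.cos u ^ 2 * y ^ 3 = (Real.sin u ^ 2 * y ^ 2) * Real.cos u ^ 2 * y := by ring
      _ ≤ 1 * 1 * y := by gcongr
      _ ≤ _ := by linarith
  refine this.trans ?_
  rw [div_eq_mul_one_div 2]
  gcongr
  linarith [Real.pi_le_four]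

lemma KK_le_far {h : ℝ} (hh : 0 < h) : KK h ≤ 2 / (h * Real.sqrt h) := by
  have hs : 0 < Real.sqrt h := Real.sqrt_pos.2 hh
  have : KK h ≤ π / 2 * (1 / (h * Real.sqrt h)) := by
    refine int_le_const (KI_cont_integrand scc _ hh) fun u hu => ?_
    obtain ⟨y, hy, hyD, -, e3, -, hys⟩ := rpow_y (KI_pos_base hh u)
    obtain ⟨h0, h1, h2, h3, h4⟩ := trig_range hu
    rw [e3]
    have hyl : y ≤ 1 / Real.sqrt h := by
      rw [le_div_iff₀ hs, ← hys]
      gcongr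
      nlinarith [sq_nonneg (Real.sin u)]
    have e : 1 / (h * Real.sqrt h) = (1 / Real.sqrt h) ^ 3 := by
      have := Real.sq_sqrt hh.le
      field_simp
      linear_combination this
    rw [e]
    have hc : Real.sin u ^ 2 * Real.cos u ^ 2 ≤ 1 := by nlinarith [sq_nonneg (Real.sin u), sq_nonneg (Real.cos u)]
    calc _ ≤ 1 * y ^ 3 := by gcongr
      _ ≤ _ := by rw [one_mul]; gcongr
  refine this.trans ?_
  rw [div_eq_mul_one_div 2]
  gcongr
  linarith [Real.pi_le_four]

lemma KK1_nonpos {h : ℝ} (hh : 0 < h) : KK1 h ≤ 0 := by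
  unfold KK1
  have : 0 ≤ KI (fun u => Real.sin u ^ 2 * Real.cos u ^ 2) (-5/2) h := by
    refine int_nonneg' fun u _ => ?_
    have := Real.rpow_pos_of_pos (KI_pos_base hh u) (-5/2)
    positivity
  linarith

lemma KK1_far {h : ℝ} (hh : 0 < h) : |KK1 h| ≤ 3 / (h ^ 2 * Real.sqrt h) := by
  rw [abs_of_nonpos (KK1_nonpos hh)]
  have hs : 0 < Real.sqrt h := Real.sqrt_pos.2 hh
  have : KI (fun u => Real.sin u ^ 2 * Real.cos u ^ 2) (-5/2) h ≤ π / 2 * (1 / (h ^ 2 * Real.sqrt h)) := by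
    refine int_le_const (KI_cont_integrand scc _ hh) fun u hu => ?_
    obtain ⟨y, hy, hyD, -, -, e5, hys⟩ := rpow_y (KI_pos_base hh u)
    obtain ⟨h0, h1, h2, h3, h4⟩ := trig_range hu
    rw [e5]
    have hyl : y ≤ 1 / Real.sqrt h := by
      rw [le_div_iff₀ hs, ← hys]
      gcongr
      nlinarith [sq_nonneg (Real.sin u)]
    have e : 1 / (h ^ 2 * Real.sqrt h) = (1 / Real.sqrt h) ^ 5 := by
      have := Real.sq_sqrt hh.le
      have h4 : Real.sqrt h ^ 4 = h ^ 2 := by rw [← this]; ring_nf; rw [this]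
      field_simp
      linear_combination h4
    rw [e]
    have hc : Real.sin u ^ 2 * Real.cos u ^ 2 ≤ 1 := by nlinarith [sq_nonneg (Real.sin u), sq_nonneg (Real.cos u)]
    calc _ ≤ 1 * y ^ 5 := by gcongr
      _ ≤ _ := by rw [one_mul]; gcongr
  unfold KK1
  have h3 : 3 / (h ^ 2 * Real.sqrt h) = 3 * (1 / (h ^ 2 * Real.sqrt h)) := by ring
  rw [h3]
  have hp : 0 < 1 / (h ^ 2 * Real.sqrt h) := by positivity
  have : π / 2 * (1 / (h ^ 2 * Real.sqrt h)) ≤ 2 * (1 / (h ^ 2 * Real.sqrt h)) := by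
    gcongr; linarith [Real.pi_le_four]
  linarith

lemma KK1_near {h : ℝ} (hh : 0 < h) : |KK1 h| ≤ 3 / 2 / (h * Real.sqrt (1 + h)) := by
  rw [abs_of_nonpos (KK1_nonpos hh)]
  have hcc : Continuous fun u => Real.cos u * (h + Real.sin u ^ 2) ^ (-3/2 : ℝ) :=
    KI_cont_integrand (by fun_prop) _ hh
  have h1 : KI (fun u => Real.sin u ^ 2 * Real.cos u ^ 2) (-5/2) h
      ≤ ∫ u in (0:ℝ)..(π/2), Real.cos u * (h + Real.sin u ^ 2) ^ (-3/2 : ℝ) := by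
    refine intervalIntegral.integral_mono_on pi_half_nonneg
      ((KI_cont_integrand scc _ hh).intervalIntegrable _ _) (hcc.intervalIntegrable _ _) fun u hu => ?_
    obtain ⟨y, hy, hyD, -, e3, e5, hys⟩ := rpow_y (KI_pos_base hh u)
    obtain ⟨h0, h1, h2, h3, h4⟩ := trig_range hu
    rw [e5, e3]
    have h5 : Real.sin u ^ 2 * y ^ 2 ≤ 1 := by nlinarith [sq_nonneg y]
    calc Real.sin u ^ 2 * Real.cos u ^ 2 * y ^ 5 = (Real.sin u ^ 2 * y ^ 2) * Real.cos u * (Real.cos u * y ^ 3) := by ring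
      _ ≤ 1 * 1 * (Real.cos u * y ^ 3) := by gcongr
      _ = _ := by ring
  have hd : ∀ u, HasDerivAt (fun u => Real.sin u * (h + Real.sin u ^ 2) ^ (-1/2 : ℝ) / h)
      (Real.cos u * (h + Real.sin u ^ 2) ^ (-3/2 : ℝ)) u := by
    intro u
    have h2 := ((Real.hasDerivAt_sin u).mul (hasDerivAt_Dpow hh (-1/2) u)).div_const h
    refine HasDerivAt.congr_deriv h2 ?_
    have e : (-1/2 : ℝ) - 1 = -3/2 := by norm_num
    rw [e, Dpow_succ hh (-1/2) (-3/2) u (by norm_num)]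
    field_simp
    ring
  have h2 := int_of_deriv hd hcc
  rw [h2] at h1
  obtain ⟨y, hy, hyD, e1, e3, e5, hys⟩ := rpow_y (show 0 < h + 1 by linarith)
  simp only [Real.sin_pi_div_two, Real.sin_zero, one_pow, e1, one_mul, zero_mul, zero_div, sub_zero] at h1
  have e6 : 3 / 2 / (h * Real.sqrt (1 + h)) = 3 / 2 * (y / h) := by
    have : Real.sqrt (1 + h) = 1 / y := by rw [add_comm 1 h]; field_simp; linarith
    rw [this]; field_simp
  rw [e6]
  unfold KK1
  linarith

lemma yh1 {h y : ℝ} (hh : 0 < h) (hy : 0 < y) (hyD : y ^ 2 * (h + 1) = 1) : y ≤ 1 := by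
  by_contra hc
  push Not at hc
  have : 1 < y ^ 2 := by nlinarith
  nlinarith

lemma yh2 {h y : ℝ} (hh : 0 < h) (hy : 0 < y) (hyD : y ^ 2 * (h + 1) = 1) : 1 - y ≤ h := by
  have := yh1 hh hy hyD
  have h2 : y ^ 2 ≤ y := by nlinarith
  have h3 : y ^ 2 * h ≤ 1 * h := by gcongr; nlinarith
  linarith

lemma yh3 {h y : ℝ} (hh : 0 < h) (hy : 0 < y) (hyD : y ^ 2 * (h + 1) = 1) : 1 - y ^ 3 ≤ 3 * h := by
  have h1 := yh1 hh hy hyD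
  have h2 := yh2 hh hy hyD
  have e : 1 - y ^ 3 = (1 - y) * (1 + y + y ^ 2) := by ring
  have h3 : 1 + y + y ^ 2 ≤ 3 := by nlinarith
  rw [e]
  calc _ ≤ h * 3 := by gcongr
    _ = _ := by ring

lemma le_sqrt_self {h : ℝ} (hh : 0 < h) (hh1 : h ≤ 1) : h ≤ Real.sqrt h := by
  rw [Real.le_sqrt' hh]; nlinarith

lemma kpt1 {s c y h : ℝ} (hh : 0 < h) (hy : 0 < y) (hyD : y ^ 2 * (h + s ^ 2) = 1)
    (hys : y * Real.sqrt h ≤ 1) (h2 : 0 ≤ c) (h3 : c ≤ 1) (h4 : s ^ 2 + c ^ 2 = 1) :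
    0 ≤ (3/2 * h) * ((s ^ 2 * c) * y ^ 5) - (3/2 * h) * ((s ^ 2 * c ^ 2) * y ^ 5) ∧
    (3/2 * h) * ((s ^ 2 * c) * y ^ 5) - (3/2 * h) * ((s ^ 2 * c ^ 2) * y ^ 5) ≤ 3/2 * Real.sqrt h := by
  have h5 : s ^ 2 * y ^ 2 ≤ 1 := by
    have : 0 ≤ y ^ 2 * h := by positivity
    linarith
  have e : (3/2 * h) * ((s ^ 2 * c) * y ^ 5) - (3/2 * h) * ((s ^ 2 * c ^ 2) * y ^ 5)
      = (3/2 * h) * y * ((s ^ 2 * y ^ 2) * (c * ((1 - c) * y ^ 2))) := by ring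
  rw [e]
  have h6 : 0 ≤ 1 - c := by linarith
  have h7 : (1 - c) * y ^ 2 ≤ 1 := by
    have : 1 - c ≤ s ^ 2 := by nlinarith
    calc _ ≤ s ^ 2 * y ^ 2 := by gcongr
      _ ≤ 1 := h5
  refine ⟨by positivity, ?_⟩
  have h8 : (s ^ 2 * y ^ 2) * (c * ((1 - c) * y ^ 2)) ≤ 1 * (1 * 1) := by gcongr
  have h9 : h * y ≤ Real.sqrt h := by
    have := Real.mul_self_sqrt hh.le
    calc h * y = Real.sqrt h * (y * Real.sqrt h) := by linear_combination (-y) * this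
      _ ≤ Real.sqrt h * 1 := by gcongr
      _ = _ := by ring
  calc _ ≤ (3/2 * h) * y * (1 * (1 * 1)) := by gcongr
    _ ≤ _ := by linarith

lemma kpt2 {s c y h : ℝ} (hh : 0 < h) (hy : 0 < y) (hyD : y ^ 2 * (h + s ^ 2) = 1)
    (h0 : 0 ≤ s) (h2 : 0 ≤ c) (h3 : c ≤ 1) (h4 : s ^ 2 + c ^ 2 = 1) :
    0 ≤ s * c / (1 + c) - (s ^ 2 * c * y ^ 3 - s ^ 2 * c ^ 2 * y ^ 3) ∧
    s * c / (1 + c) - (s ^ 2 * c * y ^ 3 - s ^ 2 * c ^ 2 * y ^ 3) ≤ 3/2 * Real.sqrt h := by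
  have hp : 1 + c ≠ 0 := by positivity
  have hss := Real.mul_self_sqrt hh.le
  have hs := Real.sqrt_pos.2 hh
  have e : s * c / (1 + c) - (s ^ 2 * c * y ^ 3 - s ^ 2 * c ^ 2 * y ^ 3)
      = (c / (1 + c)) * (s * (1 - (s * y) ^ 3)) := by
    rw [div_mul_eq_mul_div, eq_div_iff hp, sub_mul, div_mul_cancel₀ _ hp]
    linear_combination (s ^ 2 * c * y ^ 3) * h4
  rw [e]
  have hsy2 : (s * y) ^ 2 ≤ 1 := by
    have : 0 ≤ y ^ 2 * h := by positivity
    linarith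
  have hsy0 : 0 ≤ s * y := by positivity
  have hsy1 : s * y ≤ 1 := by nlinarith
  have hcc : c / (1 + c) ≤ 1 := by rw [div_le_one (by positivity)]; linarith
  have hcc0 : 0 ≤ c / (1 + c) := by positivity
  have h7 : 0 ≤ 1 - (s * y) ^ 3 := by
    have := pow_le_one₀ hsy0 hsy1 (n := 3)
    linarith
  refine ⟨by positivity, ?_⟩
  have h8 : 1 - (s * y) ^ 3 ≤ 3 * (h * y ^ 2) := by
    have : h * y ^ 2 = 1 - (s * y) ^ 2 := by linarith
    rw [this]
    generalize s * y = t at *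
    nlinarith [mul_nonneg (mul_nonneg hsy0 hsy0) (sub_nonneg.2 hsy1)]
  have h9 : s * (h * y ^ 2) ≤ Real.sqrt h / 2 := by
    have a1 : 2 * (Real.sqrt h * s) ≤ h + s ^ 2 := by nlinarith [sq_nonneg (Real.sqrt h - s)]
    have a2 : 2 * (Real.sqrt h * s) * y ^ 2 ≤ 1 := by
      calc _ ≤ (h + s ^ 2) * y ^ 2 := by gcongr
        _ = 1 := by linarith
    calc s * (h * y ^ 2) = Real.sqrt h / 2 * (2 * (Real.sqrt h * s) * y ^ 2) := by
          linear_combination (-(s * y ^ 2)) * hss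
      _ ≤ Real.sqrt h / 2 * 1 := by gcongr
      _ = _ := by ring
  calc _ ≤ 1 * (s * (1 - (s * y) ^ 3)) := by gcongr
    _ ≤ s * (3 * (h * y ^ 2)) := by rw [one_mul]; gcongr
    _ ≤ _ := by linarith

lemma KK1_asymp {h : ℝ} (hh : 0 < h) (hh1 : h ≤ 1) : |h * KK1 h + 1 / 2| ≤ 5 * Real.sqrt h := by
  have hs : 0 < Real.sqrt h := Real.sqrt_pos.2 hh
  have hss := Real.sq_sqrt hh.le
  have hs1 : Real.sqrt h ≤ 1 := Real.sqrt_le_one.2 hh1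
  have hcc : Continuous fun u => (3/2 * h) * ((Real.sin u ^ 2 * Real.cos u) * (h + Real.sin u ^ 2) ^ (-5/2 : ℝ)) :=
    (KI_cont_integrand (by fun_prop) _ hh).const_mul _
  have hd : ∀ u, HasDerivAt (fun u => 1/2 * (Real.sin u ^ 3 * (h + Real.sin u ^ 2) ^ (-3/2 : ℝ)))
      ((3/2 * h) * ((Real.sin u ^ 2 * Real.cos u) * (h + Real.sin u ^ 2) ^ (-5/2 : ℝ))) u := by
    intro u
    have h2 := (((Real.hasDerivAt_sin u).pow 3).mul (hasDerivAt_Dpow hh (-3/2) u)).const_mul (1/2)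
    refine HasDerivAt.congr_deriv h2 ?_
    have e : (-3/2 : ℝ) - 1 = -5/2 := by norm_num
    rw [e, Dpow_succ hh (-3/2) (-5/2) u (by norm_num)]
    simp only [Pi.pow_apply]
    norm_num
    ring
  have h2 := int_of_deriv hd hcc
  obtain ⟨y, hy, hyD, e1, e3, e5, hys⟩ := rpow_y (show 0 < h + 1 by linarith)
  simp only [Real.sin_pi_div_two, Real.sin_zero, one_pow, e3, one_mul, zero_mul, sub_zero,
    ne_eq, OfNat.ofNat_ne_zero, not_false_eq_true, zero_pow, mul_zero] at h2
  have hy1 : y ≤ 1 := yh1 hh hy hyD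
  have hcS : Continuous fun u => (3/2 * h) * ((Real.sin u ^ 2 * Real.cos u ^ 2) * (h + Real.sin u ^ 2) ^ (-5/2 : ℝ)) :=
    (KI_cont_integrand scc _ hh).const_mul _
  have hK : h * KK1 h = - ∫ u in (0:ℝ)..(π/2), (3/2 * h) * ((Real.sin u ^ 2 * Real.cos u ^ 2) * (h + Real.sin u ^ 2) ^ (-5/2 : ℝ)) := by
    rw [intervalIntegral.integral_const_mul]; unfold KK1 KI; ring
  have hsub := intervalIntegral.integral_sub (hcc.intervalIntegrable (μ := volume) 0 (π/2)) (hcS.intervalIntegrable (μ := volume) 0 (π/2))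
  have hpt : ∀ u ∈ Set.Icc (0:ℝ) (π/2), 0 ≤ (3/2 * h) * ((Real.sin u ^ 2 * Real.cos u) * (h + Real.sin u ^ 2) ^ (-5/2 : ℝ)) -
      (3/2 * h) * ((Real.sin u ^ 2 * Real.cos u ^ 2) * (h + Real.sin u ^ 2) ^ (-5/2 : ℝ)) ∧
      (3/2 * h) * ((Real.sin u ^ 2 * Real.cos u) * (h + Real.sin u ^ 2) ^ (-5/2 : ℝ)) -
      (3/2 * h) * ((Real.sin u ^ 2 * Real.cos u ^ 2) * (h + Real.sin u ^ 2) ^ (-5/2 : ℝ)) ≤ 3/2 * Real.sqrt h := by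
    intro u hu
    obtain ⟨y, hy, hyD, -, e3, e5, hys⟩ := rpow_y (KI_pos_base hh u)
    obtain ⟨h0, h1, h2, h3, h4⟩ := trig_range hu
    rw [e5]
    have hyl : y * Real.sqrt h ≤ 1 := by
      rw [← hys]
      gcongr
      linarith [sq_nonneg (Real.sin u)]
    exact kpt1 hh hy hyD hyl h2 h3 h4
  have hA := int_nonneg' (fun u hu => (hpt u hu).1)
  have hB := int_le_const (hcc.sub hcS) (fun u hu => (hpt u hu).2)
  have hB' : π / 2 * (3/2 * Real.sqrt h) ≤ 2 * (3/2 * Real.sqrt h) := by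
    gcongr; linarith [Real.pi_le_four]
  simp only [Pi.sub_apply] at hB
  rw [hsub, h2] at hA hB
  have hy3 : y ^ 3 ≤ 1 := pow_le_one₀ hy.le hy1
  have hyl : 1 - y ^ 3 ≤ 3 * h := yh3 hh hy hyD
  have hle := le_sqrt_self hh hh1
  rw [hK, abs_le]
  constructor <;> linarith

lemma KK_asymp {h : ℝ} (hh : 0 < h) (hh1 : h ≤ 1) :
    |KK h - (2 * Real.log 2 - Real.log h / 2 - 2)| ≤ 5 * Real.sqrt h := by
  have hs : 0 < Real.sqrt h := Real.sqrt_pos.2 hh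
  have hss := Real.sq_sqrt hh.le
  have hs1 : Real.sqrt h ≤ 1 := Real.sqrt_le_one.2 hh1
  have hc1 : Continuous fun u => (Real.sin u ^ 2 * Real.cos u) * (h + Real.sin u ^ 2) ^ (-3/2 : ℝ) :=
    KI_cont_integrand (by fun_prop) _ hh
  have hc2 : Continuous fun u => (Real.sin u ^ 2 * Real.cos u ^ 2) * (h + Real.sin u ^ 2) ^ (-3/2 : ℝ) :=
    KI_cont_integrand scc _ hh
  -- first integral
  have hd : ∀ u, HasDerivAt (fun u => Real.log (Real.sin u + Real.sqrt (h + Real.sin u ^ 2))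
        - Real.sin u * (h + Real.sin u ^ 2) ^ (-1/2 : ℝ))
      ((Real.sin u ^ 2 * Real.cos u) * (h + Real.sin u ^ 2) ^ (-3/2 : ℝ)) u := by
    intro u
    have hD := KI_pos_base hh u
    have hsD : 0 < Real.sqrt (h + Real.sin u ^ 2) := Real.sqrt_pos.2 hD
    have hsq := Real.sq_sqrt hD.le
    have hpos : 0 < Real.sin u + Real.sqrt (h + Real.sin u ^ 2) := by nlinarith
    have g1 : HasDerivAt (fun y : ℝ => h + Real.sin y ^ 2) (2 * Real.sin u * Real.cos u) u := by
      have := ((Real.hasDerivAt_sin u).pow 2).const_add h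
      refine HasDerivAt.congr_deriv this ?_
      norm_num
    have g2 := ((Real.hasDerivAt_sin u).add (g1.sqrt hD.ne')).log hpos.ne'
    have h2 := g2.sub ((Real.hasDerivAt_sin u).mul (hasDerivAt_Dpow hh (-1/2) u))
    refine HasDerivAt.congr_deriv h2 ?_
    have e : (-1/2 : ℝ) - 1 = -3/2 := by norm_num
    obtain ⟨y, hy, hyD, e1, e3, e5, hys⟩ := rpow_y hD
    rw [e, e1, e3]
    have hw : Real.sqrt (h + Real.sin u ^ 2) = 1 / y := by field_simp; linarith
    simp only [Pi.add_apply]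
    rw [hw] at hpos ⊢
    have hpos' : Real.sin u * y + 1 ≠ 0 := by
      have : 0 < y * (Real.sin u + 1 / y) := mul_pos hy hpos
      have e : y * (Real.sin u + 1 / y) = Real.sin u * y + 1 := by field_simp
      linarith
    have hne : Real.sin u + 1 / y ≠ 0 := hpos.ne'
    field_simp
    ring
  have h2 := int_of_deriv hd hc1
  obtain ⟨y, hy, hyD, e1, e3, e5, hys⟩ := rpow_y (show 0 < h + 1 by linarith)
  simp only [Real.sin_pi_div_two, Real.sin_zero, one_pow, e1, one_mul, zero_mul, sub_zero, zero_add,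
    ne_eq, OfNat.ofNat_ne_zero, not_false_eq_true, zero_pow, add_zero] at h2
  have hlog : Real.log (Real.sqrt h) = Real.log h / 2 := Real.log_sqrt hh.le
  rw [hlog] at h2
  -- second integral
  have hd3 : ∀ u ∈ Set.uIcc (0:ℝ) (π/2), HasDerivAt (fun u => Real.log (1 + Real.cos u) - Real.cos u)
      (Real.sin u * Real.cos u / (1 + Real.cos u)) u := by
    intro u hu
    rw [Set.uIcc_of_le pi_half_nonneg] at hu
    obtain ⟨h0, h1, h2, h3, h4⟩ := trig_range hu
    have hp : 1 + Real.cos u ≠ 0 := by positivity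
    have h2 := (((Real.hasDerivAt_cos u).const_add 1).log hp).sub (Real.hasDerivAt_cos u)
    refine HasDerivAt.congr_deriv h2 ?_
    field_simp
    ring
  have hc3 : ContinuousOn (fun u => Real.sin u * Real.cos u / (1 + Real.cos u)) (Set.uIcc (0:ℝ) (π/2)) := by
    refine ContinuousOn.div (by fun_prop) (by fun_prop) ?_
    intro u hu
    rw [Set.uIcc_of_le pi_half_nonneg] at hu
    obtain ⟨h0, h1, h2, h3, h4⟩ := trig_range hu
    positivity
  have h3 := intervalIntegral.integral_eq_sub_of_hasDerivAt hd3 hc3.intervalIntegrable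
  simp only [Real.cos_pi_div_two, Real.cos_zero, add_zero, Real.log_one] at h3
  norm_num at h3
  -- comparison
  have hi4 : IntervalIntegrable (fun u => ((Real.sin u ^ 2 * Real.cos u) * (h + Real.sin u ^ 2) ^ (-3/2 : ℝ)
      - (Real.sin u ^ 2 * Real.cos u ^ 2) * (h + Real.sin u ^ 2) ^ (-3/2 : ℝ))) volume 0 (π/2) :=
    (hc1.sub hc2).intervalIntegrable _ _
  have hi5 := hc3.intervalIntegrable (μ := volume)
  have hpt : ∀ u ∈ Set.Icc (0:ℝ) (π/2), 0 ≤ Real.sin u * Real.cos u / (1 + Real.cos u) -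
      ((Real.sin u ^ 2 * Real.cos u) * (h + Real.sin u ^ 2) ^ (-3/2 : ℝ)
      - (Real.sin u ^ 2 * Real.cos u ^ 2) * (h + Real.sin u ^ 2) ^ (-3/2 : ℝ)) ∧
      Real.sin u * Real.cos u / (1 + Real.cos u) -
      ((Real.sin u ^ 2 * Real.cos u) * (h + Real.sin u ^ 2) ^ (-3/2 : ℝ)
      - (Real.sin u ^ 2 * Real.cos u ^ 2) * (h + Real.sin u ^ 2) ^ (-3/2 : ℝ)) ≤ 3/2 * Real.sqrt h := by
    intro u hu
    obtain ⟨y, hy, hyD, -, e3, e5, hys⟩ := rpow_y (KI_pos_base hh u)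
    obtain ⟨h0, h1, h2, h3, h4⟩ := trig_range hu
    rw [e3]
    exact kpt2 hh hy hyD h0 h2 h3 h4
  have hA := int_nonneg' (fun u hu => (hpt u hu).1)
  have hB : ∫ u in (0:ℝ)..(π / 2), (Real.sin u * Real.cos u / (1 + Real.cos u) -
      ((Real.sin u ^ 2 * Real.cos u) * (h + Real.sin u ^ 2) ^ (-3/2 : ℝ)
      - (Real.sin u ^ 2 * Real.cos u ^ 2) * (h + Real.sin u ^ 2) ^ (-3/2 : ℝ))) ≤
      ∫ u in (0:ℝ)..(π / 2), 3/2 * Real.sqrt h :=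
    intervalIntegral.integral_mono_on pi_half_nonneg (hi5.sub hi4)
      (continuous_const.intervalIntegrable _ _) (fun u hu => (hpt u hu).2)
  have hB' : π / 2 * (3/2 * Real.sqrt h) ≤ 2 * (3/2 * Real.sqrt h) := by
    gcongr; linarith [Real.pi_le_four]
  rw [intervalIntegral.integral_sub hi5 hi4, intervalIntegral.integral_sub
    (hc1.intervalIntegrable _ _) (hc2.intervalIntegrable _ _), h2, h3] at hA hB
  simp only [intervalIntegral.integral_const, sub_zero, smul_eq_mul] at hB
  have hKdef : KK h = ∫ u in (0:ℝ)..(π/2), (Real.sin u ^ 2 * Real.cos u ^ 2) * (h + Real.sin u ^ 2) ^ (-3/2 : ℝ) := rfl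
  rw [← hKdef] at hA hB
  have hy1 : y ≤ 1 := yh1 hh hy hyD
  have hyl : 1 - y ≤ h := yh2 hh hy hyD
  have hq := Real.sq_sqrt (show 0 ≤ h + 1 by linarith)
  have hq0 := Real.sqrt_nonneg (h + 1)
  have hq1 : 1 ≤ Real.sqrt (h + 1) := Real.one_le_sqrt.2 (by linarith)
  have hq2 : Real.sqrt (h + 1) ≤ 1 + h := by nlinarith
  have hl1 : Real.log 2 ≤ Real.log (1 + Real.sqrt (h + 1)) := Real.log_le_log (by norm_num) (by linarith)
  have hl2 : Real.log (1 + Real.sqrt (h + 1)) - Real.log 2 ≤ h / 2 := by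
    rw [← Real.log_div (by positivity) (by norm_num)]
    refine (Real.log_le_sub_one_of_pos (by positivity)).trans ?_
    linarith
  have hle := le_sqrt_self hh hh1
  rw [abs_le]
  constructor <;> linarith

/-- the modulus variable -/
def hm (a p : ℝ × ℝ) : ℝ := ((p.1 - a.1) ^ 2 + (p.2 - a.2) ^ 2) / (4 * p.1 * a.1)
/-- single ring stream function -/
def ph (a p : ℝ × ℝ) : ℝ := Real.sqrt (p.1 * a.1) * KK (hm a p)
/-- `∂_r φ / r` -/
def gR (a p : ℝ × ℝ) : ℝ := Real.sqrt (p.1 * a.1) / p.1 *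
  (KK (hm a p) / (2 * p.1) + KK1 (hm a p) * ((p.1 ^ 2 - a.1 ^ 2 - (p.2 - a.2) ^ 2) / (4 * p.1 ^ 2 * a.1)))
/-- `∂_z φ / r` -/
def gZ (a p : ℝ × ℝ) : ℝ := Real.sqrt (p.1 * a.1) / p.1 *
  (KK1 (hm a p) * ((p.2 - a.2) / (2 * p.1 * a.1)))

lemma hm_num_pos {a p : ℝ × ℝ} (h : p ≠ a) : 0 < (p.1 - a.1) ^ 2 + (p.2 - a.2) ^ 2 := by
  by_contra hc
  push Not at hc
  have h1 : (p.1 - a.1) ^ 2 = 0 := by nlinarith [sq_nonneg (p.1 - a.1), sq_nonneg (p.2 - a.2)]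
  have h2 : (p.2 - a.2) ^ 2 = 0 := by nlinarith [sq_nonneg (p.1 - a.1), sq_nonneg (p.2 - a.2)]
  apply h
  ext
  · have := pow_eq_zero_iff (two_ne_zero) |>.1 h1; linarith
  · have := pow_eq_zero_iff (two_ne_zero) |>.1 h2; linarith

lemma hm_pos {a p : ℝ × ℝ} (ha : 0 < a.1) (hp : 0 < p.1) (h : p ≠ a) : 0 < hm a p := by
  have := hm_num_pos h
  unfold hm
  positivity

lemma Avec_eq {a p : ℝ × ℝ} (ha : 0 < a.1) (hp : 0 < p.1) (h : p ≠ a) :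
    p.1 * Avec a p = ph a p := by
  have hh := hm_pos ha hp h
  have hsq : 0 < Real.sqrt (p.1 * a.1) := Real.sqrt_pos.2 (by positivity)
  have hss := Real.mul_self_sqrt (show 0 ≤ p.1 * a.1 by positivity)
  set g : ℝ → ℝ := fun u => (Real.cos u ^ 2 - Real.sin u ^ 2) * (hm a p + Real.sin u ^ 2) ^ (-1/2 : ℝ) with hg
  have hgc : Continuous g := KI_cont_integrand csc _ hh
  have e1 : ∀ u : ℝ, Real.cos (2 * u) / Real.sqrt (a.1 ^ 2 + p.1 ^ 2 + (p.2 - a.2) ^ 2 - 2 * a.1 * p.1 * Real.cos (2 * u))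
      = (2 * Real.sqrt (p.1 * a.1))⁻¹ * g u := by
    intro u
    obtain ⟨y, hy, hyD, e1, -, -, hys⟩ := rpow_y (KI_pos_base hh u)
    have ec : Real.cos (2 * u) = Real.cos u ^ 2 - Real.sin u ^ 2 := Real.cos_two_mul' u
    have e2 : a.1 ^ 2 + p.1 ^ 2 + (p.2 - a.2) ^ 2 - 2 * a.1 * p.1 * Real.cos (2 * u)
        = (2 * Real.sqrt (p.1 * a.1)) ^ 2 * (hm a p + Real.sin u ^ 2) := by
      have : (2 * Real.sqrt (p.1 * a.1)) ^ 2 = 4 * (p.1 * a.1) := by linear_combination 4 * hss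
      rw [this, mul_add]
      unfold hm
      have h3 : 4 * (p.1 * a.1) * (((p.1 - a.1) ^ 2 + (p.2 - a.2) ^ 2) / (4 * p.1 * a.1)) = (p.1 - a.1) ^ 2 + (p.2 - a.2) ^ 2 := by
        field_simp
      rw [h3, ec]
      have := Real.sin_sq_add_cos_sq u
      linear_combination (-2 * a.1 * p.1) * this
    rw [e2, Real.sqrt_mul (by positivity), Real.sqrt_sq (by positivity), hg]
    simp only
    rw [e1, ec]
    have hw : Real.sqrt (hm a p + Real.sin u ^ 2) = 1 / y := by field_simp; linarith
    rw [hw]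
    field_simp
  have e2 : ∫ t in (0:ℝ)..(2 * π), Real.cos t / Real.sqrt (a.1 ^ 2 + p.1 ^ 2 + (p.2 - a.2) ^ 2 - 2 * a.1 * p.1 * Real.cos t)
      = 2 * ∫ u in (0:ℝ)..π, (2 * Real.sqrt (p.1 * a.1))⁻¹ * g u := by
    have := intervalIntegral.integral_comp_mul_left (a := 0) (b := π) (fun t => Real.cos t / Real.sqrt (a.1 ^ 2 + p.1 ^ 2 + (p.2 - a.2) ^ 2 - 2 * a.1 * p.1 * Real.cos t)) (c := 2) two_ne_zero
    simp only [e1, mul_zero, smul_eq_mul] at this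
    rw [this]; ring
  have e3 : ∫ u in (0:ℝ)..π, g u = 2 * ∫ u in (0:ℝ)..(π/2), g u := by
    rw [← intervalIntegral.integral_add_adjacent_intervals (hgc.intervalIntegrable 0 (π/2)) (hgc.intervalIntegrable (π/2) π)]
    have := intervalIntegral.integral_comp_sub_left (a := 0) (b := π/2) g π
    have e : ∀ u, g (π - u) = g u := by
      intro u; simp only [hg, Real.cos_pi_sub, Real.sin_pi_sub]; ring_nf
    simp only [e] at this
    rw [show π - π/2 = π/2 by ring, sub_zero] at this
    rw [← this]; ring
  unfold Avec ph
  rw [e2, intervalIntegral.integral_const_mul, e3, KK_eq_cos hh]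
  have e4 : KI (fun u => Real.cos u ^ 2 - Real.sin u ^ 2) (-1/2) (hm a p) = ∫ u in (0:ℝ)..(π/2), g u := rfl
  rw [e4]
  generalize (∫ u in (0:ℝ)..(π/2), g u) = I
  field_simp
  linear_combination (-I) * hss

/-- the linear functional `(x,y)·` -/
def L2 (x y : ℝ) : ℝ × ℝ →L[ℝ] ℝ := x • ContinuousLinearMap.fst ℝ ℝ ℝ + y • ContinuousLinearMap.snd ℝ ℝ ℝ

@[simp] lemma L2_apply (x y : ℝ) (v : ℝ × ℝ) : L2 x y v = x * v.1 + y * v.2 := by simp [L2]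

lemma L2_ext {T S : ℝ × ℝ →L[ℝ] ℝ} (h1 : T (1, 0) = S (1, 0)) (h2 : T (0, 1) = S (0, 1)) : T = S := by
  ext <;> simp [h1, h2]

lemma hf_fst (p : ℝ × ℝ) : HasFDerivAt (fun q : ℝ × ℝ => q.1) (L2 1 0) p := by
  refine (hasFDerivAt_fst (𝕜 := ℝ) (E := ℝ) (F := ℝ)).congr_fderiv ?_
  apply L2_ext <;> simp
lemma hf_snd (p : ℝ × ℝ) : HasFDerivAt (fun q : ℝ × ℝ => q.2) (L2 0 1) p := by
  refine (hasFDerivAt_snd (𝕜 := ℝ) (E := ℝ) (F := ℝ)).congr_fderiv ?_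
  apply L2_ext <;> simp

lemma hf_inv {f : ℝ × ℝ → ℝ} {x y : ℝ} {p : ℝ × ℝ} (hf : HasFDerivAt f (L2 x y) p) (h : f p ≠ 0) :
    HasFDerivAt (fun q => (f q)⁻¹) (L2 (-x / f p ^ 2) (-y / f p ^ 2)) p := by
  refine ((hasDerivAt_inv h).comp_hasFDerivAt p hf).congr_fderiv ?_
  apply L2_ext <;> simp <;> field_simp

lemma hf_mul {f g : ℝ × ℝ → ℝ} {x y z w : ℝ} {p : ℝ × ℝ} (hf : HasFDerivAt f (L2 x y) p) (hg : HasFDerivAt g (L2 z w) p) :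
    HasFDerivAt (fun q => f q * g q) (L2 (x * g p + f p * z) (y * g p + f p * w)) p := by
  refine (hf.mul hg).congr_fderiv ?_
  apply L2_ext <;> simp <;> ring

lemma hf_add {f g : ℝ × ℝ → ℝ} {x y z w : ℝ} {p : ℝ × ℝ} (hf : HasFDerivAt f (L2 x y) p) (hg : HasFDerivAt g (L2 z w) p) :
    HasFDerivAt (fun q => f q + g q) (L2 (x + z) (y + w)) p := by
  refine (hf.add hg).congr_fderiv ?_
  apply L2_ext <;> simp

lemma hf_sub {f g : ℝ × ℝ → ℝ} {x y z w : ℝ} {p : ℝ × ℝ} (hf : HasFDerivAt f (L2 x y) p) (hg : HasFDerivAt g (L2 z w) p) :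
    HasFDerivAt (fun q => f q - g q) (L2 (x - z) (y - w)) p := by
  refine (hf.sub hg).congr_fderiv ?_
  apply L2_ext <;> simp

lemma hf_comp {F : ℝ → ℝ} {F' : ℝ} {f : ℝ × ℝ → ℝ} {x y : ℝ} {p : ℝ × ℝ} (hF : HasDerivAt F F' (f p))
    (hf : HasFDerivAt f (L2 x y) p) :
    HasFDerivAt (fun q => F (f q)) (L2 (F' * x) (F' * y)) p := by
  refine (hF.comp_hasFDerivAt p hf).congr_fderiv ?_
  apply L2_ext <;> simp

lemma hf_const (c : ℝ) (p : ℝ × ℝ) : HasFDerivAt (fun _ : ℝ × ℝ => c) (L2 0 0) p := by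
  refine (hasFDerivAt_const c p).congr_fderiv ?_
  apply L2_ext <;> simp

lemma hf_congr {f g : ℝ × ℝ → ℝ} {x y z w : ℝ} {p : ℝ × ℝ} (hf : HasFDerivAt f (L2 x y) p)
    (hfg : ∀ q, g q = f q) (h1 : x = z) (h2 : y = w) : HasFDerivAt g (L2 z w) p := by
  subst h1 h2
  rwa [funext hfg]

lemma hf_sqd (p : ℝ × ℝ) (a : ℝ × ℝ) : HasFDerivAt (fun q : ℝ × ℝ => (q.1 - a.1) ^ 2 + (q.2 - a.2) ^ 2)
    (L2 (2 * (p.1 - a.1)) (2 * (p.2 - a.2))) p := by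
  have h1 := hf_sub (hf_fst p) (hf_const a.1 p)
  have h2 := hf_sub (hf_snd p) (hf_const a.2 p)
  exact hf_congr (hf_add (hf_mul h1 h1) (hf_mul h2 h2)) (fun q => by ring) (by ring) (by ring)

/-- `∂_r h` -/
def hmA (a p : ℝ × ℝ) : ℝ := (p.1 ^ 2 - a.1 ^ 2 - (p.2 - a.2) ^ 2) / (4 * p.1 ^ 2 * a.1)
/-- `∂_z h` -/
def hmB (a p : ℝ × ℝ) : ℝ := (p.2 - a.2) / (2 * p.1 * a.1)
/-- `√(rR)/r` -/
def sg (a p : ℝ × ℝ) : ℝ := Real.sqrt (p.1 * a.1) / p.1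

lemma gR_eq (a p : ℝ × ℝ) : gR a p = sg a p * (KK (hm a p) / (2 * p.1) + KK1 (hm a p) * hmA a p) := rfl
lemma gZ_eq (a p : ℝ × ℝ) : gZ a p = sg a p * (KK1 (hm a p) * hmB a p) := rfl

lemma hm_hasFDerivAt {a p : ℝ × ℝ} (ha : 0 < a.1) (hp : 0 < p.1) :
    HasFDerivAt (hm a) (L2 (hmA a p) (hmB a p)) p := by
  have h1 := hf_mul (hf_sqd p a) (hf_inv (hf_mul (hf_const (4 * a.1) p) (hf_fst p)) (by positivity))
  refine hf_congr h1 (fun q => ?_) ?_ ?_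
  · simp only [hm, div_eq_mul_inv]; ring_nf
  · simp only [hmA]; field_simp; ring
  · simp only [hmB]; field_simp; ring

lemma hmA_hasFDerivAt {a p : ℝ × ℝ} (ha : 0 < a.1) (hp : 0 < p.1) :
    ∃ w, HasFDerivAt (hmA a) (L2 (1 / (2 * p.1 * a.1) - 2 * hmA a p / p.1) w) p := by
  have h2 := hf_sub (hf_snd p) (hf_const a.2 p)
  have h1 := hf_mul (hf_sub (hf_sub (hf_mul (hf_fst p) (hf_fst p)) (hf_const (a.1 ^ 2) p)) (hf_mul h2 h2))
    (hf_inv (hf_mul (hf_const (4 * a.1) p) (hf_mul (hf_fst p) (hf_fst p))) (by positivity))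
  refine ⟨_, hf_congr h1 (fun q => ?_) ?_ rfl⟩
  · simp only [hmA, div_eq_mul_inv]; ring_nf
  · simp only [hmA]; field_simp; ring

lemma hmB_hasFDerivAt {a p : ℝ × ℝ} (ha : 0 < a.1) (hp : 0 < p.1) :
    ∃ w, HasFDerivAt (hmB a) (L2 w (1 / (2 * p.1 * a.1))) p := by
  have h2 := hf_sub (hf_snd p) (hf_const a.2 p)
  have h1 := hf_mul h2 (hf_inv (hf_mul (hf_const (2 * a.1) p) (hf_fst p)) (by positivity))
  refine ⟨_, hf_congr h1 (fun q => ?_) rfl ?_⟩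
  · simp only [hmB, div_eq_mul_inv]; ring_nf
  · field_simp; ring

lemma sq_hasFDerivAt {a p : ℝ × ℝ} (ha : 0 < a.1) (hp : 0 < p.1) :
    HasFDerivAt (fun q : ℝ × ℝ => Real.sqrt (q.1 * a.1)) (L2 (Real.sqrt (p.1 * a.1) / (2 * p.1)) 0) p := by
  have hsq : 0 < Real.sqrt (p.1 * a.1) := Real.sqrt_pos.2 (by positivity)
  have hss := Real.mul_self_sqrt (show 0 ≤ p.1 * a.1 by positivity)
  have h1 := hf_comp (Real.hasDerivAt_sqrt (show p.1 * a.1 ≠ 0 by positivity)) (hf_mul (hf_fst p) (hf_const a.1 p))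
  refine hf_congr h1 (fun q => rfl) ?_ (by simp)
  field_simp
  linear_combination -hss

lemma sg_hasFDerivAt {a p : ℝ × ℝ} (ha : 0 < a.1) (hp : 0 < p.1) :
    HasFDerivAt (sg a) (L2 (-(sg a p) / (2 * p.1)) 0) p := by
  have h1 := hf_mul (sq_hasFDerivAt ha hp) (hf_inv (hf_fst p) hp.ne')
  refine hf_congr h1 (fun q => by simp [sg, div_eq_mul_inv]) ?_ (by simp)
  simp only [sg]
  field_simp
  ring

lemma ph_hasFDerivAt {a p : ℝ × ℝ} (ha : 0 < a.1) (hp : 0 < p.1) (h : p ≠ a) :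
    HasFDerivAt (ph a) (L2 (p.1 * gR a p) (p.1 * gZ a p)) p := by
  have h1 := hf_mul (sq_hasFDerivAt ha hp) (hf_comp (KK_hasDerivAt (hm_pos ha hp h)) (hm_hasFDerivAt ha hp))
  refine hf_congr h1 (fun q => rfl) ?_ ?_
  · simp only [gR_eq, sg]; field_simp
  · simp only [gZ_eq, sg]; field_simp; ring

lemma hm_ident {a p : ℝ × ℝ} (ha : 0 < a.1) (hp : 0 < p.1) :
    hmA a p ^ 2 + hmB a p ^ 2 = hm a p * (1 + hm a p) / p.1 ^ 2 := by
  simp only [hmA, hmB, hm]; field_simp; ring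

lemma hm_ident2 {a p : ℝ × ℝ} (ha : 0 < a.1) (hp : 0 < p.1) :
    1 / (p.1 * a.1) - 2 * hmA a p / p.1 = (1 + 2 * hm a p) / p.1 ^ 2 := by
  simp only [hmA, hm]; field_simp; ring

lemma g_div {a p : ℝ × ℝ} (ha : 0 < a.1) (hp : 0 < p.1) (h : p ≠ a) :
    ∃ x y z, HasFDerivAt (gR a) (L2 x y) p ∧ HasFDerivAt (gZ a) (L2 z (-x)) p := by
  obtain ⟨w1, hA⟩ := hmA_hasFDerivAt ha hp
  obtain ⟨w2, hB⟩ := hmB_hasFDerivAt ha hp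
  have hh := hm_pos ha hp h
  have hH := hm_hasFDerivAt ha hp
  have hK := hf_comp (KK_hasDerivAt hh) hH
  have hK1 := hf_comp (KK1_hasDerivAt hh) hH
  have hS := sg_hasFDerivAt ha hp
  have h1 := hf_mul hS (hf_add (hf_mul hK (hf_inv (hf_mul (hf_const 2 p) (hf_fst p)) (by positivity))) (hf_mul hK1 hA))
  have h2 := hf_mul hS (hf_mul hK1 hB)
  refine ⟨_, _, _, hf_congr h1 (fun q => ?_) rfl rfl, hf_congr h2 (fun q => ?_) rfl ?_⟩
  · simp only [gR_eq, div_eq_mul_inv]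
  · simp only [gZ_eq]
  · have ode := KK_ode hh
    have i1 := hm_ident ha hp
    have i2 := hm_ident2 ha hp
    have ode' : KK2 (hm a p) * (hmA a p ^ 2 + hmB a p ^ 2) + (1 / (p.1 * a.1) - 2 * hmA a p / p.1) * KK1 (hm a p) = 3/4 * KK (hm a p) / p.1 ^ 2 := by
      rw [i1, i2, ← ode]; ring
    generalize KK2 (hm a p) = k2 at *
    generalize KK1 (hm a p) = k1 at *
    generalize KK (hm a p) = k at *
    generalize hmA a p = A at *
    generalize hmB a p = B at *
    generalize sg a p = s at *
    clear h1 h2 hS hK hK1 hH hA hB ode i1 i2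
    field_simp at ode' ⊢
    linear_combination s * ode'

lemma contDiffOn_one_of_hasDerivAt {f f' : ℝ → ℝ} (h : ∀ x ∈ Set.Ioi (0:ℝ), HasDerivAt f (f' x) x)
    (hc : ContinuousOn f' (Set.Ioi 0)) : ContDiffOn ℝ 1 f (Set.Ioi 0) := by
  rw [show (1 : WithTop ℕ∞) = 0 + 1 by simp, contDiffOn_succ_iff_deriv_of_isOpen isOpen_Ioi]
  refine ⟨fun x hx => (h x hx).differentiableAt.differentiableWithinAt, by simp, ?_⟩
  rw [contDiffOn_zero]
  exact hc.congr fun x hx => (h x hx).deriv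

lemma KK1_continuousOn : ContinuousOn KK1 (Set.Ioi 0) :=
  fun x hx => (KK1_hasDerivAt hx).continuousAt.continuousWithinAt

lemma KK_contDiffAt {h : ℝ} (hh : 0 < h) : ContDiffAt ℝ 1 KK h :=
  (contDiffOn_one_of_hasDerivAt (fun _ hx => KK_hasDerivAt hx) KK1_continuousOn).contDiffAt
    (isOpen_Ioi.mem_nhds hh)

lemma KK1_contDiffAt {h : ℝ} (hh : 0 < h) : ContDiffAt ℝ 1 KK1 h :=
  (contDiffOn_one_of_hasDerivAt (fun _ hx => KK1_hasDerivAt hx) KK2_continuousOn).contDiffAt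
    (isOpen_Ioi.mem_nhds hh)

lemma hm_contDiffAt {a p : ℝ × ℝ} (ha : 0 < a.1) (hp : 0 < p.1) : ContDiffAt ℝ 1 (hm a) p := by
  unfold hm
  refine ContDiffAt.div (by fun_prop) (by fun_prop) (by positivity)

lemma sqrt_contDiffAt' {a p : ℝ × ℝ} (ha : 0 < a.1) (hp : 0 < p.1) :
    ContDiffAt ℝ 1 (fun q : ℝ × ℝ => Real.sqrt (q.1 * a.1)) p := by
  refine ContDiffAt.sqrt (by fun_prop) (by positivity)

lemma ph_contDiffAt {a p : ℝ × ℝ} (ha : 0 < a.1) (hp : 0 < p.1) (h : p ≠ a) : ContDiffAt ℝ 1 (ph a) p :=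
  (sqrt_contDiffAt' ha hp).mul ((KK_contDiffAt (hm_pos ha hp h)).comp p (hm_contDiffAt ha hp))

lemma gR_contDiffAt {a p : ℝ × ℝ} (ha : 0 < a.1) (hp : 0 < p.1) (h : p ≠ a) : ContDiffAt ℝ 1 (gR a) p := by
  have h1 : ContDiffAt ℝ 1 (fun q => KK (hm a q)) p :=
    (KK_contDiffAt (hm_pos ha hp h)).comp p (hm_contDiffAt ha hp)
  have h2 : ContDiffAt ℝ 1 (fun q => KK1 (hm a q)) p :=
    (KK1_contDiffAt (hm_pos ha hp h)).comp p (hm_contDiffAt ha hp)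
  unfold gR
  refine ContDiffAt.mul (ContDiffAt.div (sqrt_contDiffAt' ha hp) (by fun_prop) hp.ne') ?_
  refine ContDiffAt.add (ContDiffAt.div h1 (by fun_prop) (by positivity)) (ContDiffAt.mul h2 ?_)
  refine ContDiffAt.div (by fun_prop) (by fun_prop) (by positivity)

lemma gZ_contDiffAt {a p : ℝ × ℝ} (ha : 0 < a.1) (hp : 0 < p.1) (h : p ≠ a) : ContDiffAt ℝ 1 (gZ a) p := by
  have h2 : ContDiffAt ℝ 1 (fun q => KK1 (hm a q)) p :=
    (KK1_contDiffAt (hm_pos ha hp h)).comp p (hm_contDiffAt ha hp)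
  unfold gZ
  refine ContDiffAt.mul (ContDiffAt.div (sqrt_contDiffAt' ha hp) (by fun_prop) hp.ne') ?_
  refine ContDiffAt.mul h2 ?_
  refine ContDiffAt.div (by fun_prop) (by fun_prop) (by positivity)

lemma intg_cpt {K : Set (ℝ × ℝ)} {f : ℝ × ℝ → ℝ} (hK : IsCompact K) (hf : ContinuousOn f K)
    (h0 : ∀ p, p ∉ K → f p = 0) : Integrable f := by
  rw [← integrableOn_iff_integrable_of_support_subset (s := K)]
  · exact hf.integrableOn_compact hK
  · intro p hp
    by_contra hc
    exact hp (h0 p hc)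

/-- Integration by parts against a compactly supported `C¹` test function. -/
lemma ibp {U : Set (ℝ × ℝ)} (hU : IsOpen U) {V1 V2 X D : ℝ × ℝ → ℝ}
    (hV1 : ContDiffOn ℝ 1 V1 U) (hV2 : ContDiffOn ℝ 1 V2 U)
    (hD : ∀ p ∈ U, fderiv ℝ V1 p (1, 0) + fderiv ℝ V2 p (0, 1) = D p)
    (hX : ContDiff ℝ 1 X) (hXc : HasCompactSupport X) (hXU : tsupport X ⊆ U) :
    Integrable (fun p => X p * D p) ∧
    Integrable (fun p => fderiv ℝ X p (1, 0) * V1 p + fderiv ℝ X p (0, 1) * V2 p) ∧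
    ∫ p, X p * D p = - ∫ p, (fderiv ℝ X p (1, 0) * V1 p + fderiv ℝ X p (0, 1) * V2 p) := by
  have hK : IsCompact (tsupport X) := hXc
  have hX0 : ∀ p, p ∉ tsupport X → X p = 0 := fun p hp => image_eq_zero_of_notMem_tsupport hp
  have hX1 : ∀ p, p ∉ tsupport X → fderiv ℝ X p = 0 := fun p hp => fderiv_of_notMem_tsupport ℝ hp
  have hXd : Continuous (fderiv ℝ X) := hX.continuous_fderiv (by norm_num)
  have key : ∀ V : ℝ × ℝ → ℝ, ContDiffOn ℝ 1 V U → ∀ v : ℝ × ℝ,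
      Integrable (fun p => fderiv ℝ X p v * V p) ∧ Integrable (fun p => X p * fderiv ℝ V p v) ∧
      ∫ p, X p * fderiv ℝ V p v = - ∫ p, fderiv ℝ X p v * V p := by
    intro V hV v
    have hVd : ContinuousOn (fun p => fderiv ℝ V p v) U :=
      (hV.continuousOn_fderiv_of_isOpen hU (by norm_num)).clm_apply continuousOn_const
    have i1 : Integrable (fun p => fderiv ℝ X p v * V p) := by
      refine intg_cpt hK (ContinuousOn.mul ?_ (hV.continuousOn.mono hXU)) (fun p hp => by simp [hX1 p hp])
      exact (hXd.clm_apply continuous_const).continuousOn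
    have i2 : Integrable (fun p => X p * fderiv ℝ V p v) :=
      intg_cpt hK (hX.continuous.continuousOn.mul (hVd.mono hXU)) (fun p hp => by simp [hX0 p hp])
    have i3 : Integrable (fun p => X p * V p) :=
      intg_cpt hK (hX.continuous.continuousOn.mul (hV.continuousOn.mono hXU)) (fun p hp => by simp [hX0 p hp])
    refine ⟨i1, i2, integral_mul_fderiv_eq_neg_fderiv_mul_of_integrable i1 i2 i3 ?_ ?_⟩
    · exact fun p _ => (hX.differentiable (by norm_num)) p
    · exact fun p hp => (hV.differentiableOn (by norm_num)).differentiableAt (hU.mem_nhds (hXU hp))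
  obtain ⟨a1, a2, a3⟩ := key V1 hV1 (1, 0)
  obtain ⟨b1, b2, b3⟩ := key V2 hV2 (0, 1)
  have e : (fun p => X p * D p) = fun p => X p * fderiv ℝ V1 p (1, 0) + X p * fderiv ℝ V2 p (0, 1) := by
    funext p
    by_cases hp : p ∈ tsupport X
    · rw [← hD p (hXU hp)]; ring
    · simp [hX0 p hp]
  refine ⟨?_, a1.add b1, ?_⟩
  · rw [e]; exact a2.add b2
  · rw [e, integral_add a2 b2, integral_add a1 b1, a3, b3]; ring

/-- squared Euclidean distance -/
def qd (a p : ℝ × ℝ) : ℝ := (p.1 - a.1) ^ 2 + (p.2 - a.2) ^ 2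

lemma dE_eq (p a : ℝ × ℝ) : dE p a = Real.sqrt (qd a p) := rfl
lemma qd_nonneg (a p : ℝ × ℝ) : 0 ≤ qd a p := by unfold qd; positivity
lemma qd_pos {a p : ℝ × ℝ} (h : p ≠ a) : 0 < qd a p := hm_num_pos h
lemma qd_self (a : ℝ × ℝ) : qd a a = 0 := by simp [qd]
lemma qd_cont (a : ℝ × ℝ) : Continuous (qd a) := by unfold qd; fun_prop

/-- the transition function -/
def TT : ℝ → ℝ := Real.smoothTransition

lemma TT_contDiff : ContDiff ℝ 1 TT := Real.smoothTransition.contDiff (n := 1)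
lemma TT_hasDerivAt (x : ℝ) : HasDerivAt TT (deriv TT x) x :=
  ((TT_contDiff.differentiable (by norm_num)) x).hasDerivAt
lemma TT_dcont : Continuous (deriv TT) := TT_contDiff.continuous_deriv (by norm_num)
lemma TT_dnonneg (x : ℝ) : 0 ≤ deriv TT x := Real.smoothTransition.monotone.deriv_nonneg
lemma TT_zero {x : ℝ} (h : x ≤ 0) : TT x = 0 := Real.smoothTransition.zero_of_nonpos h
lemma TT_one {x : ℝ} (h : 1 ≤ x) : TT x = 1 := Real.smoothTransition.one_of_one_le h
lemma TT_nonneg (x : ℝ) : 0 ≤ TT x := Real.smoothTransition.nonneg x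
lemma TT_le_one (x : ℝ) : TT x ≤ 1 := Real.smoothTransition.le_one x
lemma TT_dzero {x : ℝ} (h : x ≤ 0) : deriv TT x = 0 := by
  refine IsLocalMin.deriv_eq_zero (Eventually.of_forall fun y => ?_)
  rw [TT_zero h]; exact TT_nonneg y
lemma TT_done {x : ℝ} (h : 1 ≤ x) : deriv TT x = 0 := by
  refine IsLocalMax.deriv_eq_zero (Eventually.of_forall fun y => ?_)
  rw [TT_one h]; exact TT_le_one y

/-- radial cut-off vanishing on `B(a,s)`, one off `B(a,t)` -/
def chi (a : ℝ × ℝ) (s t : ℝ) (p : ℝ × ℝ) : ℝ := TT ((qd a p - s ^ 2) / (t ^ 2 - s ^ 2))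
/-- radial derivative weight of `chi` -/
def mm (a : ℝ × ℝ) (s t : ℝ) (p : ℝ × ℝ) : ℝ :=
  deriv TT ((qd a p - s ^ 2) / (t ^ 2 - s ^ 2)) * (2 / (t ^ 2 - s ^ 2))

lemma st_pos {s t : ℝ} (hs : 0 < s) (hst : s < t) : 0 < t ^ 2 - s ^ 2 := by nlinarith

lemma chi_contDiff (a : ℝ × ℝ) (s t : ℝ) : ContDiff ℝ 1 (chi a s t) := by
  refine TT_contDiff.comp ?_
  unfold qd
  fun_prop

lemma chi_hasFDerivAt (a : ℝ × ℝ) (s t : ℝ) (p : ℝ × ℝ) :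
    HasFDerivAt (chi a s t) (L2 (mm a s t p * (p.1 - a.1)) (mm a s t p * (p.2 - a.2))) p := by
  have h1 := hf_mul (hf_sub (hf_sqd p a) (hf_const (s ^ 2) p)) (hf_const (t ^ 2 - s ^ 2)⁻¹ p)
  have h2 := hf_comp (f := fun q : ℝ × ℝ => ((q.1 - a.1) ^ 2 + (q.2 - a.2) ^ 2 - s ^ 2) * (t ^ 2 - s ^ 2)⁻¹) (TT_hasDerivAt _) h1
  refine hf_congr h2 (fun q => by simp [chi, qd, div_eq_mul_inv]) ?_ ?_
  · simp only [mm, qd, div_eq_mul_inv]; ring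
  · simp only [mm, qd, div_eq_mul_inv]; ring

lemma chi_fderiv1 (a : ℝ × ℝ) (s t : ℝ) (p : ℝ × ℝ) :
    fderiv ℝ (chi a s t) p (1, 0) = mm a s t p * (p.1 - a.1) := by
  rw [(chi_hasFDerivAt a s t p).fderiv]; simp
lemma chi_fderiv2 (a : ℝ × ℝ) (s t : ℝ) (p : ℝ × ℝ) :
    fderiv ℝ (chi a s t) p (0, 1) = mm a s t p * (p.2 - a.2) := by
  rw [(chi_hasFDerivAt a s t p).fderiv]; simp

lemma chi_nonneg (a : ℝ × ℝ) (s t : ℝ) (p : ℝ × ℝ) : 0 ≤ chi a s t p := TT_nonneg _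
lemma chi_le_one (a : ℝ × ℝ) (s t : ℝ) (p : ℝ × ℝ) : chi a s t p ≤ 1 := TT_le_one _
lemma chi_zero {a : ℝ × ℝ} {s t : ℝ} (hs : 0 < s) (hst : s < t) {p : ℝ × ℝ} (h : qd a p ≤ s ^ 2) :
    chi a s t p = 0 := by
  have := st_pos hs hst
  exact TT_zero (div_nonpos_of_nonpos_of_nonneg (by linarith) this.le)
lemma chi_one {a : ℝ × ℝ} {s t : ℝ} (hs : 0 < s) (hst : s < t) {p : ℝ × ℝ} (h : t ^ 2 ≤ qd a p) :
    chi a s t p = 1 := by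
  have := st_pos hs hst
  exact TT_one (by rw [le_div_iff₀ this]; linarith)
lemma mm_nonneg {a : ℝ × ℝ} {s t : ℝ} (hs : 0 < s) (hst : s < t) (p : ℝ × ℝ) : 0 ≤ mm a s t p := by
  have := st_pos hs hst
  have h2 := TT_dnonneg ((qd a p - s ^ 2) / (t ^ 2 - s ^ 2))
  unfold mm; positivity
lemma mm_zero_in {a : ℝ × ℝ} {s t : ℝ} (hs : 0 < s) (hst : s < t) {p : ℝ × ℝ} (h : qd a p ≤ s ^ 2) :
    mm a s t p = 0 := by
  have := st_pos hs hst
  unfold mm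
  rw [TT_dzero (div_nonpos_of_nonpos_of_nonneg (by linarith) this.le), zero_mul]
lemma mm_zero_out {a : ℝ × ℝ} {s t : ℝ} (hs : 0 < s) (hst : s < t) {p : ℝ × ℝ} (h : t ^ 2 ≤ qd a p) :
    mm a s t p = 0 := by
  have := st_pos hs hst
  unfold mm
  rw [TT_done (by rw [le_div_iff₀ this]; linarith), zero_mul]
lemma mm_cont (a : ℝ × ℝ) (s t : ℝ) : Continuous (mm a s t) := by
  have := qd_cont a
  unfold mm
  refine Continuous.mul (TT_dcont.comp ?_) continuous_const
  fun_prop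

/-- closed annulus -/
def ann (a : ℝ × ℝ) (s t : ℝ) : Set (ℝ × ℝ) := {p | s ^ 2 ≤ qd a p ∧ qd a p ≤ t ^ 2}

lemma disc_compact (a : ℝ × ℝ) (t : ℝ) : IsCompact {p | qd a p ≤ t ^ 2} := by
  refine Metric.isCompact_of_isClosed_isBounded (isClosed_le (qd_cont a) continuous_const) ?_
  refine (Metric.isBounded_closedBall (x := a) (r := |t|)).subset fun p hp => ?_
  simp only [Set.mem_ofPred_eq, qd] at hp
  rw [Metric.mem_closedBall, Prod.dist_eq, max_le_iff, Real.dist_eq, Real.dist_eq]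
  constructor <;> apply sq_le_sq.1 <;> nlinarith [sq_nonneg (p.1 - a.1), sq_nonneg (p.2 - a.2)]

lemma ann_compact (a : ℝ × ℝ) (s t : ℝ) : IsCompact (ann a s t) := by
  refine (disc_compact a t).of_isClosed_subset ?_ fun p hp => hp.2
  exact (isClosed_le continuous_const (qd_cont a)).inter (isClosed_le (qd_cont a) continuous_const)

lemma mm_zero_ann {a : ℝ × ℝ} {s t : ℝ} (hs : 0 < s) (hst : s < t) {p : ℝ × ℝ} (h : p ∉ ann a s t) :
    mm a s t p = 0 := by
  by_cases h1 : s ^ 2 ≤ qd a p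
  · exact mm_zero_out hs hst (not_lt.1 fun hc => h ⟨h1, hc.le⟩)
  · exact mm_zero_in hs hst (not_le.1 h1).le

lemma mm_mul_integrable {a : ℝ × ℝ} {s t : ℝ} (hs : 0 < s) (hst : s < t) {f : ℝ × ℝ → ℝ}
    (hf : ContinuousOn f (ann a s t)) : Integrable (fun p => mm a s t p * f p) :=
  intg_cpt (ann_compact a s t) ((mm_cont a s t).continuousOn.mul hf)
    (fun p hp => by rw [mm_zero_ann hs hst hp, zero_mul])

lemma mm_integrable {a : ℝ × ℝ} {s t : ℝ} (hs : 0 < s) (hst : s < t) : Integrable (mm a s t) := by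
  have := mm_mul_integrable (a := a) hs hst (f := fun _ => 1) continuousOn_const
  simpa using this

lemma radial_int {s t : ℝ} (hs : 0 < s) (hst : s < t) :
    ∫ x in Set.Ioi (0:ℝ), x * (deriv TT ((x ^ 2 - s ^ 2) / (t ^ 2 - s ^ 2)) * (2 / (t ^ 2 - s ^ 2))) = 1 := by
  have hD := st_pos hs hst
  have hder : ∀ x : ℝ, HasDerivAt (fun x => TT ((x ^ 2 - s ^ 2) / (t ^ 2 - s ^ 2)))
      (x * (deriv TT ((x ^ 2 - s ^ 2) / (t ^ 2 - s ^ 2)) * (2 / (t ^ 2 - s ^ 2)))) x := by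
    intro x
    have h1 : HasDerivAt (fun x : ℝ => (x ^ 2 - s ^ 2) / (t ^ 2 - s ^ 2)) ((2 * x) / (t ^ 2 - s ^ 2)) x := by
      have := ((hasDerivAt_pow 2 x).sub_const (s ^ 2)).div_const (t ^ 2 - s ^ 2)
      refine this.congr_deriv (by norm_num)
    refine ((TT_hasDerivAt _).comp x h1).congr_deriv ?_
    ring
  have hlim : Tendsto (fun x => TT ((x ^ 2 - s ^ 2) / (t ^ 2 - s ^ 2))) atTop (𝓝 1) := by
    refine tendsto_const_nhds.congr' ?_
    filter_upwards [eventually_ge_atTop t] with x hx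
    rw [TT_one]
    rw [le_div_iff₀ hD]
    nlinarith
  rw [integral_Ioi_of_hasDerivAt_of_nonneg' (fun x _ => hder x) (fun x hx => ?_) hlim]
  · rw [TT_zero]
    · ring
    · refine div_nonpos_of_nonpos_of_nonneg (by nlinarith) hD.le
  · have := TT_dnonneg ((x ^ 2 - s ^ 2) / (t ^ 2 - s ^ 2))
    have hx' : 0 < x := hx
    positivity

lemma mm_integral {a : ℝ × ℝ} {s t : ℝ} (hs : 0 < s) (hst : s < t) : ∫ p, mm a s t p = 2 * π := by
  have e1 : ∫ p, mm a s t p = ∫ p, mm 0 s t p := by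
    rw [← integral_sub_right_eq_self (mm 0 s t) a]
    congr 1; funext p; simp [mm, qd]
  rw [e1, ← integral_comp_polarCoord_symm]
  have e2 : ∀ p : ℝ × ℝ, p.1 • mm 0 s t (polarCoord.symm p) =
      (p.1 * (deriv TT ((p.1 ^ 2 - s ^ 2) / (t ^ 2 - s ^ 2)) * (2 / (t ^ 2 - s ^ 2)))) * (fun _ : ℝ => (1:ℝ)) p.2 := by
    intro p
    have : qd 0 (polarCoord.symm p) = p.1 ^ 2 := by
      simp only [qd, polarCoord_symm_apply, Prod.fst_zero, Prod.snd_zero]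
      linear_combination p.1 ^ 2 * Real.sin_sq_add_cos_sq p.2
    simp only [mm, this, smul_eq_mul, mul_one]
  simp_rw [e2]
  rw [polarCoord_target, Measure.volume_eq_prod, setIntegral_prod_mul
    (f := fun x : ℝ => x * (deriv TT ((x ^ 2 - s ^ 2) / (t ^ 2 - s ^ 2)) * (2 / (t ^ 2 - s ^ 2)))) (g := fun _ : ℝ => (1:ℝ)), radial_int hs hst]
  simp
  rw [max_eq_left (by positivity)]; ring

lemma sqrt_hm {a p : ℝ × ℝ} (ha : 0 < a.1) (hp : 0 < p.1) :
    2 * Real.sqrt (p.1 * a.1) * Real.sqrt (hm a p) = Real.sqrt (qd a p) := by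
  have e : qd a p = (2 * Real.sqrt (p.1 * a.1)) ^ 2 * hm a p := by
    rw [mul_pow, Real.sq_sqrt (by positivity)]
    simp only [qd, hm]; field_simp; ring
  rw [e, Real.sqrt_mul (sq_nonneg (2 * Real.sqrt (p.1 * a.1))), Real.sqrt_sq (by positivity)]

lemma abs_hmA_le {a p : ℝ × ℝ} (ha : 0 < a.1) (hp : 0 < p.1) :
    |hmA a p| ≤ Real.sqrt (hm a p * (1 + hm a p)) / p.1 := by
  have h := hm_ident ha hp
  have h0 : 0 ≤ hm a p := by unfold hm; positivity
  apply abs_le_of_sq_le_sq _ (by positivity)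
  rw [div_pow, Real.sq_sqrt (by positivity)]
  nlinarith [sq_nonneg (hmB a p)]

lemma abs_hmB_le {a p : ℝ × ℝ} (ha : 0 < a.1) (hp : 0 < p.1) :
    |hmB a p| ≤ Real.sqrt (hm a p * (1 + hm a p)) / p.1 := by
  have h := hm_ident ha hp
  have h0 : 0 ≤ hm a p := by unfold hm; positivity
  apply abs_le_of_sq_le_sq _ (by positivity)
  rw [div_pow, Real.sq_sqrt (by positivity)]
  nlinarith [sq_nonneg (hmA a p)]

lemma K1A_le {h : ℝ} (hh : 0 < h) {r A : ℝ} (hr : 0 < r) (hA : |A| ≤ Real.sqrt (h * (1 + h)) / r) :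
    |KK1 h * A| ≤ 3 / 2 / (r * Real.sqrt h) := by
  have h1 := KK1_near hh
  have hs := Real.sqrt_pos.2 hh
  have hs1 := Real.sqrt_pos.2 (show 0 < 1 + h by linarith)
  rw [abs_mul]
  calc _ ≤ 3 / 2 / (h * Real.sqrt (1 + h)) * (Real.sqrt (h * (1 + h)) / r) := by gcongr
    _ = _ := by
      rw [Real.sqrt_mul hh.le]
      have := Real.mul_self_sqrt hh.le
      field_simp
      linear_combination this

lemma gZ_bound {a p : ℝ × ℝ} (ha : 0 < a.1) (hp : 0 < p.1) (h : p ≠ a) :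
    Real.sqrt (qd a p) * (p.1 * |gZ a p|) ≤ 5 * a.1 := by
  have hh := hm_pos ha hp h
  have hs := Real.sqrt_pos.2 hh
  have hS : 0 < Real.sqrt (p.1 * a.1) := Real.sqrt_pos.2 (by positivity)
  have hSS := Real.mul_self_sqrt (show 0 ≤ p.1 * a.1 by positivity)
  have hB := K1A_le hh hp (abs_hmB_le ha hp)
  rw [← sqrt_hm ha hp, gZ_eq, abs_mul]
  have : |sg a p| = Real.sqrt (p.1 * a.1) / p.1 := abs_of_pos (by unfold sg; positivity)
  rw [this]
  calc _ ≤ 2 * Real.sqrt (p.1 * a.1) * Real.sqrt (hm a p) * (p.1 * (Real.sqrt (p.1 * a.1) / p.1 * (3 / 2 / (p.1 * Real.sqrt (hm a p))))) := by gcongr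
    _ = 3 * a.1 := by field_simp; linear_combination hSS
    _ ≤ _ := by linarith

lemma gR_bound {a p : ℝ × ℝ} (ha : 0 < a.1) (hp : 0 < p.1) (h : p ≠ a) :
    Real.sqrt (qd a p) * (p.1 * |gR a p|) ≤ 5 * a.1 := by
  have hh := hm_pos ha hp h
  have hs := Real.sqrt_pos.2 hh
  have hS : 0 < Real.sqrt (p.1 * a.1) := Real.sqrt_pos.2 (by positivity)
  have hSS := Real.mul_self_sqrt (show 0 ≤ p.1 * a.1 by positivity)
  have hB := K1A_le hh hp (abs_hmA_le ha hp)
  have hK := KK_le_sqrt hh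
  have hK0 := KK_nonneg hh
  rw [← sqrt_hm ha hp, gR_eq, abs_mul]
  have : |sg a p| = Real.sqrt (p.1 * a.1) / p.1 := abs_of_pos (by unfold sg; positivity)
  rw [this]
  have h2 : |KK (hm a p) / (2 * p.1) + KK1 (hm a p) * hmA a p| ≤
      (2 / Real.sqrt (hm a p)) / (2 * p.1) + 3 / 2 / (p.1 * Real.sqrt (hm a p)) := by
    refine (abs_add_le _ _).trans (add_le_add ?_ hB)
    rw [abs_of_nonneg (by positivity)]
    gcongr
  calc _ ≤ 2 * Real.sqrt (p.1 * a.1) * Real.sqrt (hm a p) * (p.1 * (Real.sqrt (p.1 * a.1) / p.1 *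
        ((2 / Real.sqrt (hm a p)) / (2 * p.1) + 3 / 2 / (p.1 * Real.sqrt (hm a p))))) := by gcongr
    _ = 5 * a.1 := by field_simp; linear_combination (5:ℝ) * hSS

/-- radial component of `g_b` about `a` -/
def Dd (a b p : ℝ × ℝ) : ℝ := gR b p * (p.1 - a.1) + gZ b p * (p.2 - a.2)

lemma Dd_self {a p : ℝ × ℝ} (ha : 0 < a.1) (hp : 0 < p.1) :
    Dd a a p = sg a p * (KK (hm a p) * (p.1 - a.1) / (2 * p.1) + hm a p * KK1 (hm a p) * (1 + a.1 / p.1)) := by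
  have e : hmA a p * (p.1 - a.1) + hmB a p * (p.2 - a.2) = hm a p * (1 + a.1 / p.1) := by
    simp only [hmA, hmB, hm]; field_simp; ring
  simp only [Dd, gR_eq, gZ_eq]
  linear_combination (sg a p * KK1 (hm a p)) * e

lemma tendsto_hKK1 : Tendsto (fun h => h * KK1 h) (𝓝[>] 0) (𝓝 (-1/2)) := by
  rw [tendsto_iff_norm_sub_tendsto_zero]
  have h1 : Tendsto (fun h : ℝ => 5 * Real.sqrt h) (𝓝[>] 0) (𝓝 0) := by
    have : Tendsto (fun h : ℝ => 5 * Real.sqrt h) (𝓝 0) (𝓝 (5 * Real.sqrt 0)) :=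
      (continuous_const.mul Real.continuous_sqrt).tendsto 0
    simp at this
    exact this.mono_left nhdsWithin_le_nhds
  refine squeeze_zero' (Eventually.of_forall fun _ => norm_nonneg _) ?_ h1
  filter_upwards [self_mem_nhdsWithin, mem_nhdsWithin_of_mem_nhds (Iio_mem_nhds (show (0:ℝ) < 1 by norm_num))] with h h0 h1
  have := KK1_asymp h0 (le_of_lt h1)
  rw [Real.norm_eq_abs]
  convert this using 2
  ring

lemma tendsto_sqrtKK : Tendsto (fun h => Real.sqrt h * KK h) (𝓝[>] 0) (𝓝 0) := by
  have h0 : Tendsto (fun h : ℝ => Real.sqrt h) (𝓝[>] 0) (𝓝 0) := by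
    have : Tendsto (fun h : ℝ => Real.sqrt h) (𝓝 0) (𝓝 (Real.sqrt 0)) := Real.continuous_sqrt.tendsto 0
    simp at this
    exact this.mono_left nhdsWithin_le_nhds
  have hl : Tendsto (fun h : ℝ => Real.log h * Real.sqrt h) (𝓝[>] 0) (𝓝 0) := by
    have := tendsto_log_mul_rpow_nhdsGT_zero (show (0:ℝ) < 1/2 by norm_num)
    simpa only [Real.sqrt_eq_rpow] using this
  have h1 : Tendsto (fun h : ℝ => Real.sqrt h * (2 * Real.log 2 - 2) - (Real.log h * Real.sqrt h) / 2
      + Real.sqrt h * (5 * Real.sqrt h)) (𝓝[>] 0) (𝓝 0) := by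
    have := ((h0.mul_const (2 * Real.log 2 - 2)).sub (hl.div_const 2)).add (h0.mul (h0.const_mul 5))
    simpa using this
  refine squeeze_zero' ?_ ?_ h1
  · filter_upwards [self_mem_nhdsWithin] with h hh
    exact mul_nonneg (Real.sqrt_nonneg _) (KK_nonneg hh)
  · filter_upwards [self_mem_nhdsWithin, mem_nhdsWithin_of_mem_nhds (Iio_mem_nhds (show (0:ℝ) < 1 by norm_num))] with h h0 h1
    have := (abs_le.1 (KK_asymp h0 (le_of_lt h1))).2
    have h2 : KK h ≤ 2 * Real.log 2 - 2 - Real.log h / 2 + 5 * Real.sqrt h := by linarith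
    have := mul_le_mul_of_nonneg_left h2 (Real.sqrt_nonneg h)
    linarith

lemma tendsto_hm {a : ℝ × ℝ} (ha : 0 < a.1) : Tendsto (hm a) (𝓝[≠] a) (𝓝[>] 0) := by
  refine tendsto_nhdsWithin_iff.2 ⟨?_, ?_⟩
  · have h := ((hm_contDiffAt ha ha).continuousAt : ContinuousAt (hm a) a).tendsto
    have e : hm a a = 0 := by simp [hm]
    rw [e] at h
    exact h.mono_left nhdsWithin_le_nhds
  · have : ∀ᶠ p : ℝ × ℝ in 𝓝[≠] a, 0 < p.1 :=
      mem_nhdsWithin_of_mem_nhds ((isOpen_lt continuous_const continuous_fst).mem_nhds ha)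
    filter_upwards [this, self_mem_nhdsWithin] with p hp hne
    exact hm_pos ha hp hne

lemma tendsto_Dd_self {a : ℝ × ℝ} (ha : 0 < a.1) : Tendsto (Dd a a) (𝓝[≠] a) (𝓝 (-1)) := by
  have hH : ∀ᶠ p : ℝ × ℝ in 𝓝[≠] a, 0 < p.1 :=
    mem_nhdsWithin_of_mem_nhds ((isOpen_lt continuous_const continuous_fst).mem_nhds ha)
  have hfst : Tendsto (fun p : ℝ × ℝ => p.1) (𝓝[≠] a) (𝓝 a.1) :=
    (continuous_fst.tendsto a).mono_left nhdsWithin_le_nhds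
  have hS : Tendsto (fun p : ℝ × ℝ => Real.sqrt (p.1 * a.1)) (𝓝[≠] a) (𝓝 a.1) := by
    have := (Real.continuous_sqrt.tendsto (a.1 * a.1)).comp (hfst.mul_const a.1)
    rw [Real.sqrt_mul_self ha.le] at this
    exact this
  have hsg : Tendsto (sg a) (𝓝[≠] a) (𝓝 1) := by
    have := hS.div hfst ha.ne'
    rw [div_self ha.ne'] at this
    exact this
  have hK : Tendsto (fun p : ℝ × ℝ => KK (hm a p) * (p.1 - a.1)) (𝓝[≠] a) (𝓝 0) := by
    have h1 := (hS.const_mul 2).mul (tendsto_sqrtKK.comp (tendsto_hm ha))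
    rw [mul_zero] at h1
    refine squeeze_zero_norm' ?_ h1
    filter_upwards [hH, self_mem_nhdsWithin] with p hp hne
    have hk := KK_nonneg (hm_pos ha hp hne)
    rw [norm_mul, Real.norm_eq_abs, Real.norm_eq_abs, abs_of_nonneg hk]
    have h2 : |p.1 - a.1| ≤ Real.sqrt (qd a p) := by
      apply Real.abs_le_sqrt
      unfold qd
      nlinarith [sq_nonneg (p.2 - a.2)]
    rw [← sqrt_hm ha hp] at h2
    have := mul_le_mul_of_nonneg_left h2 hk
    simp only [Function.comp]
    linarith
  have hK1 := tendsto_hKK1.comp (tendsto_hm ha)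
  have hr : Tendsto (fun p : ℝ × ℝ => 1 + a.1 / p.1) (𝓝[≠] a) (𝓝 (1 + a.1 / a.1)) :=
    (tendsto_const_nhds.div hfst ha.ne').const_add 1
  have h2r : Tendsto (fun p : ℝ × ℝ => 2 * p.1) (𝓝[≠] a) (𝓝 (2 * a.1)) := hfst.const_mul 2
  have := hsg.mul ((hK.div h2r (by positivity)).add (hK1.mul hr))
  have e : (1:ℝ) * (0 / (2 * a.1) + -1 / 2 * (1 + a.1 / a.1)) = -1 := by field_simp; ring
  rw [e] at this
  refine this.congr' ?_
  filter_upwards [hH] with p hp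
  rw [Dd_self ha hp]
  simp [Function.comp]

/-- total stream function -/
def Ph {n : ℕ} (a : Fin n → ℝ × ℝ) (p : ℝ × ℝ) : ℝ := ∑ i, ph (a i) p
/-- `r`-component of the total field -/
def GR {n : ℕ} (a : Fin n → ℝ × ℝ) (p : ℝ × ℝ) : ℝ := ∑ i, gR (a i) p
/-- `z`-component of the total field -/
def GZ {n : ℕ} (a : Fin n → ℝ × ℝ) (p : ℝ × ℝ) : ℝ := ∑ i, gZ (a i) p
/-- twice the energy density -/
def ee {n : ℕ} (a : Fin n → ℝ × ℝ) (p : ℝ × ℝ) : ℝ := p.1 * (GR a p ^ 2 + GZ a p ^ 2)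
/-- the punctured half plane -/
def UU {n : ℕ} (a : Fin n → ℝ × ℝ) : Set (ℝ × ℝ) := {p | 0 < p.1 ∧ ∀ i, p ≠ a i}
/-- radial component of the total field about `b` -/
def DD {n : ℕ} (a : Fin n → ℝ × ℝ) (b p : ℝ × ℝ) : ℝ := GR a p * (p.1 - b.1) + GZ a p * (p.2 - b.2)

section config
variable {n : ℕ} {a : Fin n → ℝ × ℝ}

lemma UU_open (a : Fin n → ℝ × ℝ) : IsOpen (UU a) := by
  have : UU a = {p : ℝ × ℝ | 0 < p.1} ∩ ⋂ i, {p | p ≠ a i} := by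
    ext p; simp [UU]
  rw [this]
  exact (isOpen_lt continuous_const continuous_fst).inter (isOpen_iInter_of_finite fun i => isOpen_ne)

lemma Ph_hasFDerivAt (ha : ∀ i, 0 < (a i).1) {p : ℝ × ℝ} (hp : p ∈ UU a) :
    HasFDerivAt (Ph a) (L2 (p.1 * GR a p) (p.1 * GZ a p)) p := by
  have h := HasFDerivAt.fun_sum (u := Finset.univ) fun i _ => ph_hasFDerivAt (ha i) hp.1 (hp.2 i)
  refine HasFDerivAt.congr_fderiv h ?_
  apply L2_ext <;> simp [GR, GZ, Finset.mul_sum]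

lemma Ph_contDiffOn (ha : ∀ i, 0 < (a i).1) : ContDiffOn ℝ 1 (Ph a) (UU a) := fun _ hp =>
  (ContDiffAt.sum fun i _ => ph_contDiffAt (ha i) hp.1 (hp.2 i)).contDiffWithinAt
lemma GR_contDiffOn (ha : ∀ i, 0 < (a i).1) : ContDiffOn ℝ 1 (GR a) (UU a) := fun _ hp =>
  (ContDiffAt.sum fun i _ => gR_contDiffAt (ha i) hp.1 (hp.2 i)).contDiffWithinAt
lemma GZ_contDiffOn (ha : ∀ i, 0 < (a i).1) : ContDiffOn ℝ 1 (GZ a) (UU a) := fun _ hp =>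
  (ContDiffAt.sum fun i _ => gZ_contDiffAt (ha i) hp.1 (hp.2 i)).contDiffWithinAt

lemma G_hasFDerivAt (ha : ∀ i, 0 < (a i).1) {p : ℝ × ℝ} (hp : p ∈ UU a) :
    ∃ x y z, HasFDerivAt (GR a) (L2 x y) p ∧ HasFDerivAt (GZ a) (L2 z (-x)) p := by
  choose x y z h1 h2 using fun i => g_div (ha i) hp.1 (hp.2 i)
  refine ⟨∑ i, x i, ∑ i, y i, ∑ i, z i, ?_, ?_⟩
  · refine (HasFDerivAt.fun_sum (u := Finset.univ) fun i _ => h1 i).congr_fderiv ?_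
    apply L2_ext <;> simp
  · refine (HasFDerivAt.fun_sum (u := Finset.univ) fun i _ => h2 i).congr_fderiv ?_
    apply L2_ext <;> simp

lemma G_div (ha : ∀ i, 0 < (a i).1) {p : ℝ × ℝ} (hp : p ∈ UU a) :
    fderiv ℝ (GR a) p (1, 0) + fderiv ℝ (GZ a) p (0, 1) = 0 := by
  obtain ⟨x, y, z, h1, h2⟩ := G_hasFDerivAt ha hp
  rw [h1.fderiv, h2.fderiv]; simp

lemma PhG_div (ha : ∀ i, 0 < (a i).1) {p : ℝ × ℝ} (hp : p ∈ UU a) :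
    fderiv ℝ (fun q => Ph a q * GR a q) p (1, 0) + fderiv ℝ (fun q => Ph a q * GZ a q) p (0, 1) = ee a p := by
  obtain ⟨x, y, z, h1, h2⟩ := G_hasFDerivAt ha hp
  have h0 := Ph_hasFDerivAt ha hp
  rw [(hf_mul h0 h1).fderiv, (hf_mul h0 h2).fderiv]
  simp [ee]
  ring

lemma rPsi_integrand (ha : ∀ i, 0 < (a i).1) {p : ℝ × ℝ} (hp : p ∈ UU a) :
    (1 / (2 * p.1)) * ((pdRr (rPsiStar a) p) ^ 2 + (pdZr (rPsiStar a) p) ^ 2) = ee a p / 2 := by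
  have h : HasFDerivAt (rPsiStar a) (L2 (p.1 * GR a p) (p.1 * GZ a p)) p := by
    refine (Ph_hasFDerivAt ha hp).congr_of_eventuallyEq ?_
    filter_upwards [(UU_open a).mem_nhds hp] with q hq
    simp only [rPsiStar, PsiStar, Ph, Finset.mul_sum]
    exact Finset.sum_congr rfl fun i _ => Avec_eq (ha i) hq.1 (hq.2 i)
  have hp0 := hp.1
  simp only [pdRr, pdZr, h.fderiv, ee, L2_apply]
  field_simp
  ring

lemma ee_nonneg {p : ℝ × ℝ} (hp : 0 < p.1) : 0 ≤ ee a p := by unfold ee; positivity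

lemma DD_eq (b p : ℝ × ℝ) : DD a b p = ∑ j, Dd b (a j) p := by
  simp only [DD, Dd, GR, GZ, Finset.sum_add_distrib, Finset.sum_mul]

lemma DD_continuousOn (ha : ∀ i, 0 < (a i).1) (b : ℝ × ℝ) : ContinuousOn (DD a b) (UU a) := by
  have h1 := (GR_contDiffOn ha).continuousOn
  have h2 := (GZ_contDiffOn ha).continuousOn
  unfold DD
  fun_prop

lemma tendsto_DD (ha : ∀ i, 0 < (a i).1) (hinj : Function.Injective a) (i : Fin n) :
    Tendsto (DD a (a i)) (𝓝[≠] (a i)) (𝓝 (-1)) := by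
  have e : DD a (a i) = fun p => Dd (a i) (a i) p + ∑ j ∈ Finset.univ.erase i, Dd (a i) (a j) p := by
    funext p; rw [DD_eq]
    exact (Finset.add_sum_erase Finset.univ (fun j => Dd (a i) (a j) p) (Finset.mem_univ i)).symm
  rw [e]
  have h1 : Tendsto (fun p => ∑ j ∈ Finset.univ.erase i, Dd (a i) (a j) p) (𝓝[≠] (a i)) (𝓝 0) := by
    have : Tendsto (fun p => ∑ j ∈ Finset.univ.erase i, Dd (a i) (a j) p) (𝓝[≠] (a i)) (𝓝 (∑ j ∈ Finset.univ.erase i, 0)) := by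
      refine tendsto_finsetSum _ fun j hj => ?_
      have hne : a i ≠ a j := fun h => (Finset.ne_of_mem_erase hj) (hinj h).symm
      have hc : ContinuousAt (Dd (a i) (a j)) (a i) := by
        have h1 := (gR_contDiffAt (ha j) (ha i) hne).continuousAt
        have h2 := (gZ_contDiffAt (ha j) (ha i) hne).continuousAt
        unfold Dd
        fun_prop
      have := hc.tendsto
      rw [show Dd (a i) (a j) (a i) = 0 by simp [Dd]] at this
      exact this.mono_left nhdsWithin_le_nhds
    simpa using this
  have := (tendsto_Dd_self (ha i)).add h1
  simpa using this

/-- the disc of radius `t` about `a i` lies in `H` and contains no other point -/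
def GoodDisc (a : Fin n → ℝ × ℝ) (i : Fin n) (t : ℝ) : Prop :=
  ∀ p, qd (a i) p ≤ t ^ 2 → p ≠ a i → p ∈ UU a

lemma ann_sub_UU {i : Fin n} {t s : ℝ} (hg : GoodDisc a i t) (hs : 0 < s) : ann (a i) s t ⊆ UU a := by
  intro p hp
  refine hg p hp.2 fun h => ?_
  have := hp.1
  rw [h, qd_self] at this
  nlinarith

lemma flux_indep (ha : ∀ i, 0 < (a i).1) {i : Fin n} {t0 s t s' t' : ℝ} (hg : GoodDisc a i t0)
    (hs : 0 < s) (hst : s < t) (ht : t ≤ t0) (hs' : 0 < s') (hst' : s' < t') (ht' : t' ≤ t0) :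
    ∫ p, mm (a i) s t p * DD a (a i) p = ∫ p, mm (a i) s' t' p * DD a (a i) p := by
  set X : ℝ × ℝ → ℝ := fun p => chi (a i) s t p - chi (a i) s' t' p with hX
  have hXc : ContDiff ℝ 1 X := (chi_contDiff _ _ _).sub (chi_contDiff _ _ _)
  set m := min s s' with hm
  have hm0 : 0 < m := lt_min hs hs'
  have hsub : Function.support X ⊆ ann (a i) m t0 := by
    intro p hp
    by_contra hc
    apply hp
    by_cases h1 : m ^ 2 ≤ qd (a i) p
    · have h2 : t0 ^ 2 ≤ qd (a i) p := not_lt.1 fun h => hc ⟨h1, h.le⟩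
      have e1 : t ^ 2 ≤ t0 ^ 2 := by gcongr; linarith
      have e2 : t' ^ 2 ≤ t0 ^ 2 := by gcongr; linarith
      simp only [hX]
      rw [chi_one hs hst (by linarith), chi_one hs' hst' (by linarith), sub_self]
    · push Not at h1
      have e1 : m ^ 2 ≤ s ^ 2 := by gcongr; exact min_le_left _ _
      have e2 : m ^ 2 ≤ s' ^ 2 := by gcongr; exact min_le_right _ _
      simp only [hX]
      rw [chi_zero hs hst (by linarith), chi_zero hs' hst' (by linarith), sub_self]
  have hts : tsupport X ⊆ ann (a i) m t0 :=
    closure_minimal hsub (ann_compact _ _ _).isClosed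
  have hcs : HasCompactSupport X := (ann_compact _ _ _).of_isClosed_subset (isClosed_tsupport X) hts
  obtain ⟨-, -, h⟩ := ibp (UU_open a) (GR_contDiffOn ha) (GZ_contDiffOn ha) (D := fun _ => 0)
    (fun p hp => G_div ha hp) hXc hcs (hts.trans (ann_sub_UU hg hm0))
  have e : ∀ p, fderiv ℝ X p (1, 0) * GR a p + fderiv ℝ X p (0, 1) * GZ a p
      = mm (a i) s t p * DD a (a i) p - mm (a i) s' t' p * DD a (a i) p := by
    intro p
    have := hf_sub (chi_hasFDerivAt (a i) s t p) (chi_hasFDerivAt (a i) s' t' p)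
    rw [HasFDerivAt.fderiv this]
    simp [DD]; ring
  simp only [e, mul_zero, integral_zero] at h
  have hgt : ∀ t, 0 < t → t ≤ t0 → GoodDisc a i t := fun t h0 ht p hp hne => by
    refine hg p (hp.trans ?_) hne
    gcongr
  rw [integral_sub (mm_mul_integrable hs hst ((DD_continuousOn ha _).mono (ann_sub_UU (hgt t (by linarith) ht) hs)))
    (mm_mul_integrable hs' hst' ((DD_continuousOn ha _).mono (ann_sub_UU (hgt t' (by linarith) ht') hs')))] at h
  linarith

lemma flux (ha : ∀ i, 0 < (a i).1) (hinj : Function.Injective a) {i : Fin n} {s t : ℝ} (hg : GoodDisc a i t)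
    (hs : 0 < s) (hst : s < t) : ∫ p, mm (a i) s t p * DD a (a i) p = -(2 * π) := by
  have key : ∀ ε > 0, |(∫ p, mm (a i) s t p * DD a (a i) p) + 2 * π| ≤ ε * (2 * π) := by
    intro ε hε
    have h1 : ∀ᶠ p in 𝓝[≠] (a i), |DD a (a i) p + 1| ≤ ε := by
      have := (Metric.tendsto_nhds.1 (tendsto_DD ha hinj i)) ε hε
      filter_upwards [this] with p hp
      rw [Real.dist_eq, sub_neg_eq_add] at hp
      exact hp.le
    rw [eventually_nhdsWithin_iff, Metric.eventually_nhds_iff] at h1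
    obtain ⟨η, hη, h1⟩ := h1
    set t' := min t (η / 2) with ht'
    have ht0 : 0 < t' := lt_min (by linarith) (by linarith)
    have htt : t' ≤ t := min_le_left _ _
    rw [flux_indep ha hg hs hst le_rfl (half_pos ht0) (half_lt_self ht0) htt]
    have hgt : GoodDisc a i t' := fun p hp hne => by
      refine hg p (hp.trans ?_) hne
      gcongr
    rw [← mm_integral (a := a i) (half_pos ht0) (half_lt_self ht0),
      ← integral_add (mm_mul_integrable (half_pos ht0) (half_lt_self ht0) ((DD_continuousOn ha _).mono (ann_sub_UU hgt (half_pos ht0))))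
        (mm_integrable (half_pos ht0) (half_lt_self ht0)), ← integral_const_mul]
    rw [← Real.norm_eq_abs]
    refine norm_integral_le_of_norm_le ((mm_integrable (half_pos ht0) (half_lt_self ht0)).const_mul ε)
      (Eventually.of_forall fun p => ?_)
    rw [Real.norm_eq_abs]
    by_cases hp : p ∈ ann (a i) (t' / 2) t'
    · have hm := mm_nonneg (a := a i) (half_pos ht0) (half_lt_self ht0) p
      have hne : p ≠ a i := (ann_sub_UU hgt (half_pos ht0) hp).2 i
      have hd : dist p (a i) < η := by
        have h2 := hp.2
        have h3 : t' ≤ η / 2 := min_le_right _ _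
        unfold qd at h2
        rw [Prod.dist_eq, max_lt_iff, Real.dist_eq, Real.dist_eq]
        constructor
        · have : |p.1 - (a i).1| ≤ t' := abs_le_of_sq_le_sq (by nlinarith [sq_nonneg (p.2 - (a i).2)]) ht0.le
          linarith
        · have : |p.2 - (a i).2| ≤ t' := abs_le_of_sq_le_sq (by nlinarith [sq_nonneg (p.1 - (a i).1)]) ht0.le
          linarith
      have := h1 hd hne
      calc _ = mm (a i) (t' / 2) t' p * |DD a (a i) p + 1| := by
            rw [← abs_of_nonneg hm, ← abs_mul, abs_of_nonneg hm]; ring_nf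
        _ ≤ mm (a i) (t' / 2) t' p * ε := by gcongr
        _ = _ := by ring
    · rw [mm_zero_ann (half_pos ht0) (half_lt_self ht0) hp]; simp
  have h0 : |(∫ p, mm (a i) s t p * DD a (a i) p) + 2 * π| ≤ 0 := by
    refine le_of_forall_pos_le_add fun δ hδ => ?_
    have := key (δ / (2 * π)) (by positivity)
    rw [div_mul_cancel₀ _ (by positivity)] at this
    linarith
  have := abs_eq_zero.1 (le_antisymm h0 (abs_nonneg _))
  linarith
end config

/-- `1 + r² + z²` -/
def qq (p : ℝ × ℝ) : ℝ := 1 + p.1 ^ 2 + p.2 ^ 2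
/-- `r / (1 + r² + z²)` -/
def vv (p : ℝ × ℝ) : ℝ := p.1 / qq p
/-- far cut-off -/
def zt (N : ℝ) (p : ℝ × ℝ) : ℝ := TT (N * vv p - 1)

lemma qq_pos (p : ℝ × ℝ) : 0 < qq p := by unfold qq; positivity
lemma vv_pos {p : ℝ × ℝ} (hp : 0 < p.1) : 0 < vv p := div_pos hp (qq_pos p)

lemma vv_contDiff : ContDiff ℝ 1 vv := by
  unfold vv
  refine ContDiff.div (by fun_prop) (by unfold qq; fun_prop) (fun p => (qq_pos p).ne')

lemma zt_contDiff (N : ℝ) : ContDiff ℝ 1 (zt N) := by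
  refine TT_contDiff.comp ?_
  have := vv_contDiff
  fun_prop

lemma vv_hasFDerivAt (p : ℝ × ℝ) : HasFDerivAt vv (L2 ((1 + p.2 ^ 2 - p.1 ^ 2) / qq p ^ 2) (-2 * p.1 * p.2 / qq p ^ 2)) p := by
  have hq := qq_pos p
  have h1 : HasFDerivAt qq (L2 (2 * p.1) (2 * p.2)) p := by
    refine hf_congr (hf_add (hf_add (hf_const 1 p) (hf_mul (hf_fst p) (hf_fst p))) (hf_mul (hf_snd p) (hf_snd p)))
      (fun q => by simp only [qq]; ring) (by ring) (by ring)
  refine hf_congr (hf_mul (hf_fst p) (hf_inv h1 hq.ne')) (fun q => by simp only [vv, div_eq_mul_inv]) ?_ ?_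
  · field_simp; simp only [qq]; ring
  · field_simp; ring

lemma zt_hasFDerivAt (N : ℝ) (p : ℝ × ℝ) : HasFDerivAt (zt N)
    (L2 (deriv TT (N * vv p - 1) * (N * ((1 + p.2 ^ 2 - p.1 ^ 2) / qq p ^ 2)))
      (deriv TT (N * vv p - 1) * (N * (-2 * p.1 * p.2 / qq p ^ 2)))) p := by
  have h1 := hf_sub (hf_mul (hf_const N p) (vv_hasFDerivAt p)) (hf_const 1 p)
  exact hf_congr (hf_comp (f := fun q => N * vv q - 1) (TT_hasDerivAt _) h1) (fun q => rfl) (by ring) (by ring)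

lemma TT_dbound : ∃ B : ℝ, 0 < B ∧ ∀ x, deriv TT x ≤ B := by
  obtain ⟨B, hB⟩ := (isCompact_Icc (a := (0:ℝ)) (b := 1)).exists_bound_of_continuousOn TT_dcont.continuousOn
  refine ⟨max B 1, by positivity, fun x => ?_⟩
  by_cases h0 : x ≤ 0
  · rw [TT_dzero h0]; positivity
  by_cases h1 : 1 ≤ x
  · rw [TT_done h1]; positivity
  · exact (le_abs_self _).trans ((hB x ⟨by linarith, by linarith⟩).trans (le_max_left _ _))

/-- gradient bound for the far cut-off -/
lemma zt_grad {B : ℝ} (hB0 : 0 < B) (hB : ∀ x, deriv TT x ≤ B) {N : ℝ} (hN : 0 < N) {p : ℝ × ℝ} (hp : 0 < p.1) :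
    |fderiv ℝ (zt N) p (1, 0)| ≤ 2 * B / p.1 ∧ |fderiv ℝ (zt N) p (0, 1)| ≤ 2 * B / p.1 := by
  rw [(zt_hasFDerivAt N p).fderiv]
  simp only [L2_apply, mul_one, mul_zero, add_zero, zero_add]
  have hq := qq_pos p
  have hd := TT_dnonneg (N * vv p - 1)
  have key : ∀ c : ℝ, |c| ≤ qq p → |deriv TT (N * vv p - 1) * (N * (c / qq p ^ 2))| ≤ 2 * B / p.1 := by
    intro c hc
    by_cases h : 1 ≤ N * vv p - 1
    · rw [TT_done h]; simp; positivity
    push Not at h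
    have h2 : N * p.1 ≤ 2 * qq p := by
      have e : N * vv p = N * p.1 / qq p := by simp only [vv]; ring
      rw [e] at h
      have : N * p.1 / qq p < 2 := by linarith
      rw [div_lt_iff₀ hq] at this
      linarith
    rw [abs_mul, abs_mul, abs_of_nonneg hd, abs_of_pos hN, abs_div, abs_of_pos (show 0 < qq p ^ 2 by positivity)]
    calc _ ≤ B * (N * (qq p / qq p ^ 2)) := by gcongr; exact hB _
      _ = B * (N * p.1 / qq p) / p.1 := by field_simp
      _ ≤ B * 2 / p.1 := by
        gcongr
        rw [div_le_iff₀ hq]; exact h2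
      _ = _ := by ring
  constructor
  · apply key
    unfold qq
    rw [abs_le]; constructor <;> nlinarith [sq_nonneg p.1, sq_nonneg p.2]
  · apply key
    unfold qq
    rw [abs_le]; constructor <;> nlinarith [sq_nonneg (p.1 - p.2), sq_nonneg (p.1 + p.2)]

lemma zt_zero {N : ℝ} {p : ℝ × ℝ} (h : N * vv p ≤ 1) : zt N p = 0 := TT_zero (by linarith)
lemma zt_one {N : ℝ} {p : ℝ × ℝ} (h : 2 ≤ N * vv p) : zt N p = 1 := TT_one (by linarith)
lemma zt_fderiv_zero {N : ℝ} {p : ℝ × ℝ} (h : N * vv p ≤ 1 ∨ 2 ≤ N * vv p) : fderiv ℝ (zt N) p = 0 := by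
  rw [(zt_hasFDerivAt N p).fderiv]
  have : deriv TT (N * vv p - 1) = 0 := by
    rcases h with h | h
    · exact TT_dzero (by linarith)
    · exact TT_done (by linarith)
  rw [this]
  apply L2_ext <;> simp

lemma vv_compact {c : ℝ} (hc : 0 < c) : IsCompact {p | c ≤ vv p} := by
  refine Metric.isCompact_of_isClosed_isBounded (isClosed_le continuous_const vv_contDiff.continuous) ?_
  refine (Metric.isBounded_closedBall (x := (0 : ℝ × ℝ)) (r := 1 / c)).subset fun p hp => ?_
  have hq := qq_pos p
  have hp' : c ≤ p.1 / qq p := hp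
  rw [le_div_iff₀ hq] at hp'
  have hr : 0 < p.1 := by nlinarith
  have h1 : p.1 ≤ 1 / c := by
    rw [le_div_iff₀ hc]
    unfold qq at hp'
    have : c * p.1 ^ 2 ≤ p.1 := by nlinarith [sq_nonneg p.2]
    nlinarith
  rw [Metric.mem_closedBall, Prod.dist_eq, max_le_iff, Real.dist_eq, Real.dist_eq]
  simp only [Prod.fst_zero, Prod.snd_zero, sub_zero]
  refine ⟨by rwa [abs_of_pos hr], ?_⟩
  apply abs_le_of_sq_le_sq _ (by positivity)
  have h2 : c * p.2 ^ 2 ≤ p.1 := by unfold qq at hp'; nlinarith [sq_nonneg p.1]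
  have h3 : p.2 ^ 2 ≤ p.1 / c := by rw [le_div_iff₀ hc]; linarith
  calc _ ≤ p.1 / c := h3
    _ ≤ (1 / c) / c := by gcongr
    _ = _ := by field_simp

lemma vv_pos_iff {p : ℝ × ℝ} (h : 0 < vv p) : 0 < p.1 := by
  have := mul_pos h (qq_pos p)
  rwa [vv, div_mul_cancel₀ _ (qq_pos p).ne'] at this

lemma qq_integrable : Integrable (fun p => 1 / qq p ^ 2) := by
  have h1 := (integrable_inv_one_add_sq.mul_prod integrable_inv_one_add_sq)
  rw [← Measure.volume_eq_prod] at h1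
  refine h1.mono' ?_ (Eventually.of_forall fun p => ?_)
  · have : Continuous (fun p => 1 / qq p ^ 2) := by
      refine Continuous.div continuous_const (by unfold qq; fun_prop) (fun p => ?_)
      have := qq_pos p; positivity
    exact this.aestronglyMeasurable
  · have hq := qq_pos p
    rw [Real.norm_eq_abs, abs_of_pos (by positivity), ← mul_inv, one_div]
    gcongr
    unfold qq
    nlinarith [sq_nonneg (p.1 * p.2), sq_nonneg p.1, sq_nonneg p.2, sq_nonneg (p.1 ^ 2), sq_nonneg (p.2 ^ 2)]

lemma far_hm {a : ℝ × ℝ} (ha : 0 < a.1) : ∃ M : ℝ, 0 < M ∧ ∀ p : ℝ × ℝ, 0 < p.1 → M * vv p ≤ 1 →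
    1 ≤ hm a p ∧ 1 ≤ M * vv p * hm a p := by
  set B := 2 + (1 + 2 * a.2 ^ 2) / a.1 ^ 2 with hB
  have hB0 : 0 < B := by positivity
  refine ⟨8 * B * a.1, by positivity, fun p hp hv => ?_⟩
  have hq := qq_pos p
  have e1 : 1 + 2 * a.2 ^ 2 ≤ B * a.1 ^ 2 := by
    rw [hB, add_mul, div_mul_cancel₀ _ (by positivity)]; nlinarith
  have hB2 : 2 ≤ B := by rw [hB]; have : 0 ≤ (1 + 2 * a.2 ^ 2) / a.1 ^ 2 := by positivity
                         linarith
  have e2 : qq p ≤ B * ((p.1 + a.1) ^ 2 + (p.2 - a.2) ^ 2) := by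
    have t1 : p.2 ^ 2 ≤ 2 * (p.2 - a.2) ^ 2 + 2 * a.2 ^ 2 := by nlinarith [sq_nonneg (p.2 - 2 * a.2)]
    have t2 : 2 * (p.2 - a.2) ^ 2 ≤ B * (p.2 - a.2) ^ 2 := by gcongr
    have t3 : 2 * p.1 ^ 2 ≤ B * p.1 ^ 2 := by gcongr
    have t4 : 0 ≤ B * (2 * p.1 * a.1) := by positivity
    unfold qq
    nlinarith [sq_nonneg p.1]
  have e3 : 1 + hm a p = ((p.1 + a.1) ^ 2 + (p.2 - a.2) ^ 2) / (4 * p.1 * a.1) := by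
    unfold hm; field_simp; ring
  have e4 : 2 ≤ 8 * B * a.1 * vv p * (1 + hm a p) := by
    rw [e3]
    have : 8 * B * a.1 * vv p * (((p.1 + a.1) ^ 2 + (p.2 - a.2) ^ 2) / (4 * p.1 * a.1))
      = 2 * (B * ((p.1 + a.1) ^ 2 + (p.2 - a.2) ^ 2)) / qq p := by
      unfold vv; field_simp; ring
    rw [this, le_div_iff₀ hq]; linarith
  have h0 : 0 ≤ 1 + hm a p := by rw [e3]; positivity
  have h1 : 1 ≤ hm a p := by
    have := mul_le_mul_of_nonneg_right hv h0
    linarith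
  refine ⟨h1, ?_⟩
  have hv0 := vv_pos hp
  have : 0 ≤ 8 * B * a.1 * vv p := by positivity
  nlinarith

lemma k_le {h x : ℝ} (hh : 0 < h) (hx : 1 ≤ x * h) : 1 / (h * Real.sqrt h) ≤ Real.sqrt (x ^ 3) := by
  apply Real.le_sqrt_of_sq_le
  rw [div_pow, mul_pow, Real.sq_sqrt hh.le, div_le_iff₀ (by positivity)]
  have : 1 ≤ (x * h) ^ 3 := one_le_pow₀ hx
  calc (1:ℝ) ^ 2 ≤ (x * h) ^ 3 := by simpa using this
    _ = _ := by ring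

lemma far_single {a : ℝ × ℝ} (ha : 0 < a.1) : ∃ M : ℝ, 0 < M ∧ ∀ p : ℝ × ℝ, 0 < p.1 → M * vv p ≤ 1 →
    p ≠ a ∧
    |ph a p| ≤ M * Real.sqrt (p.1 * vv p ^ 3) ∧ p.1 ^ 2 * |gR a p| ≤ M * Real.sqrt (p.1 * vv p ^ 3) ∧
    p.1 ^ 2 * |gZ a p| ≤ M * Real.sqrt (p.1 * vv p ^ 3) := by
  obtain ⟨M, hM, h⟩ := far_hm ha
  refine ⟨M + 7 * Real.sqrt (a.1 * M ^ 3), by positivity, fun p hp hv => ?_⟩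
  have hv0 := vv_pos hp
  obtain ⟨h1, h2⟩ := h p hp (le_trans (by gcongr; have : 0 ≤ Real.sqrt (a.1 * M ^ 3) := by positivity
                                          linarith) hv)
  have hh : 0 < hm a p := by linarith
  set k := 1 / (hm a p * Real.sqrt (hm a p)) with hk
  have hs := Real.sqrt_pos.2 hh
  have hk0 : 0 < k := by positivity
  have hkle := k_le hh h2
  have hK : KK (hm a p) ≤ 2 * k := by have := KK_le_far hh; rw [hk]; convert this using 1; ring
  have hK0 := KK_nonneg hh
  have hK1 : ∀ A, |A| ≤ Real.sqrt (hm a p * (1 + hm a p)) / p.1 → |KK1 (hm a p) * A| ≤ 6 * k / p.1 := by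
    intro A hA
    rw [abs_mul]
    have t1 : Real.sqrt (hm a p * (1 + hm a p)) ≤ 2 * hm a p := by
      apply Real.sqrt_le_iff.2 ⟨by positivity, by nlinarith⟩
    calc _ ≤ 3 / (hm a p ^ 2 * Real.sqrt (hm a p)) * (2 * hm a p / p.1) := by
          gcongr
          · exact KK1_far hh
          · exact hA.trans (by gcongr)
      _ = _ := by rw [hk]; field_simp; norm_num
  have hS : 0 < Real.sqrt (p.1 * a.1) := Real.sqrt_pos.2 (by positivity)
  have hfin : Real.sqrt (p.1 * a.1) * (7 * k) ≤ (M + 7 * Real.sqrt (a.1 * M ^ 3)) * Real.sqrt (p.1 * vv p ^ 3) := by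
    have e : Real.sqrt (p.1 * a.1) * Real.sqrt ((M * vv p) ^ 3) = Real.sqrt (a.1 * M ^ 3) * Real.sqrt (p.1 * vv p ^ 3) := by
      rw [← Real.sqrt_mul (by positivity), ← Real.sqrt_mul (by positivity)]
      congr 1; ring
    calc _ ≤ Real.sqrt (p.1 * a.1) * (7 * Real.sqrt ((M * vv p) ^ 3)) := by gcongr
      _ = 7 * Real.sqrt (a.1 * M ^ 3) * Real.sqrt (p.1 * vv p ^ 3) := by linear_combination 7 * e
      _ ≤ _ := by gcongr; linarith
  have hsg : |sg a p| = Real.sqrt (p.1 * a.1) / p.1 := abs_of_pos (by unfold sg; positivity)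
  refine ⟨?_, ?_, ?_, ?_⟩
  · intro e
    rw [e] at h1
    simp [hm] at h1
    linarith
  · refine le_trans ?_ hfin
    unfold ph
    rw [abs_of_nonneg (by positivity)]
    gcongr
    linarith
  · refine le_trans ?_ hfin
    rw [gR_eq, abs_mul, hsg]
    have : |KK (hm a p) / (2 * p.1) + KK1 (hm a p) * hmA a p| ≤ 7 * k / p.1 := by
      refine (abs_add_le _ _).trans ?_
      have := hK1 _ (abs_hmA_le ha hp)
      rw [abs_of_nonneg (show 0 ≤ KK (hm a p) / (2 * p.1) by positivity)]
      have t : KK (hm a p) / (2 * p.1) ≤ (2 * k) / (2 * p.1) := by gcongr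
      have e : (2 * k) / (2 * p.1) + 6 * k / p.1 = 7 * k / p.1 := by field_simp; norm_num
      linarith
    calc _ ≤ p.1 ^ 2 * (Real.sqrt (p.1 * a.1) / p.1 * (7 * k / p.1)) := by gcongr
      _ = _ := by field_simp
  · refine le_trans ?_ hfin
    rw [gZ_eq, abs_mul, hsg]
    calc _ ≤ p.1 ^ 2 * (Real.sqrt (p.1 * a.1) / p.1 * (6 * k / p.1)) := by
          gcongr; exact hK1 _ (abs_hmB_le ha hp)
      _ = Real.sqrt (p.1 * a.1) * (6 * k) := by field_simp
      _ ≤ _ := by gcongr; norm_num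

section mainid
variable {n : ℕ} {a : Fin n → ℝ × ℝ}

lemma far_total (ha : ∀ i, 0 < (a i).1) : ∃ C : ℝ, 0 < C ∧ ∀ p : ℝ × ℝ, 0 < p.1 → C * vv p ≤ 1 →
    p ∈ UU a ∧ ee a p ≤ C * (1 / qq p ^ 2) ∧ |Ph a p * GR a p| ≤ C * p.1 * (1 / qq p ^ 2) ∧
    |Ph a p * GZ a p| ≤ C * p.1 * (1 / qq p ^ 2) := by
  choose M hM h using fun i => far_single (ha i)
  set S := ∑ i, M i with hS
  have hS0 : 0 ≤ S := Finset.sum_nonneg fun i _ => (hM i).le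
  refine ⟨1 + S + 2 * S ^ 2, by positivity, fun p hp hv => ?_⟩
  have hv0 := vv_pos hp
  have hMv : ∀ i, M i * vv p ≤ 1 := by
    intro i
    have : M i ≤ S := Finset.single_le_sum (fun j _ => (hM j).le) (Finset.mem_univ i)
    refine le_trans (mul_le_mul_of_nonneg_right ?_ hv0.le) hv
    nlinarith [sq_nonneg S]
  set y := Real.sqrt (p.1 * vv p ^ 3) with hy
  have hy0 : 0 ≤ y := Real.sqrt_nonneg _
  have hy2 : y ^ 2 = p.1 * vv p ^ 3 := Real.sq_sqrt (by positivity)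
  have b1 : |Ph a p| ≤ S * y := by
    unfold Ph
    rw [hS, Finset.sum_mul]
    exact (Finset.abs_sum_le_sum_abs _ _).trans (Finset.sum_le_sum fun i _ => (h i p hp (hMv i)).2.1)
  have b2 : p.1 ^ 2 * |GR a p| ≤ S * y := by
    unfold GR
    rw [hS, Finset.sum_mul]
    refine (mul_le_mul_of_nonneg_left (Finset.abs_sum_le_sum_abs _ _) (by positivity)).trans ?_
    rw [Finset.mul_sum]
    exact Finset.sum_le_sum fun i _ => (h i p hp (hMv i)).2.2.1
  have b3 : p.1 ^ 2 * |GZ a p| ≤ S * y := by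
    unfold GZ
    rw [hS, Finset.sum_mul]
    refine (mul_le_mul_of_nonneg_left (Finset.abs_sum_le_sum_abs _ _) (by positivity)).trans ?_
    rw [Finset.mul_sum]
    exact Finset.sum_le_sum fun i _ => (h i p hp (hMv i)).2.2.2
  have hq := qq_pos p
  have hrq : p.1 ≤ qq p := by unfold qq; nlinarith [sq_nonneg (p.1 - 1), sq_nonneg p.2]
  have hy3 : y ^ 2 ≤ p.1 ^ 3 * (1 / qq p ^ 2) := by
    rw [hy2, vv, div_pow, mul_one_div, le_div_iff₀ (by positivity)]
    have e : p.1 * (p.1 ^ 3 / qq p ^ 3) * qq p ^ 2 = p.1 ^ 3 * (p.1 / qq p) := by field_simp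
    rw [e]
    have : p.1 / qq p ≤ 1 := (div_le_one hq).2 hrq
    have h3 : 0 < p.1 ^ 3 := by positivity
    nlinarith
  have prod : ∀ x y' : ℝ, |x| ≤ S * y → p.1 ^ 2 * |y'| ≤ S * y → |x * y'| ≤ S ^ 2 * (p.1 * (1 / qq p ^ 2)) := by
    intro x y' h1 h2
    have e1 : p.1 ^ 2 * |x * y'| ≤ (S * y) * (S * y) := by
      rw [abs_mul, show p.1 ^ 2 * (|x| * |y'|) = |x| * (p.1 ^ 2 * |y'|) by ring]
      gcongr
    have e2 : (S * y) * (S * y) ≤ p.1 ^ 2 * (S ^ 2 * (p.1 * (1 / qq p ^ 2))) := by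
      rw [show (S * y) * (S * y) = S ^ 2 * y ^ 2 by ring]
      refine (mul_le_mul_of_nonneg_left hy3 (by positivity)).trans (le_of_eq (by ring))
    exact le_of_mul_le_mul_left (e1.trans e2) (by positivity)
  have esq : ∀ x : ℝ, p.1 ^ 2 * |x| ≤ S * y → p.1 * x ^ 2 ≤ S ^ 2 * (1 / qq p ^ 2) := by
    intro x hx
    have e1 : (p.1 ^ 2 * |x|) ^ 2 ≤ (S * y) ^ 2 := by gcongr
    have e2 : (S * y) ^ 2 ≤ p.1 ^ 3 * (S ^ 2 * (1 / qq p ^ 2)) := by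
      rw [mul_pow]
      refine (mul_le_mul_of_nonneg_left hy3 (by positivity)).trans (le_of_eq (by ring))
    have e3 : (p.1 ^ 2 * |x|) ^ 2 = p.1 ^ 3 * (p.1 * x ^ 2) := by rw [mul_pow, sq_abs]; ring
    rw [e3] at e1
    exact le_of_mul_le_mul_left (e1.trans e2) (by positivity)
  have hk : 0 < 1 / qq p ^ 2 := by positivity
  have hC : S ^ 2 ≤ 1 + S + 2 * S ^ 2 := by nlinarith
  refine ⟨⟨hp, fun i => (h i p hp (hMv i)).1⟩, ?_, ?_, ?_⟩
  · unfold ee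
    have := esq _ b2
    have := esq _ b3
    nlinarith
  · refine (prod _ _ b1 b2).trans ?_
    rw [← mul_assoc]; gcongr
  · refine (prod _ _ b1 b3).trans ?_
    rw [← mul_assoc]; gcongr

/-- product cut-off around all points -/
def XX (a : Fin n → ℝ × ℝ) (s t : ℝ) (p : ℝ × ℝ) : ℝ := 1 - ∑ i, (1 - chi (a i) s t p)

/-- admissible cut-off radii -/
structure Adm (a : Fin n → ℝ × ℝ) (s t : ℝ) : Prop where
  hs : 0 < s
  hst : s < t
  good : ∀ i, GoodDisc a i t
  disj : ∀ i j, i ≠ j → ∀ p, qd (a i) p ≤ t ^ 2 → t ^ 2 ≤ qd (a j) p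

lemma XX_contDiff (a : Fin n → ℝ × ℝ) (s t : ℝ) : ContDiff ℝ 1 (XX a s t) := by
  unfold XX
  refine contDiff_const.sub (ContDiff.sum fun i _ => contDiff_const.sub (chi_contDiff _ _ _))

lemma XX_hasFDerivAt (a : Fin n → ℝ × ℝ) (s t : ℝ) (p : ℝ × ℝ) : HasFDerivAt (XX a s t)
    (L2 (∑ i, mm (a i) s t p * (p.1 - (a i).1)) (∑ i, mm (a i) s t p * (p.2 - (a i).2))) p := by
  have h := HasFDerivAt.fun_sum (u := Finset.univ) fun i _ => hf_sub (hf_const 1 p) (chi_hasFDerivAt (a i) s t p)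
  have h2 := h.const_sub 1
  refine HasFDerivAt.congr_fderiv h2 ?_
  apply L2_ext <;> simp

lemma XX_one {s t : ℝ} (hA : Adm a s t) {p : ℝ × ℝ} (h : ∀ i, t ^ 2 ≤ qd (a i) p) : XX a s t p = 1 := by
  unfold XX
  rw [Finset.sum_eq_zero fun i _ => by rw [chi_one hA.hs hA.hst (h i), sub_self], sub_zero]

lemma XX_in {s t : ℝ} (hA : Adm a s t) {p : ℝ × ℝ} {i : Fin n} (h : qd (a i) p ≤ t ^ 2) :
    XX a s t p = chi (a i) s t p := by
  unfold XX
  rw [Finset.sum_eq_single i, sub_sub_cancel]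
  · intro j _ hj
    rw [chi_one hA.hs hA.hst (hA.disj i j hj.symm p h), sub_self]
  · simp

lemma XX_bd {s t : ℝ} (hA : Adm a s t) (p : ℝ × ℝ) : 0 ≤ XX a s t p ∧ XX a s t p ≤ 1 := by
  by_cases h : ∀ i, t ^ 2 ≤ qd (a i) p
  · rw [XX_one hA h]; norm_num
  · push Not at h
    obtain ⟨i, hi⟩ := h
    rw [XX_in hA hi.le]
    exact ⟨chi_nonneg _ _ _ _, chi_le_one _ _ _ _⟩

lemma XX_zero {s t : ℝ} (hA : Adm a s t) {p : ℝ × ℝ} {i : Fin n} (h : qd (a i) p ≤ s ^ 2) :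
    XX a s t p = 0 := by
  have : s ^ 2 ≤ t ^ 2 := by have := hA.hs; have := hA.hst; gcongr
  rw [XX_in hA (h.trans this), chi_zero hA.hs hA.hst h]

lemma Hp_open : IsOpen Hp := isOpen_lt continuous_const continuous_fst

lemma ee_continuousOn (ha : ∀ i, 0 < (a i).1) : ContinuousOn (ee a) (UU a) := by
  have h1 := (GR_contDiffOn ha).continuousOn
  have h2 := (GZ_contDiffOn ha).continuousOn
  unfold ee
  fun_prop

lemma Xee_continuousOn (ha : ∀ i, 0 < (a i).1) {s t : ℝ} (hA : Adm a s t) :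
    ContinuousOn (fun p => XX a s t p * ee a p) Hp := by
  intro p hp
  apply ContinuousAt.continuousWithinAt
  by_cases h : p ∈ UU a
  · have h1 : ContinuousAt (ee a) p := (ee_continuousOn ha).continuousAt ((UU_open a).mem_nhds h)
    exact (XX_contDiff a s t).continuous.continuousAt.mul h1
  · have : ∃ i, p = a i := by
      by_contra hc; push Not at hc; exact h ⟨hp, hc⟩
    obtain ⟨i, rfl⟩ := this
    have hev : (fun p => XX a s t p * ee a p) =ᶠ[𝓝 (a i)] fun _ => 0 := by
      have hs := hA.hs
      have : {q | qd (a i) q < s ^ 2} ∈ 𝓝 (a i) :=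
        (isOpen_lt (qd_cont _) continuous_const).mem_nhds (by simp only [Set.mem_ofPred_eq, qd_self]; positivity)
      filter_upwards [this] with q hq
      rw [XX_zero hA (le_of_lt hq), zero_mul]
    exact continuousAt_const.congr hev.symm

lemma Xee_integrable (ha : ∀ i, 0 < (a i).1) {s t : ℝ} (hA : Adm a s t) :
    IntegrableOn (fun p => XX a s t p * ee a p) Hp := by
  obtain ⟨C, hC, hfar⟩ := far_total ha
  set K := {p : ℝ × ℝ | 1 / C ≤ vv p} with hK
  have hKc : IsCompact K := vv_compact (by positivity)
  have hKH : K ⊆ Hp := fun p hp => vv_pos_iff (lt_of_lt_of_le (by positivity) hp)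
  have hc := Xee_continuousOn ha hA
  have h1 : IntegrableOn (fun p => XX a s t p * ee a p) K := (hc.mono hKH).integrableOn_compact hKc
  have hm : MeasurableSet (Hp \ K) := Hp_open.measurableSet.diff hKc.measurableSet
  have h2 : IntegrableOn (fun p => XX a s t p * ee a p) (Hp \ K) := by
    refine Integrable.mono' ((qq_integrable.const_mul C).integrableOn) ((hc.mono Set.sdiff_subset).aestronglyMeasurable hm) ?_
    refine (ae_restrict_iff' hm).2 (Eventually.of_forall fun p hp => ?_)
    have hv : C * vv p ≤ 1 := by
      have : vv p < 1 / C := not_le.1 hp.2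
      rw [lt_div_iff₀ hC] at this; linarith
    have h3 := (hfar p hp.1 hv).2.1
    have h4 := XX_bd hA p
    have h5 := ee_nonneg (a := a) hp.1
    rw [Real.norm_eq_abs, abs_of_nonneg (mul_nonneg h4.1 h5)]
    nlinarith
  have := h1.union h2
  rwa [Set.union_sdiff_cancel hKH] at this

lemma PhDD_continuousOn (ha : ∀ i, 0 < (a i).1) (b : ℝ × ℝ) :
    ContinuousOn (fun p => Ph a p * DD a b p) (UU a) :=
  (Ph_contDiffOn ha).continuousOn.mul (DD_continuousOn ha b)

lemma main_id (ha : ∀ i, 0 < (a i).1) {s t : ℝ} (hA : Adm a s t) :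
    ∫ p in Hp, XX a s t p * ee a p = - ∑ i, ∫ p, mm (a i) s t p * (Ph a p * DD a (a i) p) := by
  obtain ⟨C, hC, hfar⟩ := far_total ha
  obtain ⟨B, hB0, hB⟩ := TT_dbound
  have hI : ∀ i, Integrable (fun p => mm (a i) s t p * (Ph a p * DD a (a i) p)) := fun i =>
    mm_mul_integrable hA.hs hA.hst ((PhDD_continuousOn ha _).mono (ann_sub_UU (hA.good i) hA.hs))
  have hmH : ∀ i p, p ∉ Hp → mm (a i) s t p = 0 := fun i p hp =>
    mm_zero_ann hA.hs hA.hst fun h => hp (ann_sub_UU (hA.good i) hA.hs h).1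
  have hvH : ∀ p, p ∉ Hp → vv p ≤ 0 := fun p hp => not_lt.1 fun h => hp (vv_pos_iff h)
  rw [← integral_finsetSum _ fun i _ => hI i, ← integral_indicator Hp_open.measurableSet]
  set f : ℝ × ℝ → ℝ := Hp.indicator (fun p => XX a s t p * ee a p) with hf
  have hfI : Integrable f := (integrable_indicator_iff Hp_open.measurableSet).2 (Xee_integrable ha hA)
  set Y : ℕ → ℝ × ℝ → ℝ := fun N p => XX a s t p * zt N p with hY
  set FL : ℕ → ℝ × ℝ → ℝ := fun N p => Y N p * ee a p with hFL
  set FR : ℕ → ℝ × ℝ → ℝ := fun N p => fderiv ℝ (Y N) p (1, 0) * (Ph a p * GR a p) + fderiv ℝ (Y N) p (0, 1) * (Ph a p * GZ a p) with hFR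
  have hYd : ∀ N p, HasFDerivAt (Y N) (L2 (XX a s t p * fderiv ℝ (zt N) p (1, 0) + (∑ i, mm (a i) s t p * (p.1 - (a i).1)) * zt N p)
      (XX a s t p * fderiv ℝ (zt N) p (0, 1) + (∑ i, mm (a i) s t p * (p.2 - (a i).2)) * zt N p)) p := by
    intro N p
    have h1 := XX_hasFDerivAt a s t p
    have h2 := zt_hasFDerivAt N p
    rw [h2.fderiv]
    refine hf_congr (hf_mul h1 h2) (fun q => rfl) ?_ ?_ <;> simp <;> ring
  have hFRe : ∀ N p, FR N p = zt N p * ∑ i, mm (a i) s t p * (Ph a p * DD a (a i) p)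
      + XX a s t p * (fderiv ℝ (zt N) p (1, 0) * (Ph a p * GR a p) + fderiv ℝ (zt N) p (0, 1) * (Ph a p * GZ a p)) := by
    intro N p
    have e : ∑ i, mm (a i) s t p * (Ph a p * DD a (a i) p) =
      (∑ i, mm (a i) s t p * (p.1 - (a i).1)) * (Ph a p * GR a p) + (∑ i, mm (a i) s t p * (p.2 - (a i).2)) * (Ph a p * GZ a p) := by
      rw [Finset.sum_mul, Finset.sum_mul, ← Finset.sum_add_distrib]
      refine Finset.sum_congr rfl fun i _ => ?_
      unfold DD; ring
    simp only [hFR]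
    rw [(hYd N p).fderiv, e]
    simp only [L2_apply, mul_one, mul_zero, add_zero, zero_add]
    ring
  have hibp : ∀ᶠ N : ℕ in atTop, Integrable (FL N) ∧ Integrable (FR N) ∧ ∫ p, FL N p = - ∫ p, FR N p := by
    filter_upwards [eventually_gt_atTop 0] with N hN
    have hN' : (0:ℝ) < N := by exact_mod_cast hN
    have hsub : Function.support (Y N) ⊆ {p | 1 / (N:ℝ) ≤ vv p} ∩ {p | ∀ i, s ^ 2 ≤ qd (a i) p} := by
      intro p hp
      constructor
      · by_contra hc
        apply hp
        have : vv p < 1 / (N:ℝ) := not_le.1 hc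
        rw [lt_div_iff₀ hN'] at this
        simp only [hY]
        rw [zt_zero (by linarith), mul_zero]
      · intro i
        by_contra hc
        apply hp
        simp only [hY]
        rw [XX_zero hA (not_le.1 hc).le, zero_mul]
    have hcl2 : IsClosed {p : ℝ × ℝ | ∀ i, s ^ 2 ≤ qd (a i) p} := by
      have : {p : ℝ × ℝ | ∀ i, s ^ 2 ≤ qd (a i) p} = ⋂ i, {p | s ^ 2 ≤ qd (a i) p} := by ext; simp
      rw [this]
      exact isClosed_iInter fun i => isClosed_le continuous_const (qd_cont _)
    have hcpt : IsCompact ({p | 1 / (N:ℝ) ≤ vv p} ∩ {p | ∀ i, s ^ 2 ≤ qd (a i) p}) :=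
      (vv_compact (by positivity)).inter_right hcl2
    have hts : tsupport (Y N) ⊆ {p | 1 / (N:ℝ) ≤ vv p} ∩ {p | ∀ i, s ^ 2 ≤ qd (a i) p} :=
      closure_minimal hsub hcpt.isClosed
    have hUU : {p | 1 / (N:ℝ) ≤ vv p} ∩ {p | ∀ i, s ^ 2 ≤ qd (a i) p} ⊆ UU a := by
      rintro p ⟨h1, h2⟩
      refine ⟨vv_pos_iff (lt_of_lt_of_le (by positivity) h1), fun i hi => ?_⟩
      have := h2 i
      rw [hi, qd_self] at this
      have := hA.hs
      have : 0 < s ^ 2 := by positivity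
      linarith
    exact ibp (UU_open a) ((Ph_contDiffOn ha).mul (GR_contDiffOn ha)) ((Ph_contDiffOn ha).mul (GZ_contDiffOn ha))
      (fun p hp => PhG_div ha hp) ((XX_contDiff a s t).mul (zt_contDiff N))
      (hcpt.of_isClosed_subset (isClosed_tsupport _) hts) (hts.trans hUU)
  have hNv : ∀ p ∈ Hp, ∀ᶠ N : ℕ in atTop, 2 ≤ (N:ℝ) * vv p := by
    intro p hp
    have hv := vv_pos hp
    filter_upwards [eventually_ge_atTop (Nat.ceil (2 / vv p))] with N hN
    have h1 : 2 / vv p ≤ N := (Nat.le_ceil _).trans (by exact_mod_cast hN)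
    rwa [div_le_iff₀ hv] at h1
  have hzt : ∀ N p, p ∉ Hp → zt (N:ℕ) p = 0 := by
    intro N p hp
    refine zt_zero ?_
    have := hvH p hp
    have h0 : (0:ℝ) ≤ N := Nat.cast_nonneg N
    nlinarith
  have hztd : ∀ N p, p ∉ Hp → fderiv ℝ (zt (N:ℕ)) p = 0 := by
    intro N p hp
    refine zt_fderiv_zero (Or.inl ?_)
    have := hvH p hp
    have h0 : (0:ℝ) ≤ N := Nat.cast_nonneg N
    nlinarith
  have limL : Tendsto (fun N => ∫ p, FL N p) atTop (𝓝 (∫ p, f p)) := by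
    refine tendsto_integral_filter_of_dominated_convergence f (hibp.mono fun N h => h.1.aestronglyMeasurable) ?_ hfI ?_
    · refine Eventually.of_forall fun N => Eventually.of_forall fun p => ?_
      by_cases hp : p ∈ Hp
      · rw [hf, Set.indicator_of_mem hp]
        simp only [hFL, hY]
        have h4 := XX_bd hA p
        have h5 := ee_nonneg (a := a) hp
        have h6 : 0 ≤ zt N p := TT_nonneg _
        have h7 : zt N p ≤ 1 := TT_le_one _
        rw [Real.norm_eq_abs, abs_of_nonneg (mul_nonneg (mul_nonneg h4.1 h6) h5)]
        refine mul_le_mul_of_nonneg_right ?_ h5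
        nlinarith
      · rw [hf, Set.indicator_of_notMem hp]
        simp only [hFL, hY]
        rw [hzt N p hp]; simp
    · refine Eventually.of_forall fun p => ?_
      refine tendsto_const_nhds.congr' ?_
      by_cases hp : p ∈ Hp
      · filter_upwards [hNv p hp] with N hN
        rw [hf, Set.indicator_of_mem hp]
        simp only [hFL, hY]
        rw [zt_one hN, mul_one]
      · refine Eventually.of_forall fun N => ?_
        rw [hf, Set.indicator_of_notMem hp]
        simp only [hFL, hY]
        rw [hzt N p hp]; simp
  have limR : Tendsto (fun N => ∫ p, FR N p) atTop (𝓝 (∫ p, ∑ i, mm (a i) s t p * (Ph a p * DD a (a i) p))) := by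
    refine tendsto_integral_filter_of_dominated_convergence
      (fun p => |∑ i, mm (a i) s t p * (Ph a p * DD a (a i) p)| + 4 * B * C * (1 / qq p ^ 2))
      (hibp.mono fun N h => h.2.1.aestronglyMeasurable) ?_
      ((integrable_finsetSum _ fun i _ => hI i).abs.add (qq_integrable.const_mul _)) ?_
    · filter_upwards [eventually_ge_atTop (Nat.ceil (2 * C))] with N hN
      refine Eventually.of_forall fun p => ?_
      have hNC : 2 * C ≤ N := (Nat.le_ceil _).trans (by exact_mod_cast hN)
      have hq := qq_pos p
      have hk : 0 < 1 / qq p ^ 2 := by positivity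
      have h6 : 0 ≤ zt N p := TT_nonneg _
      have h7 : zt N p ≤ 1 := TT_le_one _
      have h4 := XX_bd hA p
      rw [hFRe, Real.norm_eq_abs]
      refine (abs_add_le _ _).trans (add_le_add ?_ ?_)
      · rw [abs_mul, abs_of_nonneg h6]
        exact mul_le_of_le_one_left (abs_nonneg _) h7
      · rw [abs_mul, abs_of_nonneg h4.1]
        refine (mul_le_of_le_one_left (abs_nonneg _) h4.2).trans ?_
        by_cases hz : (N:ℝ) * vv p ≤ 1 ∨ 2 ≤ (N:ℝ) * vv p
        · rw [zt_fderiv_zero hz]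
          simp only [zero_apply, zero_mul, add_zero, abs_zero]
          positivity
        · push Not at hz
          have hp : 0 < p.1 := by
            by_contra hc
            have := hvH p hc
            have h0 : (0:ℝ) ≤ N := Nat.cast_nonneg N
            nlinarith
          have hv := vv_pos hp
          have hCv : C * vv p ≤ 1 := by nlinarith
          obtain ⟨-, -, f1, f2⟩ := hfar p hp hCv
          have hN0 : (0:ℝ) < N := by linarith
          obtain ⟨g1, g2⟩ := zt_grad hB0 hB hN0 hp
          have e : 4 * B * C * (1 / qq p ^ 2) = 2 * B / p.1 * (C * p.1 * (1 / qq p ^ 2)) + 2 * B / p.1 * (C * p.1 * (1 / qq p ^ 2)) := by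
            field_simp; ring
          rw [e]
          refine (abs_add_le _ _).trans ?_
          have gr : ∀ x y X Y : ℝ, |x| ≤ X → |y| ≤ Y → |x * y| ≤ X * Y := fun x y X Y h1 h2 => by
            rw [abs_mul]
            exact mul_le_mul h1 h2 (abs_nonneg _) ((abs_nonneg _).trans h1)
          exact add_le_add (gr _ _ _ _ g1 f1) (gr _ _ _ _ g2 f2)
    · refine Eventually.of_forall fun p => ?_
      refine tendsto_const_nhds.congr' ?_
      by_cases hp : p ∈ Hp
      · filter_upwards [hNv p hp] with N hN
        rw [hFRe, zt_one hN, zt_fderiv_zero (Or.inr hN)]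
        simp
      · refine Eventually.of_forall fun N => ?_
        show _ = FR N p
        rw [hFRe, hztd N p hp, hzt N p hp]
        simp [hmH _ p hp]
  have heq : (fun N => ∫ p, FL N p) =ᶠ[atTop] fun N => - ∫ p, FR N p := hibp.mono fun N h => h.2.2
  exact tendsto_nhds_unique (limL.congr' heq) limR.neg

end mainid

lemma qd_tri (a b q : ℝ × ℝ) : Real.sqrt (qd b a) ≤ Real.sqrt (qd a q) + Real.sqrt (qd b q) := by
  have key : ∀ x y : ℝ × ℝ, Real.sqrt (qd x y) = ‖(⟨y.1 - x.1, y.2 - x.2⟩ : ℂ)‖ := by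
    intro x y
    rw [Complex.norm_def, Complex.normSq_apply, qd]
    congr 1; ring
  rw [key, key, key]
  have e : (⟨a.1 - b.1, a.2 - b.2⟩ : ℂ) = ⟨q.1 - b.1, q.2 - b.2⟩ - ⟨q.1 - a.1, q.2 - a.2⟩ := by
    apply Complex.ext <;> simp
  rw [e]
  refine (norm_sub_le _ _).trans (le_of_eq (add_comm _ _))

lemma qd_fst (a p : ℝ × ℝ) : |p.1 - a.1| ≤ Real.sqrt (qd a p) := by
  apply Real.abs_le_sqrt; unfold qd; nlinarith [sq_nonneg (p.2 - a.2)]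
lemma qd_snd (a p : ℝ × ℝ) : |p.2 - a.2| ≤ Real.sqrt (qd a p) := by
  apply Real.abs_le_sqrt; unfold qd; nlinarith [sq_nonneg (p.1 - a.1)]

lemma log_near {x : ℝ} (h : |x - 1| ≤ 1 / 2) : |Real.log x| ≤ 2 * |x - 1| := by
  have h1 := (abs_le.1 h).1
  have hx : 0 < x := by linarith
  have u := Real.log_le_sub_one_of_pos hx
  have l := Real.one_sub_inv_le_log_of_pos hx
  have l2 : 1 - x⁻¹ = (x - 1) / x := by field_simp
  rw [l2] at l
  have l3 : |(x - 1) / x| ≤ 2 * |x - 1| := by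
    rw [abs_div, abs_of_pos hx, div_le_iff₀ hx]
    nlinarith [abs_nonneg (x - 1)]
  have l4 := (abs_le.1 l3).1
  rw [abs_le]
  refine ⟨by linarith, ?_⟩
  have := le_abs_self (x - 1)
  have := abs_nonneg (x - 1)
  linarith

set_option maxHeartbeats 1000000 in
lemma own_term {a : ℝ × ℝ} {d ρ : ℝ} (hd : 0 < d) (hR : 4 * d ≤ a.1) (hρ : 0 < ρ) (hρd : ρ ≤ d / 8)
    {p : ℝ × ℝ} (hσ : |Real.sqrt (qd a p) - ρ| ≤ ρ * (ρ / d / 2)) :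
    |ph a p - a.1 * (Real.log (a.1 / ρ) + 3 * Real.log 2 - 2)| ≤ a.1 * (ρ / d) * (11 - Real.log (ρ / d)) := by
  set R := a.1 with hRdef
  set r := p.1 with hrdef
  set σ := Real.sqrt (qd a p) with hσdef
  set τ := ρ / d with hτ
  have hτ0 : 0 < τ := by positivity
  have hτ8 : τ ≤ 1 / 8 := by rw [hτ, div_le_iff₀ hd]; linarith
  have hR0 : 0 < R := by linarith
  have hρτ : ρ = τ * d := by rw [hτ]; field_simp
  have hρR : ρ ≤ τ * R / 4 := by rw [hρτ]; nlinarith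
  have hσ1 : σ ≤ 17 / 16 * ρ := by
    have := (abs_le.1 hσ).2
    nlinarith
  have hσ2 : 15 / 16 * ρ ≤ σ := by
    have := (abs_le.1 hσ).1
    nlinarith
  have hσ0 : 0 < σ := by linarith
  have hσR : σ ≤ τ * R / 3 := by linarith
  have hσR' : σ ≤ R / 24 := by nlinarith
  have hrR : |r - R| ≤ σ := qd_fst a p
  obtain ⟨hr1, hr2⟩ := abs_le.1 hrR
  have hr0 : 0 < r := by linarith
  have hpa : p ≠ a := by
    intro h
    have : σ = 0 := by rw [hσdef, h, qd_self, Real.sqrt_zero]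
    linarith
  set W := Real.sqrt (r * R) with hW
  have hW2 : W ^ 2 = r * R := Real.sq_sqrt (by positivity)
  have hW0 : 0 < W := Real.sqrt_pos.2 (by positivity)
  have hWR : |W - R| ≤ σ := by
    have e : |W - R| * (W + R) = |r - R| * R := by
      rw [← abs_of_pos (show 0 < W + R by linarith), ← abs_mul, ← abs_of_pos hR0, ← abs_mul, abs_of_pos hR0]
      congr 1
      linear_combination hW2
    have : |W - R| * R ≤ σ * R := by
      have h1 : |W - R| * R ≤ |W - R| * (W + R) := by
        have := abs_nonneg (W - R)
        gcongr; linarith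
      have h2 : |r - R| * R ≤ σ * R := by gcongr
      linarith
    exact le_of_mul_le_mul_right this hR0
  obtain ⟨hW1, hW3⟩ := abs_le.1 hWR
  set h := hm a p with hh
  have hh0 : 0 < h := hm_pos hR0 hr0 hpa
  have hsh : 2 * W * Real.sqrt h = σ := sqrt_hm hR0 hr0
  set u := Real.sqrt h with hu
  have hu0 : 0 < u := Real.sqrt_pos.2 hh0
  have huτ : u ≤ τ / 3 := by
    have h1 : R * u ≤ 2 * W * u := by gcongr; linarith
    have h2 : R * u ≤ R * (τ / 3) := by rw [hsh] at h1; linarith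
    exact le_of_mul_le_mul_left h2 hR0
  have hhu : h = u ^ 2 := (Real.sq_sqrt hh0.le).symm
  have hh1 : h ≤ 1 := by rw [hhu]; nlinarith
  have hK := KK_asymp hh0 hh1
  rw [← hu] at hK
  have hlogh : Real.log h / 2 = Real.log σ - Real.log 2 - Real.log W := by
    have e1 : Real.log h = 2 * Real.log u := by rw [hhu, Real.log_pow]; norm_num
    have e2 : Real.log σ = Real.log 2 + Real.log W + Real.log u := by
      rw [← hsh, Real.log_mul (by positivity) hu0.ne', Real.log_mul (by norm_num) hW0.ne']
    linarith
  have hl1 : |Real.log (W / R)| ≤ 2 * (τ / 3) := by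
    have e : |W / R - 1| ≤ τ / 3 := by
      rw [show W / R - 1 = (W - R) / R by field_simp, abs_div, abs_of_pos hR0, div_le_iff₀ hR0]
      linarith
    exact (log_near (by linarith)).trans (by linarith)
  have hl2 : |Real.log (σ / ρ)| ≤ 2 * (τ / 2) := by
    have e : |σ / ρ - 1| ≤ τ / 2 := by
      rw [show σ / ρ - 1 = (σ - ρ) / ρ by field_simp, abs_div, abs_of_pos hρ, div_le_iff₀ hρ]
      linarith
    exact (log_near (by linarith)).trans (by linarith)
  rw [Real.log_div hW0.ne' hR0.ne'] at hl1
  rw [Real.log_div hσ0.ne' hρ.ne'] at hl2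
  set k := Real.log (R / ρ) + 3 * Real.log 2 - 2 with hk
  have hKk : |KK h - k| ≤ 4 * τ := by
    rw [hk, Real.log_div hR0.ne' hρ.ne']
    have e : KK h - (Real.log R - Real.log ρ + 3 * Real.log 2 - 2) =
      (KK h - (2 * Real.log 2 - Real.log h / 2 - 2)) + (Real.log W - Real.log R) - (Real.log σ - Real.log ρ) := by
      rw [hlogh]; ring
    rw [e]
    refine (abs_sub _ _).trans ?_
    refine (add_le_add_left (abs_add_le _ _) _).trans ?_
    linarith
  have hkb : |k| ≤ R / d - Real.log τ + 1 := by
    have e1 : Real.log (R / ρ) = Real.log (R / d) - Real.log τ := by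
      rw [hτ, Real.log_div hR0.ne' hρ.ne', Real.log_div hR0.ne' hd.ne', Real.log_div hρ.ne' hd.ne']; ring
    have e2 : Real.log (R / d) ≤ R / d - 1 := Real.log_le_sub_one_of_pos (by positivity)
    have e3 : 0 ≤ Real.log (R / ρ) := Real.log_nonneg (by rw [le_div_iff₀ hρ]; linarith)
    have := Real.log_two_gt_d9
    have := Real.log_two_lt_d9
    rw [abs_le]
    constructor <;> rw [hk] <;> linarith
  have hlτ : Real.log τ < 0 := Real.log_neg hτ0 (by linarith)
  have e0 : ph a p = W * KK h := rfl
  rw [e0, show W * KK h - R * k = W * (KK h - k) + (W - R) * k by ring]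
  refine (abs_add_le _ _).trans ?_
  rw [abs_mul, abs_mul, abs_of_pos hW0]
  have f1 : W * |KK h - k| ≤ 2 * R * (4 * τ) := by gcongr; linarith
  have f2 : |W - R| * |k| ≤ 17 / 16 * ρ * (R / d - Real.log τ + 1) := by
    refine mul_le_mul (hWR.trans hσ1) hkb (abs_nonneg _) (by positivity)
  have f3 : ρ * (R / d) = R * τ := by rw [hτ]; field_simp
  have f4 : ρ * (1 - Real.log τ) ≤ τ * R / 4 * (1 - Real.log τ) := by
    gcongr; linarith
  have f5 : 0 < R * τ := by positivity
  have f6 : R * τ * Real.log τ < 0 := mul_neg_of_pos_of_neg f5 hlτ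
  have f7 : 17 / 16 * ρ * (R / d - Real.log τ + 1) = 17 / 16 * (ρ * (R / d)) + 17 / 16 * (ρ * (1 - Real.log τ)) := by ring
  have f8 : τ * R / 4 * (1 - Real.log τ) = (R * τ) / 4 - (R * τ * Real.log τ) / 4 := by ring
  have f9 : R * τ * (11 - Real.log τ) = 11 * (R * τ) - R * τ * Real.log τ := by ring
  rw [f9]
  rw [f7, f3] at f2
  rw [f8] at f4
  have f10 : 2 * R * (4 * τ) = 8 * (R * τ) := by ring
  rw [f10] at f1
  linarith

lemma L2_norm (x y : ℝ) : ‖L2 x y‖ ≤ |x| + |y| := by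
  refine ContinuousLinearMap.opNorm_le_bound _ (by positivity) fun v => ?_
  have h1 : |v.1| ≤ ‖v‖ := norm_fst_le v
  have h2 : |v.2| ≤ ‖v‖ := norm_snd_le v
  rw [L2_apply, Real.norm_eq_abs, add_mul]
  refine (abs_add_le _ _).trans ?_
  rw [abs_mul, abs_mul]
  gcongr

/-- bounds for a remote ring near `a` -/
lemma other_pt {a b : ℝ × ℝ} {d : ℝ} (hd : 0 < d) (hR : 4 * d ≤ a.1) (hb : 0 < b.1) (hab : 4 * d ≤ Real.sqrt (qd b a))
    {q : ℝ × ℝ} (hq : Real.sqrt (qd a q) ≤ d / 4) :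
    0 < q.1 ∧ a.1 / 2 ≤ q.1 ∧ q ≠ b ∧ q.1 * |gR b q| ≤ 5 * a.1 / d ∧ q.1 * |gZ b q| ≤ 5 * a.1 / d := by
  have h1 := qd_tri a b q
  have h2 : 3 * d ≤ Real.sqrt (qd b q) := by linarith
  obtain ⟨h3, h4⟩ := abs_le.1 (qd_fst a q)
  obtain ⟨h5, h6⟩ := abs_le.1 (qd_fst b q)
  have hq0 : 0 < q.1 := by linarith
  have hqb : q ≠ b := by
    intro h
    rw [h, qd_self, Real.sqrt_zero] at h2
    linarith
  set D := Real.sqrt (qd b q) with hD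
  have hD0 : 0 < D := by linarith
  have key : ∀ g : ℝ, D * (q.1 * |g|) ≤ 5 * b.1 → q.1 * |g| ≤ 5 * a.1 / d := by
    intro g hg
    rw [le_div_iff₀ hd]
    have e1 : D * (q.1 * |g|) ≤ 5 * (2 * a.1 + D) := by linarith
    have e2 : 5 * (2 * a.1 + D) * d ≤ D * (5 * a.1) := by nlinarith
    have e3 : D * (q.1 * |g| * d) ≤ D * (5 * a.1) := by nlinarith
    exact le_of_mul_le_mul_left e3 hD0
  exact ⟨hq0, by linarith, hqb, key _ (gR_bound hb hq0 hqb), key _ (gZ_bound hb hq0 hqb)⟩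

lemma other_term {a b : ℝ × ℝ} {d : ℝ} (hd : 0 < d) (hR : 4 * d ≤ a.1) (hb : 0 < b.1) (hab : 4 * d ≤ Real.sqrt (qd b a))
    {p : ℝ × ℝ} (hp : Real.sqrt (qd a p) ≤ d / 4) :
    |ph b p - ph b a| ≤ 10 * a.1 / d * Real.sqrt (qd a p) := by
  have hseg : ∀ q ∈ segment ℝ a p, Real.sqrt (qd a q) ≤ d / 4 := by
    intro q hq
    rw [segment_eq_image'] at hq
    obtain ⟨θ, hθ, rfl⟩ := hq
    refine le_trans (Real.sqrt_le_sqrt ?_) hp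
    have e : qd a (a + θ • (p - a)) = θ ^ 2 * qd a p := by simp [qd]; ring
    rw [e]
    have := qd_nonneg a p
    have h1 := hθ.1
    have h2 := hθ.2
    have : θ ^ 2 ≤ 1 := by nlinarith
    nlinarith
  have hR0 : 0 < a.1 := by linarith
  have := Convex.norm_image_sub_le_of_norm_hasFDerivWithin_le (f := ph b)
    (f' := fun q => L2 (q.1 * gR b q) (q.1 * gZ b q)) (C := 10 * a.1 / d) (s := segment ℝ a p) (x := a) (y := p)
    (fun q hq => by
      obtain ⟨h0, -, h1, -, -⟩ := other_pt hd hR hb hab (hseg q hq)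
      exact (ph_hasFDerivAt hb h0 h1).hasFDerivWithinAt)
    (fun q hq => by
      obtain ⟨h0, -, h1, h2, h3⟩ := other_pt hd hR hb hab (hseg q hq)
      refine (L2_norm _ _).trans ?_
      rw [abs_mul, abs_mul, abs_of_pos h0]
      have : 10 * a.1 / d = 5 * a.1 / d + 5 * a.1 / d := by ring
      linarith)
    (convex_segment a p) (left_mem_segment ℝ a p) (right_mem_segment ℝ a p)
  rw [Real.norm_eq_abs] at this
  refine this.trans ?_
  gcongr
  rw [Prod.norm_def]
  exact max_le (qd_fst a p) (qd_snd a p)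

lemma Dd_other {a b : ℝ × ℝ} {d : ℝ} (hd : 0 < d) (hR : 4 * d ≤ a.1) (hb : 0 < b.1) (hab : 4 * d ≤ Real.sqrt (qd b a))
    {p : ℝ × ℝ} (hp : Real.sqrt (qd a p) ≤ d / 4) : |Dd a b p| ≤ 20 := by
  obtain ⟨h0, hh, h1, h2, h3⟩ := other_pt hd hR hb hab hp
  have hR0 : 0 < a.1 := by linarith
  have key : ∀ g x : ℝ, p.1 * |g| ≤ 5 * a.1 / d → |x| ≤ d / 4 → |g * x| ≤ 10 := by
    intro g x hg hx
    rw [abs_mul]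
    have e1 : (p.1 * |g|) * |x| ≤ 5 * a.1 / d * (d / 4) := by gcongr
    have e2 : 5 * a.1 / d * (d / 4) = 5 * a.1 / 4 := by field_simp
    have e3 : p.1 * (|g| * |x|) ≤ p.1 * 10 := by nlinarith
    exact le_of_mul_le_mul_left e3 h0
  have k1 := key _ (p.1 - a.1) h2 ((qd_fst a p).trans hp)
  have k2 := key _ (p.2 - a.2) h3 ((qd_snd a p).trans hp)
  unfold Dd
  refine (abs_add_le _ _).trans ?_
  linarith

lemma Dd_own {a : ℝ × ℝ} {d : ℝ} (hd : 0 < d) (hR : 4 * d ≤ a.1)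
    {p : ℝ × ℝ} (hp : Real.sqrt (qd a p) ≤ d / 4) (hpa : p ≠ a) : |Dd a a p| ≤ 20 := by
  have hR0 : 0 < a.1 := by linarith
  obtain ⟨h3, h4⟩ := abs_le.1 (qd_fst a p)
  have h0 : 0 < p.1 := by linarith
  have key : ∀ g x : ℝ, Real.sqrt (qd a p) * (p.1 * |g|) ≤ 5 * a.1 → |x| ≤ Real.sqrt (qd a p) → |g * x| ≤ 10 := by
    intro g x hg hx
    rw [abs_mul]
    have e1 : |x| * (p.1 * |g|) ≤ Real.sqrt (qd a p) * (p.1 * |g|) := by gcongr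
    have e3 : p.1 * (|g| * |x|) ≤ p.1 * 10 := by nlinarith
    exact le_of_mul_le_mul_left e3 h0
  have k1 := key _ (p.1 - a.1) (gR_bound hR0 h0 hpa) (qd_fst a p)
  have k2 := key _ (p.2 - a.2) (gZ_bound hR0 h0 hpa) (qd_snd a p)
  unfold Dd
  refine (abs_add_le _ _).trans ?_
  linarith

section final
variable {n : ℕ} {a : Fin n → ℝ × ℝ}

/-- `d` is a lower bound for a quarter of the separation of the configuration -/
structure Cfg (a : Fin n → ℝ × ℝ) (d : ℝ) : Prop where
  hd : 0 < d
  h1 : ∀ i, 4 * d ≤ (a i).1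
  h2 : ∀ i j, i ≠ j → 4 * d ≤ Real.sqrt (qd (a j) (a i))

lemma Cfg.pos {d : ℝ} (hC : Cfg a d) (i : Fin n) : 0 < (a i).1 := by
  have := hC.hd; have := hC.h1 i; linarith

lemma Cfg.adm {d s t : ℝ} (hC : Cfg a d) (hs : 0 < s) (hst : s < t) (ht : t ≤ d / 4) : Adm a s t := by
  have hd := hC.hd
  have ht0 : 0 < t := by linarith
  have far : ∀ i j, i ≠ j → ∀ p, qd (a i) p ≤ t ^ 2 → 3 * d ≤ Real.sqrt (qd (a j) p) := by
    intro i j hij p hp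
    have e1 : Real.sqrt (qd (a i) p) ≤ t := Real.sqrt_le_iff.2 ⟨ht0.le, hp⟩
    have e2 := qd_tri (a i) (a j) p
    have e3 := hC.h2 i j hij
    linarith
  refine ⟨hs, hst, fun i p hp hpa => ⟨?_, fun j hj => ?_⟩, fun i j hij p hp => ?_⟩
  · have e1 : Real.sqrt (qd (a i) p) ≤ t := Real.sqrt_le_iff.2 ⟨ht0.le, hp⟩
    have e2 := (abs_le.1 (qd_fst (a i) p)).1
    have := hC.h1 i
    linarith
  · by_cases hij : i = j
    · rw [hij] at hpa; exact hpa hj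
    · have := far i j hij p hp
      rw [hj, qd_self, Real.sqrt_zero] at this
      linarith
  · have h := far i j hij p hp
    have h3 : t ≤ Real.sqrt (qd (a j) p) := by linarith
    exact (Real.le_sqrt ht0.le (qd_nonneg _ _)).1 h3

/-- the bracket of the expansion -/
def cc (a : Fin n → ℝ × ℝ) (ρ : ℝ) (i : Fin n) : ℝ :=
  Real.log ((a i).1 / ρ) + (∑ j ∈ Finset.univ.erase i, Avec (a j) (a i)) + 3 * Real.log 2 - 2

lemma log_small {τ : ℝ} (h0 : 0 < τ) (h : τ ≤ 1 / 8) : 2 ≤ - Real.log τ := by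
  have h1 : Real.log τ ≤ Real.log (1 / 8) := Real.log_le_log h0 h
  have h2 : Real.log (1 / 8 : ℝ) = - (3 * Real.log 2) := by
    rw [show (1 / 8 : ℝ) = (2 ^ 3)⁻¹ by norm_num, Real.log_inv, Real.log_pow]; norm_num
  have := Real.log_two_gt_d9
  linarith

lemma Ph_near {d ρ : ℝ} (hC : Cfg a d) (hinj : Function.Injective a) (hρ : 0 < ρ) (hρd : ρ ≤ d / 8) (i : Fin n) {p : ℝ × ℝ}
    (hσ : |Real.sqrt (qd (a i) p) - ρ| ≤ ρ * (ρ / d / 2)) :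
    |Ph a p - (a i).1 * cc a ρ i| ≤ (7 + 6 * n) * ((a i).1 * (ρ / d) * (- Real.log (ρ / d))) := by
  have hd := hC.hd
  have hR0 := hC.pos i
  set τ := ρ / d with hτ
  have hτ0 : 0 < τ := by positivity
  have hτ8 : τ ≤ 1 / 8 := by rw [hτ, div_le_iff₀ hd]; linarith
  have hlog := log_small hτ0 hτ8
  have hσ1 : Real.sqrt (qd (a i) p) ≤ 17 / 16 * ρ := by
    have := (abs_le.1 hσ).2
    nlinarith
  have hσ2 : Real.sqrt (qd (a i) p) ≤ d / 4 := by linarith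
  have e1 : Ph a p = ph (a i) p + ∑ j ∈ Finset.univ.erase i, ph (a j) p :=
    (Finset.add_sum_erase Finset.univ (fun j => ph (a j) p) (Finset.mem_univ i)).symm
  have e2 : (a i).1 * cc a ρ i = (a i).1 * (Real.log ((a i).1 / ρ) + 3 * Real.log 2 - 2) + ∑ j ∈ Finset.univ.erase i, ph (a j) (a i) := by
    have : ∑ j ∈ Finset.univ.erase i, ph (a j) (a i) = (a i).1 * ∑ j ∈ Finset.univ.erase i, Avec (a j) (a i) := by
      rw [Finset.mul_sum]
      refine Finset.sum_congr rfl fun j hj => ?_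
      exact (Avec_eq (hC.pos j) hR0 fun h => (Finset.ne_of_mem_erase hj) (hinj h).symm).symm
    rw [this, cc]; ring
  have e3 : Ph a p - (a i).1 * cc a ρ i = (ph (a i) p - (a i).1 * (Real.log ((a i).1 / ρ) + 3 * Real.log 2 - 2))
      + ∑ j ∈ Finset.univ.erase i, (ph (a j) p - ph (a j) (a i)) := by
    rw [e1, e2, Finset.sum_sub_distrib]; ring
  have b1 := own_term hd (hC.h1 i) hρ hρd hσ
  have b2 : |∑ j ∈ Finset.univ.erase i, (ph (a j) p - ph (a j) (a i))| ≤ n * (11 * ((a i).1 * τ)) := by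
    refine (Finset.abs_sum_le_sum_abs _ _).trans ?_
    refine (Finset.sum_le_card_nsmul _ _ (11 * ((a i).1 * τ)) fun j hj => ?_).trans ?_
    · refine (other_term hd (hC.h1 i) (hC.pos j) (hC.h2 i j (Finset.ne_of_mem_erase hj).symm) hσ2).trans ?_
      have : 10 * (a i).1 / d * Real.sqrt (qd (a i) p) ≤ 10 * (a i).1 / d * (17 / 16 * ρ) := by gcongr
      refine this.trans ?_
      have e : 10 * (a i).1 / d * (17 / 16 * ρ) = 170 / 16 * ((a i).1 * τ) := by rw [hτ]; ring
      rw [e]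
      have : 0 < (a i).1 * τ := by positivity
      linarith
    · rw [nsmul_eq_mul]
      have : ((Finset.univ.erase i).card : ℝ) ≤ n := by
        exact_mod_cast (Finset.card_le_univ _).trans (by simp)
      gcongr
  rw [e3]
  refine (abs_add_le _ _).trans ?_
  have hx : 0 < (a i).1 * τ := by positivity
  set x := (a i).1 * τ with hxdef
  have hn : (0:ℝ) ≤ n := Nat.cast_nonneg n
  have hnx : 0 ≤ n * x := by positivity
  set l := - Real.log τ with hl
  have g1 : x * (11 - Real.log τ) ≤ 7 * (x * l) := by nlinarith
  have g2 : n * (11 * x) ≤ 6 * (n * x * l) := by nlinarith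
  have g3 : (7 + 6 * (n:ℝ)) * (x * l) = 7 * (x * l) + 6 * (n * x * l) := by ring
  rw [g3]
  linarith

lemma DD_bound {d : ℝ} (hC : Cfg a d) (i : Fin n) {p : ℝ × ℝ} (hσ : Real.sqrt (qd (a i) p) ≤ d / 4) (hp : p ≠ a i) :
    |DD a (a i) p| ≤ n * 20 := by
  rw [DD_eq]
  refine (Finset.abs_sum_le_sum_abs _ _).trans ?_
  refine (Finset.sum_le_card_nsmul _ _ 20 fun j _ => ?_).trans (by simp)
  by_cases h : i = j
  · subst h; exact Dd_own hC.hd (hC.h1 i) hσ hp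
  · exact Dd_other hC.hd (hC.h1 i) (hC.pos j) (hC.h2 i j h) hσ

lemma core_int {d ρ s t : ℝ} (hC : Cfg a d) (hinj : Function.Injective a) (hρ : 0 < ρ) (hρd : ρ ≤ d / 8)
    (hs : 0 < s) (hst : s < t) (hs' : ρ * (1 - ρ / d / 2) ≤ s) (ht' : t ≤ ρ * (1 + ρ / d / 2)) (i : Fin n) :
    |-(∫ p, mm (a i) s t p * (Ph a p * DD a (a i) p)) - 2 * π * ((a i).1 * cc a ρ i)| ≤
      2 * π * (n * 20 * ((7 + 6 * n) * ((a i).1 * (ρ / d) * (- Real.log (ρ / d))))) := by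
  have hd := hC.hd
  have ha := hC.pos
  set τ := ρ / d with hτ
  have hτ0 : 0 < τ := by positivity
  have hτ8 : τ ≤ 1 / 8 := by rw [hτ, div_le_iff₀ hd]; linarith
  have ht4 : t ≤ d / 4 := by nlinarith
  have hA := hC.adm hs hst ht4
  set c := (a i).1 * cc a ρ i with hc
  set K := (7 + 6 * (n:ℝ)) * ((a i).1 * τ * (- Real.log τ)) with hK
  have hsub := ann_sub_UU (hA.good i) hs
  have I1 : Integrable (fun p => mm (a i) s t p * (Ph a p * DD a (a i) p)) :=
    mm_mul_integrable hs hst ((PhDD_continuousOn ha _).mono hsub)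
  have I2 : Integrable (fun p => mm (a i) s t p * DD a (a i) p) :=
    mm_mul_integrable hs hst ((DD_continuousOn ha _).mono hsub)
  have hfl := flux ha hinj (hA.good i) hs hst
  have e : -(∫ p, mm (a i) s t p * (Ph a p * DD a (a i) p)) - 2 * π * c =
      - ∫ p, mm (a i) s t p * ((Ph a p - c) * DD a (a i) p) := by
    have : ∫ p, mm (a i) s t p * ((Ph a p - c) * DD a (a i) p) =
        (∫ p, mm (a i) s t p * (Ph a p * DD a (a i) p)) - c * ∫ p, mm (a i) s t p * DD a (a i) p := by
      rw [← integral_const_mul, ← integral_sub I1 (I2.const_mul c)]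
      congr 1; funext p; ring
    rw [this, hfl]; ring
  rw [e, abs_neg]
  have hbd : ∀ p, ‖mm (a i) s t p * ((Ph a p - c) * DD a (a i) p)‖ ≤ mm (a i) s t p * (n * 20 * K) := by
    intro p
    by_cases hp : p ∈ ann (a i) s t
    · have hm0 := mm_nonneg (a := a i) hs hst p
      have ht0 : 0 < t := by linarith
      have u1 : Real.sqrt (qd (a i) p) ≤ t := Real.sqrt_le_iff.2 ⟨ht0.le, hp.2⟩
      have u2 : s ≤ Real.sqrt (qd (a i) p) := Real.le_sqrt_of_sq_le hp.1
      have hσ : |Real.sqrt (qd (a i) p) - ρ| ≤ ρ * (τ / 2) := by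
        rw [abs_le]; constructor <;> nlinarith
      have b1 := Ph_near hC hinj hρ hρd i hσ
      have b2 := DD_bound hC i (u1.trans ht4) ((hsub hp).2 i)
      rw [norm_mul, norm_mul, Real.norm_eq_abs, Real.norm_eq_abs, Real.norm_eq_abs, abs_of_nonneg hm0]
      refine mul_le_mul_of_nonneg_left ?_ hm0
      rw [mul_comm]
      exact mul_le_mul b2 b1 (abs_nonneg _) (by positivity)
    · rw [mm_zero_ann hs hst hp]; simp
  have := norm_integral_le_of_norm_le ((mm_integrable (a := a i) hs hst).mul_const (n * 20 * K)) (Eventually.of_forall hbd)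
  rw [integral_mul_const, mm_integral hs hst, Real.norm_eq_abs] at this
  exact this

lemma energy_X {d ρ s t : ℝ} (hC : Cfg a d) (hinj : Function.Injective a) (hρ : 0 < ρ) (hρd : ρ ≤ d / 8)
    (hs : 0 < s) (hst : s < t) (hs' : ρ * (1 - ρ / d / 2) ≤ s) (ht' : t ≤ ρ * (1 + ρ / d / 2)) :
    Adm a s t ∧ |(∫ p in Hp, XX a s t p * ee a p) - 2 * π * ∑ i, (a i).1 * cc a ρ i| ≤
      2 * π * (n * 20 * (7 + 6 * n)) * ((∑ i, (a i).1) * (ρ / d) * (- Real.log (ρ / d))) := by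
  have hd := hC.hd
  have hτ0 : 0 < ρ / d := by positivity
  have hτ8 : ρ / d ≤ 1 / 8 := by rw [div_le_iff₀ hd]; linarith
  have ht4 : t ≤ d / 4 := by nlinarith
  have hA := hC.adm hs hst ht4
  refine ⟨hA, ?_⟩
  rw [main_id hC.pos hA, Finset.mul_sum, ← Finset.sum_neg_distrib, ← Finset.sum_sub_distrib]
  refine (Finset.abs_sum_le_sum_abs _ _).trans ?_
  refine (Finset.sum_le_sum fun i _ => core_int hC hinj hρ hρd hs hst hs' ht' i).trans (le_of_eq ?_)
  rw [Finset.sum_mul, Finset.sum_mul, Finset.mul_sum]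
  refine Finset.sum_congr rfl fun i _ => ?_
  ring

lemma ballE_eq (b : ℝ × ℝ) (ρ : ℝ) (hρ : 0 < ρ) : ballE b ρ = {p | qd b p < ρ ^ 2} := by
  ext p
  simp only [ballE, dE_eq, Set.mem_ofPred_eq]
  exact Real.sqrt_lt' hρ

lemma energy_main {d ρ : ℝ} (hC : Cfg a d) (hinj : Function.Injective a) (hρ : 0 < ρ) (hρd : ρ ≤ d / 8) :
    |(∫ p in Hp \ ⋃ i, ballE (a i) ρ, (1 / (2 * p.1)) * ((pdRr (rPsiStar a) p) ^ 2 + (pdZr (rPsiStar a) p) ^ 2))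
      - π * ∑ i, (a i).1 * cc a ρ i| ≤
      π * (n * 20 * (7 + 6 * n)) * ((∑ i, (a i).1) * (ρ / d) * (- Real.log (ρ / d))) := by
  have hd := hC.hd
  set Ω := Hp \ ⋃ i, ballE (a i) ρ with hΩ
  have hτ0 : 0 < ρ / d := by positivity
  have hτ8 : ρ / d ≤ 1 / 8 := by rw [div_le_iff₀ hd]; linarith
  have hΩm : MeasurableSet Ω := by
    refine Hp_open.measurableSet.diff (MeasurableSet.iUnion fun i => ?_)
    rw [ballE_eq _ _ hρ]
    exact (isOpen_lt (qd_cont _) continuous_const).measurableSet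
  have hΩq : ∀ p ∈ Ω, ∀ i, ρ ^ 2 ≤ qd (a i) p := by
    intro p hp i
    by_contra hc
    apply hp.2
    refine Set.mem_iUnion.2 ⟨i, ?_⟩
    rw [ballE_eq _ _ hρ]
    exact not_le.1 hc
  have hΩU : Ω ⊆ UU a := by
    intro p hp
    refine ⟨hp.1, fun i hi => ?_⟩
    have := hΩq p hp i
    rw [hi, qd_self] at this
    have : 0 < ρ ^ 2 := by positivity
    linarith
  have hΩH : Ω ⊆ Hp := fun p hp => hp.1
  obtain ⟨A1, E1⟩ := energy_X hC hinj hρ hρd (s := ρ * (1 - ρ / d / 2)) (t := ρ) (by nlinarith) (by nlinarith) le_rfl (by nlinarith)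
  obtain ⟨A2, E2⟩ := energy_X hC hinj hρ hρd (s := ρ) (t := ρ * (1 + ρ / d / 2)) hρ (by nlinarith) (by nlinarith) le_rfl
  set s1 := ρ * (1 - ρ / d / 2) with hs1
  set t2 := ρ * (1 + ρ / d / 2) with ht2
  have J1 := Xee_integrable hC.pos A1
  have J2 := Xee_integrable hC.pos A2
  have hX1 : ∀ p ∈ Ω, XX a s1 ρ p * ee a p = ee a p := by
    intro p hp
    rw [XX_one A1 (hΩq p hp), one_mul]
  have JΩ : IntegrableOn (ee a) Ω := (integrableOn_congr_fun hX1 hΩm).1 (J1.mono_set hΩH)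
  have U : ∫ p in Ω, ee a p ≤ ∫ p in Hp, XX a s1 ρ p * ee a p := by
    rw [← setIntegral_congr_fun hΩm hX1]
    refine setIntegral_mono_set J1 ?_ (Eventually.of_forall hΩH)
    refine (ae_restrict_iff' Hp_open.measurableSet).2 (Eventually.of_forall fun p hp => ?_)
    exact mul_nonneg (XX_bd A1 p).1 (ee_nonneg hp)
  have Lo : ∫ p in Hp, XX a ρ t2 p * ee a p ≤ ∫ p in Ω, ee a p := by
    have e : ∫ p in Hp, XX a ρ t2 p * ee a p = ∫ p in Ω, XX a ρ t2 p * ee a p := by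
      apply setIntegral_eq_of_subset_of_forall_sdiff_eq_zero Hp_open.measurableSet hΩH
      intro p hp
      have : p ∈ ⋃ i, ballE (a i) ρ := by
        by_contra hc; exact hp.2 ⟨hp.1, hc⟩
      obtain ⟨i, hi⟩ := Set.mem_iUnion.1 this
      rw [ballE_eq _ _ hρ] at hi
      rw [XX_zero A2 (le_of_lt hi), zero_mul]
    rw [e]
    refine setIntegral_mono_on (J2.mono_set hΩH) JΩ hΩm fun p hp => ?_
    exact mul_le_of_le_one_left (ee_nonneg hp.1) (XX_bd A2 p).2
  have eI : ∫ p in Ω, (1 / (2 * p.1)) * ((pdRr (rPsiStar a) p) ^ 2 + (pdZr (rPsiStar a) p) ^ 2) = (∫ p in Ω, ee a p) / 2 := by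
    rw [← integral_div]
    exact setIntegral_congr_fun hΩm fun p hp => rPsi_integrand hC.pos (hΩU hp)
  rw [eI]
  rw [abs_le] at E1 E2 ⊢
  constructor <;> linarith [E1.1, E1.2, E2.1, E2.2]

lemma cfg_rho (hn : 1 ≤ n) (ha : ∀ i, a i ∈ Hp) (hinj : Function.Injective a) : Cfg a (rhoConf a) := by
  set S : Set ℝ := {d | ∃ i j, i ≠ j ∧ d = dE (a i) (a j)} ∪ {d | ∃ i, d = (a i).1} with hS
  have hfin : S.Finite := by
    refine Set.Finite.union ?_ ?_
    · refine (Set.finite_range fun x : Fin n × Fin n => dE (a x.1) (a x.2)).subset ?_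
      rintro d ⟨i, j, -, rfl⟩
      exact ⟨(i, j), rfl⟩
    · refine (Set.finite_range fun i : Fin n => (a i).1).subset ?_
      rintro d ⟨i, rfl⟩
      exact ⟨i, rfl⟩
  have hne : S.Nonempty := ⟨(a ⟨0, hn⟩).1, Or.inr ⟨_, rfl⟩⟩
  have hpos : ∀ d ∈ S, 0 < d := by
    rintro d (⟨i, j, hij, rfl⟩ | ⟨i, rfl⟩)
    · rw [dE_eq]
      exact Real.sqrt_pos.2 (qd_pos fun h => hij (hinj h))
    · exact ha i
  have hr : rhoConf a = (1 / 4) * sInf S := rfl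
  have hle : ∀ d ∈ S, sInf S ≤ d := fun d hd => csInf_le hfin.bddBelow hd
  have h0 : 0 < sInf S := hpos _ (hne.csInf_mem hfin)
  refine ⟨by rw [hr]; positivity, fun i => ?_, fun i j hij => ?_⟩
  · have := hle _ (Or.inr ⟨i, rfl⟩); rw [hr]; linarith
  · have := hle _ (Or.inl ⟨i, j, hij, rfl⟩); rw [dE_eq] at this; rw [hr]; linarith

end final

/-- **Lemma A.1** (energy of the singular vortex-ring field outside the cores). -/
theorem singular_ring_energy_outside_cores (n : ℕ) (hn : 1 ≤ n) :
    ∃ C > (0:ℝ), ∃ δ₀ > (0:ℝ),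
      ∀ a : Fin n → ℝ × ℝ, (∀ i, a i ∈ Hp) → Function.Injective a →
      ∀ ρ : ℝ, 0 < ρ → ρ ≤ δ₀ * rhoConf a →
        |(∫ p in Hp \ ⋃ i, ballE (a i) ρ,
            (1 / (2 * p.1)) * ((pdRr (rPsiStar a) p) ^ 2 + (pdZr (rPsiStar a) p) ^ 2))
          - π * ∑ i, (a i).1 * (Real.log ((a i).1 / ρ)
              + (∑ j ∈ Finset.univ.erase i, Avec (a j) (a i)) + 3 * Real.log 2 - 2)|
          ≤ C * (∑ i, (a i).1) * (ρ / rhoConf a) * Real.log (ρ / rhoConf a) ^ 2 := by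
  refine ⟨π * (n * 20 * (7 + 6 * n)), ?_, 1 / 8, by norm_num, fun a ha hinj ρ hρ hρd => ?_⟩
  · have hn0 : (0:ℝ) < n := by exact_mod_cast hn
    have := Real.pi_pos
    positivity
  have hC := cfg_rho hn ha hinj
  have hd := hC.hd
  refine (energy_main hC hinj hρ (by linarith)).trans ?_
  have hτ0 : 0 < ρ / rhoConf a := by positivity
  have hτ8 : ρ / rhoConf a ≤ 1 / 8 := by rw [div_le_iff₀ hd]; linarith
  have hl := log_small hτ0 hτ8
  have hS : 0 ≤ ∑ i, (a i).1 := Finset.sum_nonneg fun i _ => (hC.pos i).le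
  have hll : - Real.log (ρ / rhoConf a) ≤ Real.log (ρ / rhoConf a) ^ 2 := by nlinarith
  have hpi := Real.pi_pos
  have e : π * (n * 20 * (7 + 6 * n)) * (∑ i, (a i).1) * (ρ / rhoConf a) * Real.log (ρ / rhoConf a) ^ 2 =
      π * (n * 20 * (7 + 6 * n)) * ((∑ i, (a i).1) * (ρ / rhoConf a) * Real.log (ρ / rhoConf a) ^ 2) := by ring
  rw [e]
  gcongr

end
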